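/- arXiv:2507.10037 — 5 statements merged into one kernel-verified Lean document; each statement's English description precedes it below -/
import Mathlib

section
/- For any ε > 0 there exists n₀(ε) such that the following holds for all n ≥ n₀(ε): if G is a graph on n vertices that is ε-far from every disjoint union of cliques (including the empty graph), then the least adjacency eigenvalue of G satisfies λ_n ≤ −n^(1/4 − ε). -/
-- The adjacency matrix of a simple graph, over `ℝ`.
open scoped Classical in
noncomputable def adjMat {V : Type*} (G : SimpleGraph V) : Matrix V V ℝ :=
  Matrix.of fun i j => if G.Adj i j then (1 : ℝ) else 0

/-- A graph is a disjoint union of cliques iff every connected component is complete. -/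
def IsUnionOfCliques {V : Type*} (G : SimpleGraph V) : Prop :=
  ∀ u v : V, G.Reachable u v → u ≠ v → G.Adj u v

/-- Two graphs on `n` vertices are `ε`-close if one can add or delete at most `ε n ^ 2`
edges of `G` to obtain a graph isomorphic to `H`. -/
def EpsClose {n : ℕ} (ε : ℝ) (G H : SimpleGraph (Fin n)) : Prop :=
  ∃ G' : SimpleGraph (Fin n), Nonempty (G' ≃g H) ∧
    ((symmDiff G.edgeSet G'.edgeSet).ncard : ℝ) ≤ ε * (n : ℝ) ^ 2

/-- `G` is `ε`-far from every disjoint union of cliques. -/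
def FarFromCliqueUnions {n : ℕ} (ε : ℝ) (G : SimpleGraph (Fin n)) : Prop :=
  ∀ H : SimpleGraph (Fin n), IsUnionOfCliques H → ¬ EpsClose ε G H


section SpectralPart

/-- Partial sums of the first `f` entries. -/
noncomputable def topSum {n : ℕ} (m : Fin n → ℝ) (f : ℕ) : ℝ :=
  ∑ i : Fin n, if i.val < f then m i else 0

lemma kyFan {n : ℕ} (m w : Fin n → ℝ) (hm : Antitone m) (hm0 : ∀ i, 0 ≤ m i)
    (hw0 : ∀ i, 0 ≤ w i) (hw1 : ∀ i, w i ≤ 1) (k : ℕ) (hk : ∑ i, w i ≤ k) :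
    ∑ i, m i * w i ≤ topSum m k := by
  unfold topSum
  rcases le_or_gt n k with h | h
  · apply Finset.sum_le_sum
    intro i _
    rw [if_pos (lt_of_lt_of_le i.2 h)]
    nlinarith [hm0 i, hw1 i]
  · set c := m ⟨k, h⟩ with hc
    have hc0 : 0 ≤ c := hm0 _
    have h1 : ∀ i : Fin n, m i * w i ≤ (if i.val < k then m i else 0) -
        c * (if i.val < k then 1 else 0) + c * w i := by
      intro i
      split_ifs with hi
      · have : c ≤ m i := hm (by rw [Fin.le_def]; exact hi.le)
        nlinarith [hw1 i, hw0 i]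
      · have : m i ≤ c := hm (by rw [Fin.le_def]; exact not_lt.mp hi)
        nlinarith [hw1 i, hw0 i]
    have h2 := Finset.sum_le_sum (fun i (_ : i ∈ Finset.univ) => h1 i)
    rw [Finset.sum_add_distrib, Finset.sum_sub_distrib, ← Finset.mul_sum, ← Finset.mul_sum] at h2
    have h3 : (∑ i : Fin n, if i.val < k then (1:ℝ) else 0) = k := by
      rw [Finset.sum_boole]
      have : (Finset.univ.filter (fun i : Fin n => i.val < k)) = Finset.Iio ⟨k, h⟩ := by
        ext i; simp [Fin.lt_def]
      rw [this, Fin.card_Iio]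
    rw [h3] at h2
    nlinarith

/-- The key inequality: Hadamard square plus compression. -/
lemma key_ineq {n : ℕ} (m : Fin n → ℝ) (v : Fin n → Fin n → ℝ) (lam : ℝ) (hl : 0 ≤ lam)
    (hm : Antitone m) (hm0 : ∀ i, 0 ≤ m i)
    (hv : ∀ i j : Fin n, (∑ k, v i k * v j k) = if i = j then (1 : ℝ) else 0)
    (hv' : ∀ u w : Fin n, (∑ i, v i u * v i w) = if u = w then (1 : ℝ) else 0)
    (hM : ∀ u w, (∑ i, m i * (v i u * v i w)) ^ 2 =
      (∑ i, m i * (v i u * v i w)) + if u = w then lam ^ 2 - lam else 0) (f : ℕ) :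
    topSum m f ^ 2 ≤ n * (topSum m (f ^ 2) + lam ^ 2 * (f : ℝ) ^ 2) := by
  classical
  let E := EuclideanSpace ℝ (Fin n)
  let I := {i : Fin n // i.val < f}
  let W : I × I → E := fun p => WithLp.toLp 2 (fun u => v p.1.1 u * v p.2.1 u)
  let U : Submodule ℝ E := Submodule.span ℝ (Set.range W)
  let b := stdOrthonormalBasis ℝ U
  have hcardI : Fintype.card I ≤ f := by
    have : Function.Injective (fun i : I => (⟨i.1.val, i.2⟩ : Fin f)) := by
      intro a b hab
      simp only [Fin.mk.injEq] at hab
      exact Subtype.ext (Fin.ext hab)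
    simpa using Fintype.card_le_of_injective _ this
  have hr : Module.finrank ℝ U ≤ f ^ 2 := by
    refine (finrank_range_le_card W).trans ?_
    rw [Fintype.card_prod, pow_two]
    exact Nat.mul_le_mul hcardI hcardI
  set r := Module.finrank ℝ U with hrdef
  let q : Fin r → Fin n → ℝ := fun a u => ((b a : U) : E) u
  have hqin : ∀ (a : Fin r) (x : U), inner ℝ (b a) x = ∑ u, q a u * (x : E) u := by
    intro a x
    rw [Submodule.coe_inner, PiLp.inner_apply]
    apply Finset.sum_congr rfl
    intro u _
    simp [q, mul_comm]
  have hqn : ∀ a, ∑ u, q a u ^ 2 = 1 := by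
    intro a
    have h1 : inner ℝ (b a) (b a) = (1:ℝ) := by
      rw [real_inner_self_eq_norm_sq, b.orthonormal.1 a]; norm_num
    rw [hqin] at h1
    rw [← h1]
    apply Finset.sum_congr rfl
    intro u _
    simp only [q]; ring
  -- Parseval for W
  have hW : ∀ p : I × I, ∑ a, (∑ u, q a u * (v p.1.1 u * v p.2.1 u)) ^ 2 =
      ∑ u, (v p.1.1 u * v p.2.1 u) ^ 2 := by
    intro p
    let x : U := ⟨W p, Submodule.subset_span ⟨p, rfl⟩⟩
    have h1 := b.sum_sq_norm_inner_right x
    have h2 : ‖x‖ ^ 2 = ∑ u, (v p.1.1 u * v p.2.1 u) ^ 2 := by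
      rw [Submodule.coe_norm, EuclideanSpace.norm_sq_eq]
      apply Finset.sum_congr rfl
      intro u _
      simp [x, W, mul_pow, sq_abs]
    rw [← h2, ← h1]
    apply Finset.sum_congr rfl
    intro a _
    rw [hqin, Real.norm_eq_abs, sq_abs]
  -- Bessel for v i
  have hB : ∀ i, ∑ a, (∑ u, q a u * v i u) ^ 2 ≤ 1 := by
    intro i
    let x : E := WithLp.toLp 2 (v i)
    have ho : Orthonormal ℝ (fun a => ((b a : U) : E)) := by
      have := b.orthonormal.comp_linearIsometry U.subtypeₗᵢ
      exact this
    have h1 := ho.sum_inner_products_le (x := x) (s := Finset.univ)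
    have h2 : ‖x‖ ^ 2 = 1 := by
      rw [EuclideanSpace.norm_sq_eq]
      have := hv i i
      rw [if_pos rfl] at this
      rw [← this]
      apply Finset.sum_congr rfl
      intro u _
      simp [x]; ring
    rw [h2] at h1
    refine le_trans (le_of_eq ?_) h1
    apply Finset.sum_congr rfl
    intro a _
    rw [Real.norm_eq_abs, sq_abs, PiLp.inner_apply]
    congr 1
    apply Finset.sum_congr rfl
    intro u _
    simp [q, x, mul_comm]
  -- Parseval for q
  have hP : ∀ a, ∑ i, (∑ u, q a u * v i u) ^ 2 = 1 := by
    intro a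
    rw [← hqn a]
    calc ∑ i, (∑ u, q a u * v i u) ^ 2
        = ∑ i, ∑ u, ∑ w, (q a u * q a w) * (v i u * v i w) := by
          apply Finset.sum_congr rfl; intro i _
          rw [pow_two, Finset.sum_mul_sum]
          apply Finset.sum_congr rfl; intro u _
          apply Finset.sum_congr rfl; intro w _
          ring
      _ = ∑ u, ∑ w, (q a u * q a w) * ∑ i, (v i u * v i w) := by
          rw [Finset.sum_comm]
          apply Finset.sum_congr rfl; intro u _
          rw [Finset.sum_comm]
          apply Finset.sum_congr rfl; intro w _
          rw [Finset.mul_sum]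
      _ = ∑ u, q a u ^ 2 := by
          simp only [hv']
          simp [pow_two]
  -- quadratic form identity
  have hQ : ∀ a, ∑ i, ∑ j, m i * m j * (∑ u, q a u * (v i u * v j u)) ^ 2 =
      ∑ i, m i * (∑ u, q a u * v i u) ^ 2 + (lam ^ 2 - lam) := by
    intro a
    have e1 : ∑ i, ∑ j, m i * m j * (∑ u, q a u * (v i u * v j u)) ^ 2 =
        ∑ u, ∑ w, q a u * q a w * (∑ i, m i * (v i u * v i w)) ^ 2 := by
      calc ∑ i, ∑ j, m i * m j * (∑ u, q a u * (v i u * v j u)) ^ 2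
          = ∑ i, ∑ j, ∑ u, ∑ w, q a u * q a w * ((m i * (v i u * v i w)) * (m j * (v j u * v j w))) := by
            apply Finset.sum_congr rfl; intro i _
            apply Finset.sum_congr rfl; intro j _
            rw [pow_two, Finset.sum_mul_sum, Finset.mul_sum]
            apply Finset.sum_congr rfl; intro u _
            rw [Finset.mul_sum]
            apply Finset.sum_congr rfl; intro w _
            ring
        _ = ∑ i, ∑ u, ∑ j, ∑ w, q a u * q a w * ((m i * (v i u * v i w)) * (m j * (v j u * v j w))) := by
            apply Finset.sum_congr rfl; intro i _
            rw [Finset.sum_comm]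
        _ = ∑ i, ∑ u, ∑ w, ∑ j, q a u * q a w * ((m i * (v i u * v i w)) * (m j * (v j u * v j w))) := by
            apply Finset.sum_congr rfl; intro i _
            apply Finset.sum_congr rfl; intro u _
            rw [Finset.sum_comm]
        _ = ∑ u, ∑ w, ∑ i, ∑ j, q a u * q a w * ((m i * (v i u * v i w)) * (m j * (v j u * v j w))) := by
            rw [Finset.sum_comm]
            apply Finset.sum_congr rfl; intro u _
            rw [Finset.sum_comm]
        _ = _ := by
            apply Finset.sum_congr rfl; intro u _
            apply Finset.sum_congr rfl; intro w _
            rw [pow_two, Finset.sum_mul_sum, Finset.mul_sum]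
            apply Finset.sum_congr rfl; intro i _
            rw [Finset.mul_sum]
    have e2 : ∑ i, m i * (∑ u, q a u * v i u) ^ 2 =
        ∑ u, ∑ w, q a u * q a w * (∑ i, m i * (v i u * v i w)) := by
      calc ∑ i, m i * (∑ u, q a u * v i u) ^ 2
          = ∑ i, ∑ u, ∑ w, q a u * q a w * (m i * (v i u * v i w)) := by
            apply Finset.sum_congr rfl; intro i _
            rw [pow_two, Finset.sum_mul_sum, Finset.mul_sum]
            apply Finset.sum_congr rfl; intro u _
            rw [Finset.mul_sum]
            apply Finset.sum_congr rfl; intro w _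
            ring
        _ = _ := by
            rw [Finset.sum_comm]
            apply Finset.sum_congr rfl; intro u _
            rw [Finset.sum_comm]
            apply Finset.sum_congr rfl; intro w _
            rw [Finset.mul_sum]
    rw [e1, e2]
    simp only [hM, mul_add, Finset.sum_add_distrib]
    congr 1
    have : ∀ u, ∑ w, q a u * q a w * (if u = w then lam ^ 2 - lam else 0) =
        q a u ^ 2 * (lam ^ 2 - lam) := by
      intro u
      simp [pow_two]
    simp only [this]
    rw [← Finset.sum_mul, hqn a, one_mul]
  -- diagonal of L
  let Ld : Fin n → ℝ := fun u => ∑ i : I, m i.1 * v i.1 u ^ 2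
  have hsub : ∀ g : Fin n → ℝ, (∑ i : I, g i.1) = ∑ i : Fin n, if i.val < f then g i else 0 := by
    intro g
    rw [← Finset.sum_filter]
    exact (Finset.sum_subtype (Finset.univ.filter (fun i : Fin n => i.val < f)) (by simp) g).symm
  have hLsum : ∑ u, Ld u = topSum m f := by
    unfold topSum
    rw [← hsub, Finset.sum_comm]
    apply Finset.sum_congr rfl; intro i _
    rw [← Finset.mul_sum]
    have := hv i.1 i.1
    rw [if_pos rfl] at this
    simp only [pow_two, this, mul_one]
  have hLsq : ∑ u, Ld u ^ 2 = ∑ i : I, ∑ j : I, m i.1 * m j.1 * ∑ u, (v i.1 u * v j.1 u) ^ 2 := by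
    calc ∑ u, Ld u ^ 2 = ∑ u, ∑ i : I, ∑ j : I, m i.1 * m j.1 * (v i.1 u * v j.1 u) ^ 2 := by
          apply Finset.sum_congr rfl; intro u _
          simp only [Ld]
          rw [pow_two, Finset.sum_mul_sum]
          apply Finset.sum_congr rfl; intro i _
          apply Finset.sum_congr rfl; intro j _
          ring
      _ = _ := by
          rw [Finset.sum_comm]
          apply Finset.sum_congr rfl; intro i _
          rw [Finset.sum_comm]
          apply Finset.sum_congr rfl; intro j _
          rw [Finset.mul_sum]
  have hCS : topSum m f ^ 2 ≤ n * ∑ u, Ld u ^ 2 := by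
    rw [← hLsum]
    have := sq_sum_le_card_mul_sum_sq (s := (Finset.univ : Finset (Fin n))) (f := Ld)
    simpa using this
  refine hCS.trans (mul_le_mul_of_nonneg_left ?_ (Nat.cast_nonneg n))
  have hmain : ∑ u, Ld u ^ 2 ≤ ∑ a, (∑ i, m i * (∑ u, q a u * v i u) ^ 2 + (lam ^ 2 - lam)) := by
    rw [hLsq]
    calc ∑ i : I, ∑ j : I, m i.1 * m j.1 * ∑ u, (v i.1 u * v j.1 u) ^ 2
        = ∑ i : I, ∑ j : I, ∑ a, m i.1 * m j.1 * (∑ u, q a u * (v i.1 u * v j.1 u)) ^ 2 := by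
          apply Finset.sum_congr rfl; intro i _
          apply Finset.sum_congr rfl; intro j _
          rw [← hW (i, j), Finset.mul_sum]
      _ = ∑ i : I, ∑ a, ∑ j : I, m i.1 * m j.1 * (∑ u, q a u * (v i.1 u * v j.1 u)) ^ 2 := by
          apply Finset.sum_congr rfl; intro i _
          rw [Finset.sum_comm]
      _ = ∑ a, ∑ i : I, ∑ j : I, m i.1 * m j.1 * (∑ u, q a u * (v i.1 u * v j.1 u)) ^ 2 := by
          rw [Finset.sum_comm]
      _ ≤ ∑ a, ∑ i, ∑ j, m i * m j * (∑ u, q a u * (v i u * v j u)) ^ 2 := by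
          apply Finset.sum_le_sum; intro a _
          have hnn : ∀ i j, 0 ≤ m i * m j * (∑ u, q a u * (v i u * v j u)) ^ 2 :=
            fun i j => mul_nonneg (mul_nonneg (hm0 i) (hm0 j)) (sq_nonneg _)
          rw [hsub (fun i => ∑ j : I, m i * m j.1 * (∑ u, q a u * (v i u * v j.1 u)) ^ 2)]
          apply Finset.sum_le_sum; intro i _
          split_ifs
          · rw [hsub (fun j => m i * m j * (∑ u, q a u * (v i u * v j u)) ^ 2)]
            apply Finset.sum_le_sum; intro j _
            split_ifs
            · exact le_rfl
            · exact hnn i j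
          · exact Finset.sum_nonneg (fun j _ => hnn i j)
      _ = _ := by
          apply Finset.sum_congr rfl; intro a _
          exact hQ a
  refine hmain.trans ?_
  rw [Finset.sum_add_distrib]
  have hrf : (r : ℝ) ≤ (f : ℝ) ^ 2 := by exact_mod_cast hr
  apply add_le_add
  · rw [Finset.sum_comm]
    simp only [← Finset.mul_sum]
    apply kyFan m _ hm hm0
    · intro i; exact Finset.sum_nonneg (fun a _ => sq_nonneg _)
    · exact hB
    · rw [Finset.sum_comm]
      simp only [hP]
      simpa using hrf
  · simp only [Finset.sum_const, Finset.card_univ, Fintype.card_fin, nsmul_eq_mul]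
    have : (0:ℝ) ≤ r := Nat.cast_nonneg r
    nlinarith [sq_nonneg lam]

end SpectralPart

section Growth

lemma growth (n : ℕ) (hn : 1 ≤ n) (ε : ℝ) (hε : 0 < ε) (hε8 : ε ≤ 1 / 8) (s : ℕ → ℝ)
    (hs : ∀ f, s f ^ 2 ≤ s (f ^ 2) + ((n : ℝ) ^ ((1 : ℝ) / 4 - ε)) ^ 2 * (f : ℝ) ^ 2 / n)
    (hb : ∀ f, s f ≤ (n : ℝ) ^ ((1 : ℝ) / 4 - ε)) :
    ∀ f : ℕ, 2 ≤ f → s f < 2 * (f : ℝ) ^ ((1 : ℝ) / 2 - 2 * ε) := by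
  have hn0 : (0:ℝ) < n := by exact_mod_cast hn
  have hl0 : 0 < (n : ℝ) ^ ((1 : ℝ) / 4 - ε) := Real.rpow_pos_of_pos hn0 _
  intro f
  induction' h : n - f using Nat.strong_induction_on with d ih generalizing f
  intro hf
  by_contra hcon
  push Not at hcon
  have hf0 : (0:ℝ) < f := by exact_mod_cast (by omega : 0 < f)
  have hp0 : 0 < (f : ℝ) ^ ((1 : ℝ) / 2 - 2 * ε) := Real.rpow_pos_of_pos hf0 _
  rcases Nat.lt_or_ge n (f ^ 2) with hnf | hnf
  · have h1 : (n : ℝ) ^ ((1 : ℝ) / 4 - ε) ≤ (f : ℝ) ^ ((1 : ℝ) / 2 - 2 * ε) := by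
      have h2 : (n : ℝ) ≤ (f : ℝ) ^ (2:ℝ) := by
        rw [Real.rpow_two]; exact_mod_cast hnf.le
      calc (n : ℝ) ^ ((1 : ℝ) / 4 - ε) ≤ ((f : ℝ) ^ (2:ℝ)) ^ ((1 : ℝ) / 4 - ε) :=
            Real.rpow_le_rpow hn0.le h2 (by linarith)
        _ = _ := by
            rw [← Real.rpow_mul hf0.le]; congr 1; ring
    linarith [hb f]
  · have hff : f < f ^ 2 := by nlinarith
    have h3 := ih (n - f ^ 2) (by omega) (f ^ 2) rfl (by omega)
    have h4 : ((f ^ 2 : ℕ) : ℝ) ^ ((1 : ℝ) / 2 - 2 * ε) = ((f : ℝ) ^ ((1 : ℝ) / 2 - 2 * ε)) ^ 2 := by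
      rw [← Real.rpow_natCast, ← Real.rpow_mul hf0.le]
      push_cast
      rw [← Real.rpow_two, ← Real.rpow_mul hf0.le]
      congr 1; ring
    rw [h4] at h3
    have h5 : ((n : ℝ) ^ ((1 : ℝ) / 4 - ε)) ^ 2 * (f : ℝ) ^ 2 / n ≤
        ((f : ℝ) ^ ((1 : ℝ) / 2 - 2 * ε)) ^ 2 := by
      rw [div_le_iff₀ hn0]
      have e1 : ((n : ℝ) ^ ((1 : ℝ) / 4 - ε)) ^ 2 = (n : ℝ) ^ ((1 : ℝ) / 2 - 2 * ε) := by
        rw [← Real.rpow_natCast, ← Real.rpow_mul hn0.le]; congr 1; push_cast; ring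
      have e2 : (f : ℝ) ^ 2 = ((f : ℝ) ^ ((1 : ℝ) / 2 - 2 * ε)) ^ 2 * (f : ℝ) ^ (1 + 4 * ε) := by
        rw [← Real.rpow_natCast _ 2, ← Real.rpow_natCast _ 2, ← Real.rpow_mul hf0.le, ← Real.rpow_add hf0]
        congr 1; push_cast; ring
      have e3 : (f : ℝ) ^ (1 + 4 * ε) ≤ (n : ℝ) ^ ((1 : ℝ) / 2 + 2 * ε) := by
        have h2 : (f : ℝ) ^ (2:ℝ) ≤ n := by
          rw [Real.rpow_two]; exact_mod_cast hnf
        calc (f : ℝ) ^ (1 + 4 * ε) = ((f : ℝ) ^ (2:ℝ)) ^ ((1 : ℝ) / 2 + 2 * ε) := by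
              rw [← Real.rpow_mul hf0.le]; congr 1; ring
          _ ≤ _ := Real.rpow_le_rpow (Real.rpow_nonneg hf0.le _) h2 (by linarith)
      have e4 : (n : ℝ) ^ ((1 : ℝ) / 2 - 2 * ε) * (n : ℝ) ^ ((1 : ℝ) / 2 + 2 * ε) = n := by
        rw [← Real.rpow_add hn0]
        rw [show (1 : ℝ) / 2 - 2 * ε + (1 / 2 + 2 * ε) = 1 by ring, Real.rpow_one]
      rw [e1, e2]
      calc (n : ℝ) ^ ((1 : ℝ) / 2 - 2 * ε) * (((f : ℝ) ^ ((1 : ℝ) / 2 - 2 * ε)) ^ 2 * (f : ℝ) ^ (1 + 4 * ε))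
          ≤ (n : ℝ) ^ ((1 : ℝ) / 2 - 2 * ε) * (((f : ℝ) ^ ((1 : ℝ) / 2 - 2 * ε)) ^ 2 * (n : ℝ) ^ ((1 : ℝ) / 2 + 2 * ε)) := by
            gcongr
        _ = ((f : ℝ) ^ ((1 : ℝ) / 2 - 2 * ε)) ^ 2 * ((n : ℝ) ^ ((1 : ℝ) / 2 - 2 * ε) * (n : ℝ) ^ ((1 : ℝ) / 2 + 2 * ε)) := by ring
        _ = _ := by rw [e4]
    have h6 := hs f
    nlinarith

/-- Tail of the spectrum is small. -/
lemma tail_small (ε δ : ℝ) (hε : 0 < ε) (hδ : 0 < δ) :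
    ∃ f₁ : ℕ, 2 ≤ f₁ ∧ ∀ (n : ℕ) (m : Fin n → ℝ), Antitone m → (∀ i, 0 ≤ m i) →
      (∀ f : ℕ, 2 ≤ f → topSum m f ≤ n * (2 * (f : ℝ) ^ ((1 : ℝ) / 2 - 2 * ε))) →
      ∑ i : Fin n, (if i.val < f₁ then 0 else m i) ^ 2 ≤ δ * (n : ℝ) ^ 2 := by
  have hsum : Summable (fun k : ℕ => 1 / ((k : ℝ)) ^ (1 + 4 * ε)) :=
    Real.summable_one_div_nat_rpow.mpr (by linarith)
  obtain ⟨t, ht⟩ := summable_iff_vanishing_norm.mp hsum (δ / 4) (by linarith)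
  refine ⟨t.sup id + 2, by omega, ?_⟩
  intro n m hm hm0 hT
  have hn0 : (0:ℝ) ≤ n := Nat.cast_nonneg n
  set f₁ := t.sup id + 2 with hf1
  let B : Finset (Fin n) := Finset.univ.filter (fun i => ¬ i.val < f₁)
  have hdis : Disjoint (B.image (fun i => i.val + 1)) t := by
    rw [Finset.disjoint_left]
    intro a ha hat
    rw [Finset.mem_image] at ha
    obtain ⟨i, hi, rfl⟩ := ha
    have h1 : i.val + 1 ≤ t.sup id := Finset.le_sup (f := id) hat
    simp only [B, Finset.mem_filter, Finset.mem_univ, true_and] at hi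
    omega
  have h1 := ht _ hdis
  rw [Finset.sum_image (by intro a _ b _ h; simp at h; exact Fin.ext h)] at h1
  have h2 := (abs_lt.mp h1).2
  have h3 : ∀ i ∈ B, m i ^ 2 ≤ 4 * (n : ℝ) ^ 2 * (1 / (((i.val + 1 : ℕ) : ℝ)) ^ (1 + 4 * ε)) := by
    intro i hi
    simp only [B, Finset.mem_filter, Finset.mem_univ, true_and] at hi
    have hg := hT (i.val + 1) (by omega)
    have hk0 : (0:ℝ) < ((i.val + 1 : ℕ) : ℝ) := Nat.cast_pos.mpr (Nat.succ_pos _)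
    have hlow : ((i.val + 1 : ℕ) : ℝ) * m i ≤ topSum m (i.val + 1) := by
      have e : ((i.val + 1 : ℕ) : ℝ) * m i = ∑ j ∈ Finset.Iic i, m i := by
        rw [Finset.sum_const, Fin.card_Iic, nsmul_eq_mul]
      rw [e]
      unfold topSum
      rw [← Finset.sum_filter]
      have h0 : (Finset.univ.filter (fun j : Fin n => j.val < i.val + 1)) = Finset.Iic i := by
        ext j
        rw [Finset.mem_filter, Finset.mem_Iic, Fin.le_def]
        exact ⟨fun h => Nat.lt_succ_iff.mp h.2, fun h => ⟨Finset.mem_univ _, Nat.lt_succ_of_le h⟩⟩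
      rw [h0]
      apply Finset.sum_le_sum
      intro j hj
      have hji : j ≤ i := by simpa using hj
      exact hm hji
    have h5 : m i ≤ 2 * n * (((i.val + 1 : ℕ) : ℝ) ^ (-((1:ℝ) / 2) - 2 * ε)) := by
      have : ((i.val + 1 : ℕ) : ℝ) ^ ((1 : ℝ) / 2 - 2 * ε) =
          ((i.val + 1 : ℕ) : ℝ) * ((i.val + 1 : ℕ) : ℝ) ^ (-((1:ℝ) / 2) - 2 * ε) := by
        nth_rewrite 2 [← Real.rpow_one ((i.val + 1 : ℕ) : ℝ)]
        rw [← Real.rpow_add hk0]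
        congr 1; ring
      rw [this] at hg
      have h6 := hlow.trans hg
      refine le_of_mul_le_mul_left ?_ hk0
      linarith
    have h7 : (((i.val + 1 : ℕ) : ℝ) ^ (-((1:ℝ) / 2) - 2 * ε)) ^ 2 =
        1 / (((i.val + 1 : ℕ) : ℝ)) ^ (1 + 4 * ε) := by
      rw [← Real.rpow_natCast, ← Real.rpow_mul hk0.le, one_div (_ ^ (1 + 4 * ε)), ← Real.rpow_neg hk0.le]
      congr 1; push_cast; ring
    calc m i ^ 2 ≤ (2 * n * (((i.val + 1 : ℕ) : ℝ) ^ (-((1:ℝ) / 2) - 2 * ε))) ^ 2 :=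
          pow_le_pow_left₀ (hm0 i) h5 2
      _ = _ := by rw [← h7]; ring
  have h8 : ∑ i : Fin n, (if i.val < f₁ then 0 else m i) ^ 2 = ∑ i ∈ B, m i ^ 2 := by
    rw [Finset.sum_filter]
    apply Finset.sum_congr rfl
    intro i _
    split_ifs <;> simp
  rw [h8]
  have h9 := Finset.sum_le_sum h3
  rw [← Finset.mul_sum] at h9
  nlinarith [sq_nonneg (n:ℝ)]

end Growth

section Geometry

lemma norm_bound_geom (d : ℕ) (C κ : ℝ) (hC : 0 ≤ C) (hκ : 0 < κ) :
    ∃ N : ℕ, ∀ (n : ℕ) (lam : ℝ) (y : Fin n → EuclideanSpace ℝ (Fin d)), 0 ≤ lam →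
      ∑ u, ‖y u‖ ^ 2 ≤ C * n →
      (∀ B : Finset (Fin n), ‖∑ u ∈ B, y u‖ ^ 2 ≤ (B.card : ℝ) ^ 2 + lam * B.card) →
      ((Finset.univ.filter (fun u => 11 / 10 < ‖y u‖ ^ 2)).card : ℝ) ≤ κ * n + N * (20 * lam) := by
  classical
  set R2 := C / κ with hR2
  obtain ⟨t, -, htf, ht⟩ := (isCompact_closedBall (0 : EuclideanSpace ℝ (Fin d))
    (Real.sqrt R2)).finite_cover_balls (e := 1 / 100) (by norm_num)
  refine ⟨htf.toFinset.card, ?_⟩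
  intro n lam y hlam hsum hB
  let cell : EuclideanSpace ℝ (Fin d) → Finset (Fin n) :=
    fun x => Finset.univ.filter (fun u => dist (y u) x < 1 / 100)
  let far : Finset (Fin n) := Finset.univ.filter (fun u => R2 < ‖y u‖ ^ 2)
  let small := htf.toFinset.filter (fun x => ((cell x).card : ℝ) < 20 * lam)
  have hsubset : Finset.univ.filter (fun u => 11 / 10 < ‖y u‖ ^ 2) ⊆
      far ∪ small.biUnion cell := by
    intro u hu
    simp only [Finset.mem_filter, Finset.mem_univ, true_and] at hu
    rw [Finset.mem_union]
    by_cases hfar : R2 < ‖y u‖ ^ 2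
    · left; simp [far, hfar]
    right
    have hin : y u ∈ Metric.closedBall (0 : EuclideanSpace ℝ (Fin d)) (Real.sqrt R2) := by
      rw [mem_closedBall_zero_iff]
      exact Real.le_sqrt_of_sq_le (not_lt.mp hfar)
    have := ht hin
    simp only [Set.mem_iUnion, Metric.mem_ball] at this
    obtain ⟨x, hxt, hx⟩ := this
    rw [Finset.mem_biUnion]
    have hucell : u ∈ cell x := by simp only [cell, Finset.mem_filter, Finset.mem_univ, true_and]; exact hx
    refine ⟨x, ?_, hucell⟩
    simp only [small, Finset.mem_filter, Set.Finite.mem_toFinset]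
    refine ⟨hxt, ?_⟩
    by_contra hcon
    push Not at hcon
    set b : ℝ := ((cell x).card : ℝ) with hb
    have hb0 : 0 < b := by
      rw [hb]; exact_mod_cast Finset.card_pos.mpr ⟨u, hucell⟩
    have h1 := hB (cell x)
    rw [← hb] at h1
    have h2 : ‖b • y u - ∑ w ∈ cell x, y w‖ ≤ b * (1 / 50) := by
      have e : b • y u - ∑ w ∈ cell x, y w = ∑ w ∈ cell x, (y u - y w) := by
        rw [Finset.sum_sub_distrib, Finset.sum_const, hb, Nat.cast_smul_eq_nsmul]
      rw [e]
      refine (norm_sum_le _ _).trans ?_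
      refine (Finset.sum_le_card_nsmul _ _ (1 / 50) ?_).trans (le_of_eq ?_)
      · intro w hw
        simp only [cell, Finset.mem_filter, Finset.mem_univ, true_and] at hw
        rw [← dist_eq_norm]
        have := dist_triangle_right (y u) (y w) x
        linarith
      · rw [nsmul_eq_mul]
    have h3 : ‖∑ w ∈ cell x, y w‖ ≤ b * (41 / 40) := by
      refine le_of_not_gt fun hgt => ?_
      nlinarith
    have h4 : b * ‖y u‖ ≤ b * (1 / 50 + 41 / 40) := by
      have e : b * ‖y u‖ = ‖b • y u‖ := by
        rw [norm_smul, Real.norm_eq_abs, abs_of_pos hb0]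
      rw [e]
      have := norm_sub_norm_le (b • y u) (∑ w ∈ cell x, y w)
      linarith
    have h5 := le_of_mul_le_mul_left h4 hb0
    nlinarith [norm_nonneg (y u)]
  have hfar : (far.card : ℝ) ≤ κ * n := by
    rcases eq_or_lt_of_le hC with hC0 | hC0
    · have hz : ∑ u, ‖y u‖ ^ 2 ≤ 0 := by rw [← hC0] at hsum; simpa using hsum
      have : far = ∅ := by
        rw [Finset.eq_empty_iff_forall_notMem]
        intro u hu
        simp only [far, Finset.mem_filter, Finset.mem_univ, true_and] at hu
        have h1 := Finset.single_le_sum (f := fun u => ‖y u‖ ^ 2) (fun i _ => sq_nonneg _) (Finset.mem_univ u)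
        have : R2 = 0 := by rw [hR2, ← hC0]; simp
        linarith
      rw [this]; simp; positivity
    · have hR0 : 0 < R2 := div_pos hC0 hκ
      have h1 : (far.card : ℝ) * R2 ≤ ∑ u, ‖y u‖ ^ 2 := by
        calc (far.card : ℝ) * R2 = ∑ u ∈ far, R2 := by rw [Finset.sum_const, nsmul_eq_mul]
          _ ≤ ∑ u ∈ far, ‖y u‖ ^ 2 := by
            apply Finset.sum_le_sum
            intro u hu
            simp only [far, Finset.mem_filter, Finset.mem_univ, true_and] at hu
            exact hu.le
          _ ≤ _ := Finset.sum_le_sum_of_subset_of_nonneg (Finset.subset_univ _) (fun _ _ _ => sq_nonneg _)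
      have h2 : C = κ * R2 := by rw [hR2]; field_simp
      rw [h2] at hsum
      refine le_of_mul_le_mul_right ?_ hR0
      linarith
  have hsmall : ((small.biUnion cell).card : ℝ) ≤ htf.toFinset.card * (20 * lam) := by
    calc ((small.biUnion cell).card : ℝ) ≤ ∑ x ∈ small, ((cell x).card : ℝ) := by
          exact_mod_cast Finset.card_biUnion_le
      _ ≤ ∑ x ∈ small, 20 * lam := by
          apply Finset.sum_le_sum
          intro x hx
          exact (Finset.mem_filter.mp hx).2.le
      _ = small.card * (20 * lam) := by rw [Finset.sum_const, nsmul_eq_mul]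
      _ ≤ _ := by
          gcongr
          exact Finset.filter_subset _ _
  calc ((Finset.univ.filter (fun u => 11 / 10 < ‖y u‖ ^ 2)).card : ℝ)
      ≤ ((far ∪ small.biUnion cell).card : ℝ) := by exact_mod_cast Finset.card_le_card hsubset
    _ ≤ far.card + (small.biUnion cell).card := by exact_mod_cast Finset.card_union_le _ _
    _ ≤ _ := add_le_add hfar hsmall

lemma no_cherry_vec {d : ℕ} (a b c : EuclideanSpace ℝ (Fin d)) (ha : ‖a‖ ^ 2 ≤ 11 / 10)
    (hb : ‖b‖ ^ 2 ≤ 11 / 10) (hc : ‖c‖ ^ 2 ≤ 11 / 10)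
    (hab : (1 - inner ℝ a b) ^ 2 ≤ 1 / 100) (hbc : (1 - inner ℝ b c) ^ 2 ≤ 1 / 100)
    (hac : (0 - inner ℝ a c) ^ 2 ≤ 1 / 100) : False := by
  have h0 := sq_nonneg ‖(a + c) - (2:ℝ) • b‖
  rw [norm_sub_sq_real, norm_add_sq_real, inner_smul_right, inner_add_left, norm_smul, mul_pow,
    real_inner_comm b c] at h0
  have h1 := (abs_le.mp (abs_le_of_sq_le_sq (by linarith : (1 - inner ℝ a b) ^ 2 ≤ (1/10 : ℝ)^2) (by norm_num))).2
  have h2 := (abs_le.mp (abs_le_of_sq_le_sq (by linarith : (1 - inner ℝ b c) ^ 2 ≤ (1/10 : ℝ)^2) (by norm_num))).2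
  have h3 := (abs_le.mp (abs_le_of_sq_le_sq (by linarith : (0 - inner ℝ a c) ^ 2 ≤ (1/10 : ℝ)^2) (by norm_num))).1
  norm_num at h0
  linarith

end Geometry

section Pivot

open scoped Classical in
/-- Ordered induced cherries. -/
noncomputable def cherries {n : ℕ} (G : SimpleGraph (Fin n)) : Finset (Fin n × Fin n × Fin n) :=
  Finset.univ.filter (fun t => G.Adj t.1 t.2.1 ∧ G.Adj t.2.1 t.2.2 ∧ t.1 ≠ t.2.2 ∧ ¬ G.Adj t.1 t.2.2)

open scoped Classical in
/-- Ordered mistakes of a clustering on a set. -/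
noncomputable def mistakes {n : ℕ} (G : SimpleGraph (Fin n)) (R : Finset (Fin n))
    (c : Fin n → Fin n) : Finset (Fin n × Fin n) :=
  (R ×ˢ R).filter (fun p => p.1 ≠ p.2 ∧ ¬ (G.Adj p.1 p.2 ↔ c p.1 = c p.2))

lemma pivot {n : ℕ} (G : SimpleGraph (Fin n)) (a b : ℝ) (ha : 0 ≤ a) (hb : 0 ≤ b)
    (hch : 3 * ((cherries G).card : ℝ) ≤ a * b) (R : Finset (Fin n)) :
    ∃ c : Fin n → Fin n, (∀ u ∈ R, c u ∈ R) ∧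
      ((mistakes G R c).card : ℝ) ≤ a * R.card + b := by
  classical
  induction' hk : R.card using Nat.strong_induction_on with k ih generalizing R
  by_cases hE : (((R ×ˢ R).filter (fun p => G.Adj p.1 p.2)).card : ℝ) ≤ b
  · refine ⟨id, fun u hu => hu, ?_⟩
    have h1 : (mistakes G R id) ⊆ (R ×ˢ R).filter (fun p => G.Adj p.1 p.2) := by
      intro p hp
      simp only [mistakes, Finset.mem_filter, id] at hp ⊢
      refine ⟨hp.1, ?_⟩
      by_contra hn
      exact hp.2.2 ⟨fun h => absurd h hn, fun h => absurd h hp.2.1⟩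
    have h2 : ((mistakes G R id).card : ℝ) ≤ b :=
      le_trans (by exact_mod_cast Finset.card_le_card h1) hE
    have : 0 ≤ a * (k : ℝ) := by positivity
    linarith
  · push Not at hE
    let X : Fin n → Finset (Fin n × Fin n) := fun p =>
      (R ×ˢ R).filter (fun t => G.Adj p t.1 ∧ G.Adj p t.2 ∧ t.1 ≠ t.2 ∧ ¬ G.Adj t.1 t.2)
    let Y : Fin n → Finset (Fin n × Fin n) := fun p =>
      (R ×ˢ R).filter (fun t => G.Adj p t.1 ∧ ¬ G.Adj p t.2 ∧ p ≠ t.2 ∧ G.Adj t.1 t.2)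
    let D : Fin n → Finset (Fin n) := fun p => R.filter (fun u => G.Adj p u)
    have hX : ∑ p ∈ R, (X p).card ≤ (cherries G).card := by
      rw [← Finset.card_sigma]
      apply Finset.card_le_card_of_injOn (fun s => (s.2.1, s.1, s.2.2))
      · rintro ⟨p, u, w⟩ h
        simp only [X, Finset.coe_sigma, Set.mem_sigma_iff, Finset.mem_coe, Finset.mem_filter] at h
        simp only [cherries, Finset.coe_filter, Finset.mem_univ, true_and, Set.mem_ofPred_eq]
        exact ⟨h.2.2.1.symm, h.2.2.2.1, h.2.2.2.2⟩
      · rintro ⟨p, u, w⟩ _ ⟨p', u', w'⟩ _ h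
        simp only [Prod.mk.injEq] at h
        obtain ⟨rfl, rfl, rfl⟩ := h
        rfl
    have hY : ∑ p ∈ R, (Y p).card ≤ (cherries G).card := by
      rw [← Finset.card_sigma]
      apply Finset.card_le_card_of_injOn (fun s => (s.1, s.2.1, s.2.2))
      · rintro ⟨p, u, w⟩ h
        simp only [Y, Finset.coe_sigma, Set.mem_sigma_iff, Finset.mem_coe, Finset.mem_filter] at h
        simp only [cherries, Finset.coe_filter, Finset.mem_univ, true_and, Set.mem_ofPred_eq]
        exact ⟨h.2.2.1, h.2.2.2.2.2, h.2.2.2.2.1, h.2.2.2.1⟩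
      · rintro ⟨p, u, w⟩ _ ⟨p', u', w'⟩ _ h
        simp only [Prod.mk.injEq] at h
        obtain ⟨rfl, rfl, rfl⟩ := h
        rfl
    have hD : ((R ×ˢ R).filter (fun p => G.Adj p.1 p.2)).card ≤ ∑ p ∈ R, (D p).card := by
      rw [← Finset.card_sigma]
      apply Finset.card_le_card_of_injOn (fun s => ⟨s.1, s.2⟩)
      · rintro ⟨p, u⟩ h
        simp only [Finset.coe_filter, Finset.mem_product, Set.mem_ofPred_eq] at h
        simp only [D, Finset.coe_sigma, Set.mem_sigma_iff, Finset.mem_coe, Finset.mem_filter]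
        exact ⟨h.1.1, h.1.2, h.2⟩
      · rintro ⟨p, u⟩ _ ⟨p', u'⟩ _ h
        simp only [Sigma.mk.injEq, heq_eq_eq] at h
        obtain ⟨rfl, rfl⟩ := h
        rfl
    have hRne : R.Nonempty := by
      rw [Finset.nonempty_iff_ne_empty]
      rintro rfl
      simp at hE
      linarith
    obtain ⟨p, hpR, hp⟩ : ∃ p ∈ R, ((X p).card : ℝ) + 2 * (Y p).card ≤ a * (D p).card := by
      apply Finset.exists_le_of_sum_le hRne
      rw [Finset.sum_add_distrib, ← Finset.mul_sum, ← Finset.mul_sum]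
      have h1 : (∑ p ∈ R, ((X p).card : ℝ)) ≤ (cherries G).card := by exact_mod_cast hX
      have h2 : (∑ p ∈ R, ((Y p).card : ℝ)) ≤ (cherries G).card := by exact_mod_cast hY
      have h3 : b ≤ ∑ p ∈ R, ((D p).card : ℝ) := hE.le.trans (by exact_mod_cast hD)
      have h4 := mul_le_mul_of_nonneg_left h3 ha
      linarith
    let N := insert p (D p)
    have hNR : N ⊆ R := by
      intro u hu
      simp only [N, D, Finset.mem_insert, Finset.mem_filter] at hu
      rcases hu with rfl | hu
      · exact hpR
      · exact hu.1
    have hpN : p ∈ N := Finset.mem_insert_self _ _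
    have hDN : (D p).card ≤ N.card := Finset.card_le_card (Finset.subset_insert _ _)
    have hcard : (R \ N).card + N.card = R.card := Finset.card_sdiff_add_card_eq_card hNR
    have hN1 : 0 < N.card := Finset.card_pos.mpr ⟨p, hpN⟩
    obtain ⟨c', hc'R, hc'⟩ := ih (R \ N).card (by omega) (R \ N) rfl
    let c : Fin n → Fin n := fun u => if u ∈ N then p else c' u
    refine ⟨c, ?_, ?_⟩
    · intro u hu
      by_cases huN : u ∈ N
      · simp [c, huN, hpR]
      · simp only [c, huN, if_false]
        exact (Finset.mem_sdiff.mp (hc'R u (Finset.mem_sdiff.mpr ⟨hu, huN⟩))).1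
    · have hsub : mistakes G R c ⊆ mistakes G (R \ N) c' ∪ (X p ∪ (Y p ∪ (Y p).image Prod.swap)) := by
        rintro ⟨u, w⟩ h
        simp only [mistakes, Finset.mem_filter, Finset.mem_product] at h
        obtain ⟨⟨huR, hwR⟩, huw, hmis⟩ := h
        have hmemN : ∀ x, x ∈ R → (x ∈ N ↔ x = p ∨ G.Adj p x) := by
          intro x hx
          simp [N, D, hx]
        have hcp : ∀ x, x ∈ R → x ∉ N → c' x ≠ p := by
          intro x hx hxN he
          have := (Finset.mem_sdiff.mp (hc'R x (Finset.mem_sdiff.mpr ⟨hx, hxN⟩))).2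
          rw [he] at this
          exact this hpN
        by_cases hu : u ∈ N <;> by_cases hw : w ∈ N
        · have hna : ¬ G.Adj u w := by
            intro hadj
            apply hmis
            simp [c, hu, hw, hadj]
          rw [hmemN _ huR] at hu
          rw [hmemN _ hwR] at hw
          have hu' : G.Adj p u := by
            rcases hu with rfl | hu
            · rcases hw with rfl | hw
              · exact absurd rfl huw
              · exact absurd hw hna
            · exact hu
          have hw' : G.Adj p w := by
            rcases hw with rfl | hw
            · exact absurd hu'.symm hna
            · exact hw
          simp only [Finset.mem_union]
          right; left
          simp only [X, Finset.mem_filter, Finset.mem_product]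
          exact ⟨⟨huR, hwR⟩, hu', hw', huw, hna⟩
        · have hadj : G.Adj u w := by
            by_contra hna
            apply hmis
            have : p ≠ c' w := (hcp w hwR hw).symm
            simp [c, hu, hw, hna, this]
          rw [hmemN _ huR] at hu
          rw [hmemN _ hwR] at hw
          push Not at hw
          have hu' : G.Adj p u := by
            rcases hu with rfl | hu
            · exact absurd hadj hw.2
            · exact hu
          simp only [Finset.mem_union]
          right; right; left
          simp only [Y, Finset.mem_filter, Finset.mem_product]
          exact ⟨⟨huR, hwR⟩, hu', hw.2, hw.1.symm, hadj⟩
        · have hadj : G.Adj u w := by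
            by_contra hna
            apply hmis
            have : c' u ≠ p := (hcp u huR hu)
            simp [c, hu, hw, hna, this]
          rw [hmemN _ huR] at hu
          rw [hmemN _ hwR] at hw
          push Not at hu
          have hw' : G.Adj p w := by
            rcases hw with rfl | hw
            · exact absurd hadj.symm hu.2
            · exact hw
          simp only [Finset.mem_union]
          right; right; right
          rw [Finset.mem_image]
          refine ⟨(w, u), ?_, rfl⟩
          simp only [Y, Finset.mem_filter, Finset.mem_product]
          exact ⟨⟨hwR, huR⟩, hw', hu.2, hu.1.symm, hadj.symm⟩
        · simp only [Finset.mem_union]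
          left
          simp only [mistakes, Finset.mem_filter, Finset.mem_product, Finset.mem_sdiff]
          refine ⟨⟨⟨huR, hu⟩, hwR, hw⟩, huw, ?_⟩
          simpa [c, hu, hw] using hmis
      have h1 : (mistakes G R c).card ≤ (mistakes G (R \ N) c').card + ((X p).card + ((Y p).card + (Y p).card)) := by
        refine (Finset.card_le_card hsub).trans ?_
        refine (Finset.card_union_le _ _).trans (Nat.add_le_add_left ?_ _)
        refine (Finset.card_union_le _ _).trans (Nat.add_le_add_left ?_ _)
        refine (Finset.card_union_le _ _).trans ?_
        exact Nat.add_le_add_left Finset.card_image_le _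
      have h1' : ((mistakes G R c).card : ℝ) ≤ (mistakes G (R \ N) c').card + ((X p).card + ((Y p).card + (Y p).card)) := by
        exact_mod_cast h1
      have h2 : ((R \ N).card : ℝ) + N.card = k := by exact_mod_cast hcard.trans hk
      have h3 : ((D p).card : ℝ) ≤ N.card := by exact_mod_cast hDN
      have h4 := mul_le_mul_of_nonneg_left h3 ha
      have h5 : a * ((R \ N).card : ℝ) + a * N.card = a * k := by rw [← h2]; ring
      linarith

/-- Few cherries: close to a union of cliques. -/
lemma close_of_few_cherries {n : ℕ} (G : SimpleGraph (Fin n)) (ε : ℝ) (hε : 0 ≤ ε)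
    (hch : 12 * ((cherries G).card : ℝ) ≤ ε ^ 2 * (n : ℝ) ^ 3) :
    ¬ FarFromCliqueUnions ε G := by
  classical
  obtain ⟨c, -, hc⟩ := pivot G (ε * n / 2) (ε * n ^ 2 / 2) (by positivity) (by positivity)
    (by nlinarith) Finset.univ
  intro hfar
  let H : SimpleGraph (Fin n) :=
    { Adj := fun u w => u ≠ w ∧ c u = c w
      symm := ⟨fun u w h => ⟨h.1.symm, h.2.symm⟩⟩
      loopless := ⟨fun u h => h.1 rfl⟩ }
  have hH : IsUnionOfCliques H := by
    intro u w hr huw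
    refine ⟨huw, ?_⟩
    obtain ⟨p⟩ := hr
    clear huw
    induction p with
    | nil => rfl
    | cons h _ ih => exact h.2.trans ih
  apply hfar H hH
  refine ⟨H, ⟨SimpleGraph.Iso.refl⟩, ?_⟩
  have hsub : symmDiff G.edgeSet H.edgeSet ⊆
      (((mistakes G Finset.univ c).image (fun p => s(p.1, p.2)) : Finset (Sym2 (Fin n))) : Set (Sym2 (Fin n))) := by
    intro e
    induction e using Sym2.ind with
    | _ u w =>
      intro h
      rw [Set.mem_symmDiff, SimpleGraph.mem_edgeSet, SimpleGraph.mem_edgeSet] at h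
      rw [Finset.mem_coe, Finset.mem_image]
      refine ⟨(u, w), ?_, rfl⟩
      simp only [mistakes, Finset.mem_filter, Finset.mem_product, Finset.mem_univ, true_and]
      have hne : u ≠ w := by
        rcases h with h | h
        · exact h.1.ne
        · exact h.1.1
      refine ⟨hne, ?_⟩
      intro hiff
      rcases h with h | h
      · exact h.2 ⟨hne, hiff.mp h.1⟩
      · exact h.2 (hiff.mpr h.1.2)
  have h1 := Set.ncard_le_ncard hsub (Finset.finite_toSet _)
  rw [Set.ncard_coe_finset] at h1
  have h2 : ((symmDiff G.edgeSet H.edgeSet).ncard : ℝ) ≤ (mistakes G Finset.univ c).card := by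
    exact_mod_cast h1.trans Finset.card_image_le
  refine h2.trans (hc.trans (le_of_eq ?_))
  simp
  ring

end Pivot

section Assemble

lemma sum_castLE {n f : ℕ} (h : f ≤ n) (g : Fin n → ℝ) :
    ∑ j : Fin f, g (Fin.castLE h j) = ∑ i : Fin n, if i.val < f then g i else 0 := by
  classical
  rw [← Finset.sum_filter]
  apply Finset.sum_bij (fun j _ => Fin.castLE h j)
  · intro j _; simp
  · intro a _ b _ hab; exact Fin.castLE_injective h hab
  · intro i hi
    simp only [Finset.mem_filter, Finset.mem_univ, true_and] at hi
    exact ⟨⟨i.val, hi⟩, Finset.mem_univ _, by ext; rfl⟩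
  · intro j _; rfl

lemma frob {n : ℕ} (t : Fin n → ℝ) (v : Fin n → Fin n → ℝ)
    (hv : ∀ i j : Fin n, (∑ k, v i k * v j k) = if i = j then (1 : ℝ) else 0) :
    ∑ u, ∑ w, (∑ i, t i * (v i u * v i w)) ^ 2 = ∑ i, t i ^ 2 := by
  calc ∑ u, ∑ w, (∑ i, t i * (v i u * v i w)) ^ 2
      = ∑ u, ∑ w, ∑ i, ∑ j, (t i * t j) * ((v i u * v j u) * (v i w * v j w)) := by
        apply Finset.sum_congr rfl; intro u _
        apply Finset.sum_congr rfl; intro w _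
        rw [pow_two, Finset.sum_mul_sum]
        apply Finset.sum_congr rfl; intro i _
        apply Finset.sum_congr rfl; intro j _
        ring
    _ = ∑ u, ∑ i, ∑ w, ∑ j, (t i * t j) * ((v i u * v j u) * (v i w * v j w)) := by
        apply Finset.sum_congr rfl; intro u _
        rw [Finset.sum_comm]
    _ = ∑ u, ∑ i, ∑ j, ∑ w, (t i * t j) * ((v i u * v j u) * (v i w * v j w)) := by
        apply Finset.sum_congr rfl; intro u _
        apply Finset.sum_congr rfl; intro i _
        rw [Finset.sum_comm]
    _ = ∑ i, ∑ j, ∑ u, ∑ w, (t i * t j) * ((v i u * v j u) * (v i w * v j w)) := by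
        rw [Finset.sum_comm]
        apply Finset.sum_congr rfl; intro i _
        rw [Finset.sum_comm]
    _ = ∑ i, ∑ j, (t i * t j) * ((∑ u, v i u * v j u) * (∑ w, v i w * v j w)) := by
        apply Finset.sum_congr rfl; intro i _
        apply Finset.sum_congr rfl; intro j _
        rw [Finset.sum_mul_sum, Finset.mul_sum]
        apply Finset.sum_congr rfl; intro u _
        rw [Finset.mul_sum]
    _ = _ := by
        simp only [hv]
        simp [pow_two]

lemma cherry_count {n d : ℕ} (G : SimpleGraph (Fin n)) (y : Fin n → EuclideanSpace ℝ (Fin d))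
    (M : Fin n → Fin n → ℝ) (hM1 : ∀ u w, G.Adj u w → M u w = 1)
    (hM0 : ∀ u w, u ≠ w → ¬ G.Adj u w → M u w = 0) (δ b : ℝ)
    (hF : ∑ u, ∑ w, (M u w - inner ℝ (y u) (y w)) ^ 2 ≤ δ * (n : ℝ) ^ 2)
    (hb : ((Finset.univ.filter (fun u => 11 / 10 < ‖y u‖ ^ 2)).card : ℝ) ≤ b) :
    ((cherries G).card : ℝ) ≤ 3 * b * (n : ℝ) ^ 2 + 300 * δ * (n : ℝ) ^ 3 := by
  classical
  set B := Finset.univ.filter (fun u => 11 / 10 < ‖y u‖ ^ 2) with hB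
  let P : Finset (Fin n × Fin n) :=
    Finset.univ.filter (fun p => 1 / 100 < (M p.1 p.2 - inner ℝ (y p.1) (y p.2)) ^ 2)
  have hP : (P.card : ℝ) ≤ 100 * δ * (n : ℝ) ^ 2 := by
    have h1 : (P.card : ℝ) * (1 / 100) ≤ ∑ p : Fin n × Fin n, (M p.1 p.2 - inner ℝ (y p.1) (y p.2)) ^ 2 := by
      calc (P.card : ℝ) * (1 / 100) = ∑ p ∈ P, (1 / 100 : ℝ) := by
            rw [Finset.sum_const, nsmul_eq_mul]
        _ ≤ ∑ p ∈ P, (M p.1 p.2 - inner ℝ (y p.1) (y p.2)) ^ 2 := by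
            apply Finset.sum_le_sum
            intro p hp
            exact (Finset.mem_filter.mp hp).2.le
        _ ≤ _ := Finset.sum_le_sum_of_subset_of_nonneg (Finset.subset_univ _) (fun _ _ _ => sq_nonneg _)
    rw [Fintype.sum_prod_type] at h1
    linarith
  let U : Finset (Fin n) := Finset.univ
  have hsub : cherries G ⊆ (B ×ˢ (U ×ˢ U)) ∪ ((U ×ˢ (B ×ˢ U)) ∪ ((U ×ˢ (U ×ˢ B)) ∪
      ((P ×ˢ U).image (fun t => (t.1.1, t.1.2, t.2)) ∪ ((P ×ˢ U).image (fun t => (t.2, t.1.1, t.1.2)) ∪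
        (P ×ˢ U).image (fun t => (t.1.1, t.2, t.1.2)))))) := by
    rintro ⟨u, w, x⟩ h
    simp only [cherries, Finset.mem_filter, Finset.mem_univ, true_and] at h
    obtain ⟨huw, hwx, hux, hna⟩ := h
    by_contra hcon
    simp only [Finset.mem_union, not_or] at hcon
    obtain ⟨h1, h2, h3, h4, h5, h6⟩ := hcon
    have g1 : ‖y u‖ ^ 2 ≤ 11 / 10 := by
      by_contra hc
      exact h1 (by simp only [U, hB, Finset.mem_product, Finset.mem_filter, Finset.mem_univ, true_and, and_true]; exact not_le.mp hc)
    have g2 : ‖y w‖ ^ 2 ≤ 11 / 10 := by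
      by_contra hc
      exact h2 (by simp only [U, hB, Finset.mem_product, Finset.mem_filter, Finset.mem_univ, true_and, and_true]; exact not_le.mp hc)
    have g3 : ‖y x‖ ^ 2 ≤ 11 / 10 := by
      by_contra hc
      exact h3 (by simp only [U, hB, Finset.mem_product, Finset.mem_filter, Finset.mem_univ, true_and]; exact not_le.mp hc)
    have g4 : (M u w - inner ℝ (y u) (y w)) ^ 2 ≤ 1 / 100 := by
      by_contra hc
      refine h4 (Finset.mem_image.mpr ⟨((u, w), x), ?_, rfl⟩)
      simp only [U, P, Finset.mem_product, Finset.mem_filter, Finset.mem_univ, true_and, and_true]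
      exact not_le.mp hc
    have g5 : (M w x - inner ℝ (y w) (y x)) ^ 2 ≤ 1 / 100 := by
      by_contra hc
      refine h5 (Finset.mem_image.mpr ⟨((w, x), u), ?_, rfl⟩)
      simp only [U, P, Finset.mem_product, Finset.mem_filter, Finset.mem_univ, true_and, and_true]
      exact not_le.mp hc
    have g6 : (M u x - inner ℝ (y u) (y x)) ^ 2 ≤ 1 / 100 := by
      by_contra hc
      refine h6 (Finset.mem_image.mpr ⟨((u, x), w), ?_, rfl⟩)
      simp only [U, P, Finset.mem_product, Finset.mem_filter, Finset.mem_univ, true_and, and_true]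
      exact not_le.mp hc
    rw [hM1 _ _ huw] at g4
    rw [hM1 _ _ hwx] at g5
    rw [hM0 _ _ hux hna] at g6
    exact no_cherry_vec _ _ _ g1 g2 g3 g4 g5 g6
  have hUc : U.card = n := by simp [U]
  have hcard : (cherries G).card ≤ B.card * (n * n) + (n * (B.card * n) + (n * (n * B.card) +
      (P.card * n + (P.card * n + P.card * n)))) := by
    have him : ∀ g : (Fin n × Fin n) × Fin n → Fin n × Fin n × Fin n,
        ((P ×ˢ U).image g).card ≤ P.card * n := by
      intro g
      refine Finset.card_image_le.trans ?_
      rw [Finset.card_product, hUc]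
    refine (Finset.card_le_card hsub).trans ?_
    refine (Finset.card_union_le _ _).trans (Nat.add_le_add ?_ ?_)
    · simp only [Finset.card_product, hUc]; exact le_rfl
    refine (Finset.card_union_le _ _).trans (Nat.add_le_add ?_ ?_)
    · simp only [Finset.card_product, hUc]; exact le_rfl
    refine (Finset.card_union_le _ _).trans (Nat.add_le_add ?_ ?_)
    · simp only [Finset.card_product, hUc]; exact le_rfl
    refine (Finset.card_union_le _ _).trans (Nat.add_le_add (him _) ?_)
    exact (Finset.card_union_le _ _).trans (Nat.add_le_add (him _) (him _))
  have hcard' : ((cherries G).card : ℝ) ≤ B.card * (n * n) + (n * (B.card * n) + (n * (n * B.card) +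
      (P.card * n + (P.card * n + P.card * n)))) := by exact_mod_cast hcard
  have hn0 : (0:ℝ) ≤ n := Nat.cast_nonneg n
  have k1 := mul_le_mul_of_nonneg_right hb (sq_nonneg (n:ℝ))
  have k2 := mul_le_mul_of_nonneg_right hP hn0
  nlinarith

lemma main_small (ε : ℝ) (hε : 0 < ε) (hε8 : ε ≤ 1 / 8) :
    ∃ n₀ : ℕ, ∀ (n : ℕ) (_ : n₀ ≤ n) (hn1 : 1 ≤ n) (hlt : n - 1 < n)
      (G : SimpleGraph (Fin n)) (μ : Fin n → ℝ) (v : Fin n → Fin n → ℝ),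
      Antitone μ →
      (∀ i, (adjMat G).mulVec (v i) = μ i • v i) →
      (∀ i j : Fin n, (∑ k, v i k * v j k) = if i = j then (1 : ℝ) else 0) →
      FarFromCliqueUnions ε G →
      μ ⟨n - 1, hlt⟩ ≤ -((n : ℝ) ^ ((1 : ℝ) / 4 - ε)) := by
  classical
  obtain ⟨f₁, hf2, htail⟩ := tail_small ε (ε ^ 2 / 14400) hε (by positivity)
  obtain ⟨N, hN⟩ := norm_bound_geom f₁ (2 * (f₁ : ℝ) ^ ((1 : ℝ) / 2 - 2 * ε)) (ε ^ 2 / 144)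
    (by positivity) (by positivity)
  obtain ⟨K, hK⟩ := exists_nat_ge ((2880 * N / ε ^ 2) ^ 2)
  refine ⟨f₁ + K, ?_⟩
  intro n hn hn1 hlt G μ v hμ heig hv hfar
  by_contra hcon
  push Not at hcon
  set lam := (n : ℝ) ^ ((1 : ℝ) / 4 - ε) with hlam
  have hn0 : (0:ℝ) < n := by exact_mod_cast hn1
  have hn1' : (1:ℝ) ≤ n := by exact_mod_cast hn1
  have hl0 : 0 ≤ lam := Real.rpow_nonneg hn0.le _
  have hfn : f₁ ≤ n := by omega
  -- orthogonality of columns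
  have hv' : ∀ u w : Fin n, (∑ i, v i u * v i w) = if u = w then (1 : ℝ) else 0 := by
    let V : Matrix (Fin n) (Fin n) ℝ := Matrix.of v
    have h1 : V * V.transpose = 1 := by
      ext i j
      rw [Matrix.mul_apply, Matrix.one_apply, ← hv i j]
      rfl
    have h2 := mul_eq_one_comm.mp h1
    intro u w
    have h3 := congrFun (congrFun h2 u) w
    rw [Matrix.mul_apply, Matrix.one_apply] at h3
    exact h3
  let m : Fin n → ℝ := fun i => μ i + lam
  have hm : Antitone m := fun i j h => by simpa [m] using hμ h
  have hm0 : ∀ i, 0 ≤ m i := by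
    intro i
    have h1 : μ ⟨n - 1, hlt⟩ ≤ μ i := hμ (by rw [Fin.le_def]; simp only; omega)
    simp only [m]
    linarith
  let M : Fin n → Fin n → ℝ := fun u w => ∑ i, m i * (v i u * v i w)
  have hMA : ∀ u w, M u w = adjMat G u w + if u = w then lam else 0 := by
    intro u w
    have h1 : ∑ i, μ i * (v i u * v i w) = adjMat G u w := by
      calc ∑ i, μ i * (v i u * v i w) = ∑ i, ((adjMat G).mulVec (v i)) u * v i w := by
            apply Finset.sum_congr rfl; intro i _
            rw [heig i, Pi.smul_apply, smul_eq_mul]; ring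
        _ = ∑ i, ∑ x, adjMat G u x * (v i x * v i w) := by
            apply Finset.sum_congr rfl; intro i _
            rw [Matrix.mulVec, dotProduct, Finset.sum_mul]
            apply Finset.sum_congr rfl; intro x _
            ring
        _ = ∑ x, adjMat G u x * ∑ i, (v i x * v i w) := by
            rw [Finset.sum_comm]
            apply Finset.sum_congr rfl; intro x _
            rw [Finset.mul_sum]
        _ = _ := by
            simp only [hv']
            simp
    simp only [M, m, add_mul, Finset.sum_add_distrib]
    rw [h1, ← Finset.mul_sum, hv']
    simp
  have hMd : ∀ u, M u u = lam := by
    intro u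
    rw [hMA]
    simp [adjMat]
  have hM1 : ∀ u w, G.Adj u w → M u w = 1 := by
    intro u w h
    rw [hMA]
    simp [adjMat, h, h.ne]
  have hM0 : ∀ u w, u ≠ w → ¬ G.Adj u w → M u w = 0 := by
    intro u w h h'
    rw [hMA]
    simp [adjMat, h, h']
  have hMsq : ∀ u w, (∑ i, m i * (v i u * v i w)) ^ 2 =
      (∑ i, m i * (v i u * v i w)) + if u = w then lam ^ 2 - lam else 0 := by
    intro u w
    change M u w ^ 2 = M u w + _
    by_cases h : u = w
    · subst h; rw [hMd]; simp
    · rw [if_neg h]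
      by_cases h' : G.Adj u w
      · rw [hM1 _ _ h']; norm_num
      · rw [hM0 _ _ h h']; norm_num
  have hkey := key_ineq m v lam hl0 hm hm0 hv hv' hMsq
  have htot : ∑ i, m i = n * lam := by
    have h1 : ∑ u, M u u = n * lam := by simp [hMd]
    rw [← h1]
    simp only [M]
    rw [Finset.sum_comm]
    apply Finset.sum_congr rfl; intro i _
    rw [← Finset.mul_sum, hv, if_pos rfl, mul_one]
  have htop : ∀ f, topSum m f ≤ n * lam := by
    intro f
    rw [← htot]
    unfold topSum
    apply Finset.sum_le_sum; intro i _
    split_ifs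
    · exact le_rfl
    · exact hm0 i
  have hgrow : ∀ f : ℕ, 2 ≤ f → topSum m f ≤ n * (2 * (f : ℝ) ^ ((1 : ℝ) / 2 - 2 * ε)) := by
    intro f hf
    have := growth n hn1 ε hε hε8 (fun f => topSum m f / n) ?_ ?_ f hf
    · rw [div_lt_iff₀ hn0] at this
      linarith
    · intro f
      rw [← hlam, ← add_div, div_pow, div_le_div_iff₀ (by positivity) hn0]
      have := hkey f
      calc topSum m f ^ 2 * n ≤ (n * (topSum m (f ^ 2) + lam ^ 2 * (f : ℝ) ^ 2)) * n := by gcongr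
        _ = _ := by ring
    · intro f
      rw [div_le_iff₀ hn0]
      linarith [htop f]
  have ht := htail n m hm hm0 hgrow
  -- the vectors
  let y : Fin n → EuclideanSpace ℝ (Fin f₁) := fun u =>
    WithLp.toLp 2 (fun j => Real.sqrt (m (Fin.castLE hfn j)) * v (Fin.castLE hfn j) u)
  have hin : ∀ u w, inner ℝ (y u) (y w) = ∑ i : Fin n, if i.val < f₁ then m i * (v i u * v i w) else 0 := by
    intro u w
    rw [← sum_castLE hfn (fun i => m i * (v i u * v i w)), PiLp.inner_apply]
    apply Finset.sum_congr rfl; intro j _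
    have := Real.mul_self_sqrt (hm0 (Fin.castLE hfn j))
    simp only [y, RCLike.inner_apply, conj_trivial]
    linear_combination (v (Fin.castLE hfn j) u * v (Fin.castLE hfn j) w) * this
  have hF : ∑ u, ∑ w, (M u w - inner ℝ (y u) (y w)) ^ 2 ≤ ε ^ 2 / 14400 * (n : ℝ) ^ 2 := by
    refine le_trans (le_of_eq ?_) ht
    rw [← frob _ v hv]
    apply Finset.sum_congr rfl; intro u _
    apply Finset.sum_congr rfl; intro w _
    rw [hin]
    simp only [M]
    rw [← Finset.sum_sub_distrib]
    congr 1
    apply Finset.sum_congr rfl; intro i _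
    split_ifs <;> ring
  have hnorm : ∑ u, ‖y u‖ ^ 2 ≤ 2 * (f₁ : ℝ) ^ ((1 : ℝ) / 2 - 2 * ε) * n := by
    refine le_trans (le_of_eq ?_) ((hgrow f₁ hf2).trans (le_of_eq (by ring)))
    simp only [← real_inner_self_eq_norm_sq, hin]
    rw [Finset.sum_comm]
    unfold topSum
    apply Finset.sum_congr rfl; intro i _
    split_ifs
    · rw [← Finset.mul_sum, hv, if_pos rfl, mul_one]
    · simp
  have hcell : ∀ B : Finset (Fin n), ‖∑ u ∈ B, y u‖ ^ 2 ≤ (B.card : ℝ) ^ 2 + lam * B.card := by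
    intro B
    rw [← real_inner_self_eq_norm_sq, sum_inner]
    simp only [inner_sum, hin]
    have e : ∀ t : Fin n → ℝ, ∑ u ∈ B, ∑ w ∈ B, ∑ i, t i * (v i u * v i w) =
        ∑ i, t i * (∑ u ∈ B, v i u) ^ 2 := by
      intro t
      calc ∑ u ∈ B, ∑ w ∈ B, ∑ i, t i * (v i u * v i w)
          = ∑ u ∈ B, ∑ i, ∑ w ∈ B, t i * (v i u * v i w) := by
            apply Finset.sum_congr rfl; intro u _
            rw [Finset.sum_comm]
        _ = ∑ i, ∑ u ∈ B, ∑ w ∈ B, t i * (v i u * v i w) := by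
            rw [Finset.sum_comm]
        _ = _ := by
            apply Finset.sum_congr rfl; intro i _
            rw [pow_two, Finset.sum_mul_sum, Finset.mul_sum]
            apply Finset.sum_congr rfl; intro u _
            rw [Finset.mul_sum]
    have e1 : ∑ u ∈ B, ∑ w ∈ B, (∑ i : Fin n, if i.val < f₁ then m i * (v i u * v i w) else 0) =
        ∑ i : Fin n, (if i.val < f₁ then m i else 0) * (∑ u ∈ B, v i u) ^ 2 := by
      rw [← e]
      apply Finset.sum_congr rfl; intro u _
      apply Finset.sum_congr rfl; intro w _
      apply Finset.sum_congr rfl; intro i _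
      split_ifs <;> ring
    have e2 : ∑ u ∈ B, ∑ w ∈ B, M u w = ∑ i, m i * (∑ u ∈ B, v i u) ^ 2 := e m
    have e3 : ∑ u ∈ B, ∑ w ∈ B, M u w ≤ ∑ u ∈ B, ∑ w ∈ B, (1 + if u = w then lam else 0) := by
      apply Finset.sum_le_sum; intro u _
      apply Finset.sum_le_sum; intro w _
      rw [hMA]
      have : adjMat G u w ≤ 1 := by
        simp only [adjMat, Matrix.of_apply]
        split_ifs <;> norm_num
      linarith
    have e4 : ∑ u ∈ B, ∑ w ∈ B, ((1:ℝ) + if u = w then lam else 0) = (B.card : ℝ) ^ 2 + lam * B.card := by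
      have : ∀ u ∈ B, ∑ w ∈ B, ((1:ℝ) + if u = w then lam else 0) = B.card + lam := by
        intro u hu
        rw [Finset.sum_add_distrib, Finset.sum_ite_eq, if_pos hu]
        simp
      rw [Finset.sum_congr rfl this]
      simp
      ring
    rw [e1]
    refine le_trans ?_ (e3.trans (le_of_eq e4))
    rw [e2]
    apply Finset.sum_le_sum; intro i _
    split_ifs
    · exact le_rfl
    · rw [zero_mul]; exact mul_nonneg (hm0 i) (sq_nonneg _)
  have hbad := hN n lam y hl0 hnorm hcell
  have hch := cherry_count G y M hM1 hM0 _ _ hF hbad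
  refine close_of_few_cherries G ε hε.le ?_ hfar
  -- numerics
  have hlamle : lam ≤ Real.sqrt n := by
    rw [hlam, Real.sqrt_eq_rpow]
    exact Real.rpow_le_rpow_of_exponent_le hn1' (by linarith)
  have hsq : 2880 * N / ε ^ 2 ≤ Real.sqrt n := by
    apply Real.le_sqrt_of_sq_le
    refine hK.trans ?_
    exact_mod_cast (by omega : K ≤ n)
  have hss : Real.sqrt n * Real.sqrt n = n := Real.mul_self_sqrt hn0.le
  have hNl : 2880 * N * lam ≤ ε ^ 2 * n := by
    rw [div_le_iff₀ (by positivity)] at hsq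
    calc 2880 * N * lam ≤ (Real.sqrt n * ε ^ 2) * Real.sqrt n := by
          gcongr
      _ = ε ^ 2 * (Real.sqrt n * Real.sqrt n) := by ring
      _ = _ := by rw [hss]
  have h9 := mul_le_mul_of_nonneg_right hNl (sq_nonneg (n:ℝ))
  have hp : 0 ≤ ε ^ 2 * (n:ℝ) ^ 3 := by positivity
  nlinarith

end Assemble

/-- If `G` is `ε`-far from every disjoint union of cliques,
then its least adjacency eigenvalue satisfies `λₙ ≤ -n ^ (1/4 - ε)`. -/
theorem stmt0 (ε : ℝ) (hε : 0 < ε) :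
    ∃ n₀ : ℕ, ∀ (n : ℕ) (hn : n₀ ≤ n) (hn1 : 1 ≤ n)
      (G : SimpleGraph (Fin n)) (μ : Fin n → ℝ) (v : Fin n → Fin n → ℝ),
      Antitone μ →
      (∀ i, (adjMat G).mulVec (v i) = μ i • v i) →
      (∀ i j : Fin n, (∑ k, v i k * v j k) = if i = j then (1 : ℝ) else 0) →
      FarFromCliqueUnions ε G →
      μ ⟨n - 1, by omega⟩ ≤ -((n : ℝ) ^ ((1 : ℝ) / 4 - ε)) := by
  obtain ⟨n₀, h⟩ := main_small (min ε (1 / 8)) (lt_min hε (by norm_num)) (min_le_right _ _)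
  refine ⟨n₀, ?_⟩
  intro n hn hn1 G μ v hμ heig hv hfar
  have h1 := h n hn hn1 (Nat.sub_lt hn1 Nat.one_pos) G μ v hμ heig hv (by
    intro H hH hcl
    apply hfar H hH
    obtain ⟨G', hG', hc⟩ := hcl
    refine ⟨G', hG', hc.trans ?_⟩
    exact mul_le_mul_of_nonneg_right (min_le_left _ _) (by positivity))
  have h2 : (n : ℝ) ^ ((1 : ℝ) / 4 - ε) ≤ (n : ℝ) ^ ((1 : ℝ) / 4 - min ε (1 / 8)) := by
    apply Real.rpow_le_rpow_of_exponent_le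
    · exact_mod_cast hn1
    · have := min_le_left ε (1 / 8)
      linarith
  linarith
end

section
/- For every graph G on n vertices and every threshold T ≥ 4(−λ_n)√n, the quantity S_T = ∑_{i : λ_i ≥ T} λ_i satisfies S_T² ≤ 2n · S_{T²/(4n)}. -/
-- `S_T`, the sum of the eigenvalues that are at least `T`.
noncomputable def SSum {n : ℕ} (mu : Fin n → ℝ) (T : ℝ) : ℝ :=
  ∑ i ∈ Finset.univ.filter (fun i => T ≤ mu i), mu i

theorem onb_lemma {n : ℕ} {ι : Type*} [Fintype ι] (f : ι → Fin n → ℝ) :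
    ∃ (d : ℕ) (w : Fin d → Fin n → ℝ), d ≤ Fintype.card ι ∧
      (∀ k, ∑ x, w k x ^ 2 = 1) ∧
      (∀ u : Fin n → ℝ, ∑ k, (∑ x, u x * w k x) ^ 2 ≤ ∑ x, u x ^ 2) ∧
      (∀ i, ∑ k, (∑ x, f i x * w k x) ^ 2 = ∑ x, f i x ^ 2) := by
  classical
  let F : ι → EuclideanSpace ℝ (Fin n) := fun i => WithLp.toLp 2 (f i)
  let U : Submodule ℝ (EuclideanSpace ℝ (Fin n)) := Submodule.span ℝ (Set.range F)
  let b := stdOrthonormalBasis ℝ U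
  have hin : ∀ (u : Fin n → ℝ) (k), inner ℝ (b k : EuclideanSpace ℝ (Fin n)) (WithLp.toLp 2 u)
      = ∑ x, u x * (b k : EuclideanSpace ℝ (Fin n)) x := by
    intro u k
    simp [PiLp.inner_apply]
  have hon : Orthonormal ℝ (fun k => (b k : EuclideanSpace ℝ (Fin n))) :=
    b.orthonormal.comp_linearIsometry U.subtypeₗᵢ
  refine ⟨Module.finrank ℝ U, fun k => (b k : EuclideanSpace ℝ (Fin n)), ?_, ?_, ?_, ?_⟩
  · exact finrank_range_le_card F
  · intro k
    have h := hon.1 k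
    have h2 := EuclideanSpace.real_norm_sq_eq (b k : EuclideanSpace ℝ (Fin n))
    rw [← h2, h]; norm_num
  · intro u
    have h := hon.sum_inner_products_le (x := WithLp.toLp 2 u) (s := Finset.univ)
    simp only [hin, EuclideanSpace.real_norm_sq_eq, Real.norm_eq_abs, sq_abs] at h
    exact h
  · intro i
    have hm : F i ∈ U := Submodule.subset_span ⟨i, rfl⟩
    have h := b.sum_sq_norm_inner_right ⟨F i, hm⟩
    have e : ∀ k, inner ℝ (b k) (⟨F i, hm⟩ : U) = ∑ x, f i x * (b k : EuclideanSpace ℝ (Fin n)) x :=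
      fun k => hin (f i) k
    simp only [e, Real.norm_eq_abs, sq_abs] at h
    rw [h]
    have h2 := EuclideanSpace.real_norm_sq_eq (F i)
    exact h2

theorem schur_expand {n : ℕ} (c : Fin n → ℝ) (v : Fin n → Fin n → ℝ) (w : Fin n → ℝ) :
    ∑ x, ∑ y, (∑ l, c l * (v l x * v l y)) ^ 2 * (w x * w y)
      = ∑ l, ∑ m, c l * c m * (∑ x, v l x * v m x * w x) ^ 2 := by
  have h1 : ∀ x y, (∑ l, c l * (v l x * v l y)) ^ 2 * (w x * w y)
      = ∑ l, ∑ m, c l * c m * ((v l x * v m x * w x) * (v l y * v m y * w y)) := by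
    intro x y
    rw [sq, Finset.sum_mul_sum, Finset.sum_mul]
    refine Finset.sum_congr rfl fun l _ => ?_
    rw [Finset.sum_mul]
    refine Finset.sum_congr rfl fun m _ => ?_
    ring
  have h2 : ∀ l m, c l * c m * (∑ x, v l x * v m x * w x) ^ 2
      = ∑ x, ∑ y, c l * c m * ((v l x * v m x * w x) * (v l y * v m y * w y)) := by
    intro l m
    rw [sq, Finset.sum_mul_sum, Finset.mul_sum]
    refine Finset.sum_congr rfl fun x _ => ?_
    rw [Finset.mul_sum]
  simp only [h1, h2]
  calc _ = ∑ x, ∑ l, ∑ y, ∑ m, c l * c m * ((v l x * v m x * w x) * (v l y * v m y * w y)) :=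
        Finset.sum_congr rfl fun x _ => Finset.sum_comm
    _ = ∑ l, ∑ x, ∑ y, ∑ m, c l * c m * ((v l x * v m x * w x) * (v l y * v m y * w y)) :=
        Finset.sum_comm
    _ = ∑ l, ∑ x, ∑ m, ∑ y, c l * c m * ((v l x * v m x * w x) * (v l y * v m y * w y)) :=
        Finset.sum_congr rfl fun l _ => Finset.sum_congr rfl fun x _ => Finset.sum_comm
    _ = _ := Finset.sum_congr rfl fun l _ => Finset.sum_comm

theorem schur_diag {n : ℕ} (c : Fin n → ℝ) (v : Fin n → Fin n → ℝ) :
    ∑ x, (∑ l, c l * (v l x * v l x)) ^ 2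
      = ∑ l, ∑ m, c l * c m * (∑ x, (v l x * v m x) ^ 2) := by
  have h1 : ∀ x, (∑ l, c l * (v l x * v l x)) ^ 2
      = ∑ l, ∑ m, c l * c m * (v l x * v m x) ^ 2 := by
    intro x
    rw [sq, Finset.sum_mul_sum]
    refine Finset.sum_congr rfl fun l _ => Finset.sum_congr rfl fun m _ => ?_
    ring
  simp only [h1, Finset.mul_sum]
  rw [Finset.sum_comm]
  exact Finset.sum_congr rfl fun l _ => Finset.sum_comm

theorem quad_expand {n : ℕ} (c : Fin n → ℝ) (v : Fin n → Fin n → ℝ) (w : Fin n → ℝ) :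
    ∑ x, ∑ y, (∑ l, c l * (v l x * v l y)) * (w x * w y)
      = ∑ l, c l * (∑ x, v l x * w x) ^ 2 := by
  have h2 : ∀ l, c l * (∑ x, v l x * w x) ^ 2
      = ∑ x, ∑ y, c l * (v l x * v l y) * (w x * w y) := by
    intro l
    rw [sq, Finset.sum_mul_sum, Finset.mul_sum]
    refine Finset.sum_congr rfl fun x _ => ?_
    rw [Finset.mul_sum]
    exact Finset.sum_congr rfl fun y _ => by ring
  simp only [h2, Finset.sum_mul]
  calc _ = ∑ x, ∑ l, ∑ y, c l * (v l x * v l y) * (w x * w y) :=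
        Finset.sum_congr rfl fun x _ => Finset.sum_comm
    _ = _ := Finset.sum_comm

theorem stmt4 (n : ℕ) (hn : 0 < n) (G : SimpleGraph (Fin n))
    (μ : Fin n → ℝ) (v : Fin n → Fin n → ℝ)
    (hmono : Antitone μ)
    (heig : ∀ i, (adjMat G).mulVec (v i) = μ i • v i)
    (horth : ∀ i j : Fin n, (∑ k, v i k * v j k) = if i = j then (1 : ℝ) else 0)
    (T : ℝ) (hT : 4 * (-(μ ⟨n - 1, by omega⟩)) * Real.sqrt n ≤ T) :
    (SSum μ T) ^ 2 ≤ 2 * (n : ℝ) * SSum μ (T ^ 2 / (4 * (n : ℝ))) := by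
  classical
  set κ : ℝ := -(μ ⟨n - 1, by omega⟩) with hκ
  have hmin : ∀ l, 0 ≤ μ l + κ := by
    intro l
    have : μ ⟨n - 1, by omega⟩ ≤ μ l := hmono (by
      rw [Fin.le_def]; have := l.2; simp only; omega)
    rw [hκ]; linarith
  -- completeness
  let V : Matrix (Fin n) (Fin n) ℝ := Matrix.of v
  have hVV : V * V.transpose = 1 := by
    ext i j
    rw [Matrix.mul_apply, Matrix.one_apply]
    exact horth i j
  have hVV' : V.transpose * V = 1 := mul_eq_one_comm.mp hVV
  have hcomp : ∀ x y, ∑ l, v l x * v l y = if x = y then (1 : ℝ) else 0 := by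
    intro x y
    have := congrFun (congrFun hVV' x) y
    rw [Matrix.mul_apply, Matrix.one_apply] at this
    exact this
  have hspec : ∀ x y, adjMat G x y = ∑ l, μ l * (v l x * v l y) := by
    intro x y
    have h1 : adjMat G x y = ∑ z, adjMat G x z * (∑ l, v l z * v l y) := by
      simp [hcomp]
    have h2 : ∀ l, ∑ z, adjMat G x z * v l z = μ l * v l x := by
      intro l
      have := congrFun (heig l) x
      simpa [Matrix.mulVec, dotProduct] using this
    rw [h1]
    simp only [Finset.mul_sum]
    rw [Finset.sum_comm]
    refine Finset.sum_congr rfl fun l _ => ?_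
    rw [← mul_assoc, ← h2, Finset.sum_mul]
    exact Finset.sum_congr rfl fun z _ => by ring
  have hdiag : ∀ x, adjMat G x x = 0 := by
    intro x; simp [adjMat]
  have hidem : ∀ x y, adjMat G x y ^ 2 = adjMat G x y := by
    intro x y; simp only [adjMat, Matrix.of_apply]; split_ifs <;> norm_num
  have hB : ∀ x y, (∑ l, (μ l + κ) * (v l x * v l y)) ^ 2
      = adjMat G x y + κ ^ 2 * (if x = y then (1 : ℝ) else 0) := by
    intro x y
    simp only [add_mul, Finset.sum_add_distrib, ← Finset.mul_sum, hcomp, ← hspec]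
    split_ifs with h
    · subst h; simp [hdiag]
    · simp [hidem]
  have hκ0 : 0 ≤ κ := by
    let x : Fin n := ⟨0, hn⟩
    have h1 : ∑ l, (μ l + κ) * (v l x * v l x) = κ := by
      simp only [add_mul, Finset.sum_add_distrib, ← Finset.mul_sum, hcomp, ← hspec]
      simp [hdiag]
    rw [← h1]
    exact Finset.sum_nonneg fun l _ => mul_nonneg (hmin l) (mul_self_nonneg _)
  have hn0 : (0 : ℝ) < n := by exact_mod_cast hn
  have hs0 : 0 ≤ Real.sqrt n := Real.sqrt_nonneg _
  have hss : Real.sqrt n ^ 2 = n := Real.sq_sqrt hn0.le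
  have hT0 : 0 ≤ T := le_trans (by positivity) hT
  have hκT : 16 * κ ^ 2 * n ≤ T ^ 2 := by
    have := pow_le_pow_left₀ (by positivity) hT 2
    rw [← hss]; nlinarith
  let L : Finset (Fin n) := Finset.univ.filter (fun i => T ≤ μ i)
  let a : Fin n → ℝ := fun l => if T ≤ μ l then μ l else 0
  have ha0 : ∀ l, 0 ≤ a l := by
    intro l; simp only [a]; split_ifs with h
    · linarith
    · exact le_rfl
  have hab : ∀ l, a l ≤ μ l + κ := by
    intro l; simp only [a]; split_ifs with h
    · linarith
    · exact hmin l
  have hS : SSum μ T = ∑ l, a l := by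
    simp only [SSum, a, Finset.sum_filter]
  have hSL : T * L.card ≤ SSum μ T := by
    have := Finset.card_nsmul_le_sum L μ T (fun i hi => (Finset.mem_filter.mp hi).2)
    rw [nsmul_eq_mul] at this
    unfold SSum
    linarith
  obtain ⟨d, w, hd, hw1, hbes, hpar⟩ := onb_lemma
    (fun (p : L × L) x => v p.1 x * v p.2 x)
  have hdL : (d : ℝ) ≤ (L.card : ℝ) ^ 2 := by
    have : d ≤ L.card * L.card := by simpa using hd
    rw [sq]; exact_mod_cast this
  -- Cauchy-Schwarz
  have hCS : (SSum μ T) ^ 2 ≤ n * ∑ x, (∑ l, a l * (v l x * v l x)) ^ 2 := by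
    have h1 : SSum μ T = ∑ x, ∑ l, a l * (v l x * v l x) := by
      rw [hS, Finset.sum_comm]
      refine Finset.sum_congr rfl fun l _ => ?_
      rw [← Finset.mul_sum, horth]; simp
    rw [h1]
    have := sq_sum_le_card_mul_sum_sq (s := (Finset.univ : Finset (Fin n)))
      (f := fun x => ∑ l, a l * (v l x * v l x))
    simpa using this
  have htr : ∑ x, (∑ l, a l * (v l x * v l x)) ^ 2
      = ∑ k, ∑ l, ∑ m, a l * a m * (∑ x, v l x * v m x * w k x) ^ 2 := by
    rw [schur_diag, Finset.sum_comm]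
    rw [Finset.sum_comm]
    rw [Finset.sum_comm (s := (Finset.univ : Finset (Fin d)))]
    refine Finset.sum_congr rfl fun l _ => ?_
    rw [Finset.sum_comm (s := (Finset.univ : Finset (Fin d)))]
    refine Finset.sum_congr rfl fun m _ => ?_
    rw [← Finset.mul_sum]
    by_cases hl : T ≤ μ l
    · by_cases hm : T ≤ μ m
      · have := hpar (⟨l, by simp [L, hl]⟩, ⟨m, by simp [L, hm]⟩)
        simp only at this
        rw [this]
      · simp [a, hm]
    · simp [a, hl]
  have hk : ∀ k, ∑ l, ∑ m, a l * a m * (∑ x, v l x * v m x * w k x) ^ 2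
      ≤ ∑ l, μ l * (∑ x, v l x * w k x) ^ 2 + κ ^ 2 := by
    intro k
    calc _ ≤ ∑ l, ∑ m, (μ l + κ) * (μ m + κ) * (∑ x, v l x * v m x * w k x) ^ 2 := by
          refine Finset.sum_le_sum fun l _ => Finset.sum_le_sum fun m _ => ?_
          exact mul_le_mul_of_nonneg_right
            (mul_le_mul (hab l) (hab m) (ha0 m) (hmin l)) (sq_nonneg _)
      _ = ∑ x, ∑ y, (∑ l, (μ l + κ) * (v l x * v l y)) ^ 2 * (w k x * w k y) :=
          (schur_expand _ _ _).symm
      _ = ∑ x, ∑ y, (∑ l, μ l * (v l x * v l y)) * (w k x * w k y) + κ ^ 2 := by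
          simp only [hB]
          simp only [add_mul, Finset.sum_add_distrib, hspec]
          congr 1
          simp only [mul_ite, ite_mul, mul_one, mul_zero, zero_mul, Finset.sum_ite_eq,
            Finset.mem_univ, if_true]
          rw [← Finset.mul_sum]
          have := hw1 k
          simp only [sq] at this ⊢
          rw [this, mul_one]
      _ = _ := by rw [quad_expand]
  set T' : ℝ := T ^ 2 / (4 * (n : ℝ)) with hT'
  have hT'0 : 0 ≤ T' := by positivity
  let c : Fin n → ℝ := fun l => ∑ k, (∑ x, v l x * w k x) ^ 2
  have hc0 : ∀ l, 0 ≤ c l := fun l => Finset.sum_nonneg fun k _ => sq_nonneg _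
  have hc1 : ∀ l, c l ≤ 1 := by
    intro l
    refine (hbes (v l)).trans ?_
    have := horth l l
    simp only [if_true] at this
    simp only [sq, this, le_refl]
  have hcs : ∑ l, c l = d := by
    simp only [c]
    rw [Finset.sum_comm]
    have : ∀ k, ∑ l, (∑ x, v l x * w k x) ^ 2 = 1 := by
      intro k
      have h := quad_expand (fun _ => 1) v (w k)
      simp only [one_mul, hcomp] at h
      rw [← h]
      simp only [ite_mul, one_mul, zero_mul, Finset.sum_ite_eq, Finset.mem_univ, if_true]
      simpa [sq] using hw1 k
    simp [this]
  have hfin : ∑ l, μ l * c l ≤ SSum μ T' + T' * d := by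
    rw [← hcs, SSum, Finset.sum_filter, Finset.mul_sum, ← Finset.sum_add_distrib]
    refine Finset.sum_le_sum fun l _ => ?_
    have h0 := hc0 l
    have h1 := hc1 l
    split_ifs with h
    · nlinarith [mul_nonneg hT'0 h0]
    · push Not at h
      nlinarith
  have hmain : ∑ x, (∑ l, a l * (v l x * v l x)) ^ 2 ≤ SSum μ T' + T' * d + κ ^ 2 * d := by
    rw [htr]
    refine (Finset.sum_le_sum fun k _ => hk k).trans ?_
    rw [Finset.sum_add_distrib, Finset.sum_comm]
    simp only [← Finset.mul_sum]
    have : ∑ k : Fin d, κ ^ 2 = κ ^ 2 * d := by simp [mul_comm]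
    rw [this]
    linarith
  have hnT' : n * T' = T ^ 2 / 4 := by rw [hT']; field_simp
  have hSq : T ^ 2 * (d : ℝ) ≤ SSum μ T ^ 2 := by
    calc T ^ 2 * (d : ℝ) ≤ T ^ 2 * (L.card : ℝ) ^ 2 := by gcongr
      _ = (T * L.card) ^ 2 := by ring
      _ ≤ _ := pow_le_pow_left₀ (by positivity) hSL 2
  have h5 : (SSum μ T) ^ 2 ≤ n * SSum μ T' + (n * T') * d + (κ ^ 2 * n) * d := by
    have := mul_le_mul_of_nonneg_left hmain hn0.le
    linarith
  have h6 : 16 * κ ^ 2 * n * d ≤ T ^ 2 * d := by gcongr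
  rw [hnT'] at h5
  nlinarith [sq_nonneg (SSum μ T)]
end

section
/- For any ε, δ ∈ (0, 0.01) there exists n₀(ε, δ) such that the following holds for all n ≥ n₀(ε, δ): if G is a graph on n vertices with least adjacency eigenvalue λ_n ≥ −n^(1/4 − ε), then ∑_{i : λ_i ≤ (εδ)^(1/ε) n} λ_i² ≤ δn². -/
/-- Sum of the positive parts of the first `r` eigenvalues. -/
noncomputable def topS {n : ℕ} (μ : Fin n → ℝ) (r : ℕ) : ℝ :=
  ∑ i, if i.val < r then max (μ i) 0 else 0

lemma dual_orth {n : ℕ} (v : Fin n → Fin n → ℝ)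
    (h : ∀ i j : Fin n, (∑ k, v i k * v j k) = if i = j then (1 : ℝ) else 0) (x y : Fin n) :
    (∑ i, v i x * v i y) = if x = y then (1 : ℝ) else 0 := by
  have h1 : (Matrix.of v) * (Matrix.of v).transpose = 1 := by
    ext i j
    simp [Matrix.mul_apply, h, Matrix.one_apply]
  have h2 := mul_eq_one_comm.mp h1
  have h3 := congrFun (congrFun h2 x) y
  simpa [Matrix.mul_apply, Matrix.one_apply] using h3

lemma spectral {n : ℕ} (A : Matrix (Fin n) (Fin n) ℝ) (μ : Fin n → ℝ) (v : Fin n → Fin n → ℝ)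
    (hv : ∀ i, A.mulVec (v i) = μ i • v i)
    (h : ∀ i j : Fin n, (∑ k, v i k * v j k) = if i = j then (1 : ℝ) else 0) (x y : Fin n) :
    A x y = ∑ i, μ i * (v i x * v i y) := by
  have h1 : ∀ i, ∑ z, A x z * v i z = μ i * v i x := by
    intro i
    have := congrFun (hv i) x
    simpa [Matrix.mulVec, dotProduct] using this
  calc A x y = ∑ z, A x z * (∑ i, v i z * v i y) := by
        simp [dual_orth v h]
    _ = ∑ i, (∑ z, A x z * v i z) * v i y := by
        simp_rw [Finset.mul_sum, Finset.sum_mul]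
        rw [Finset.sum_comm]
        refine Finset.sum_congr rfl fun i _ => Finset.sum_congr rfl fun z _ => by ring
    _ = _ := by
        refine Finset.sum_congr rfl fun i _ => ?_
        rw [h1]; ring

lemma top_bound {n : ℕ} (μ p : Fin n → ℝ) (hμ : Antitone μ) (h0 : ∀ i, 0 ≤ p i)
    (h1 : ∀ i, p i ≤ 1) (m : ℕ) (hs : ∑ i, p i ≤ m) : ∑ i, μ i * p i ≤ topS μ m := by
  unfold topS
  by_cases hm : n ≤ m
  · refine Finset.sum_le_sum fun i _ => ?_
    rw [if_pos (lt_of_lt_of_le i.2 hm)]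
    calc μ i * p i ≤ max (μ i) 0 * p i := mul_le_mul_of_nonneg_right (le_max_left _ _) (h0 i)
      _ ≤ max (μ i) 0 * 1 := mul_le_mul_of_nonneg_left (h1 i) (le_max_right _ _)
      _ = _ := mul_one _
  · push Not at hm
    set c := max (μ ⟨m, hm⟩) 0 with hc
    have hc0 : 0 ≤ c := le_max_right _ _
    have key : ∀ i : Fin n, μ i * p i ≤
        ((if i.val < m then max (μ i) 0 else 0) - (if i.val < m then c else 0)) + c * p i := by
      intro i
      have hle : μ i * p i ≤ max (μ i) 0 * p i :=
        mul_le_mul_of_nonneg_right (le_max_left _ _) (h0 i)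
      split_ifs with hi
      · have : c ≤ max (μ i) 0 := max_le_max (hμ (by simp [Fin.le_def]; omega)) le_rfl
        nlinarith [h1 i, h0 i]
      · have : max (μ i) 0 ≤ c := max_le_max (hμ (by simp [Fin.le_def]; omega)) le_rfl
        nlinarith [h1 i, h0 i]
    have hsum := Finset.sum_le_sum fun i (_ : i ∈ Finset.univ) => key i
    rw [Finset.sum_add_distrib, Finset.sum_sub_distrib, ← Finset.mul_sum] at hsum
    have hcard : ∑ i : Fin n, (if i.val < m then c else 0) = m * c := by
      rw [← Finset.sum_filter, Finset.sum_const, nsmul_eq_mul]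
      congr 2
      rw [Fin.card_filter_val_lt]; omega
    rw [hcard] at hsum
    nlinarith

/-- A finite family of vectors is spanned by a small orthonormal family. -/
lemma exists_onb {n : ℕ} {ι : Type} (J : Finset ι) (u : ι → EuclideanSpace ℝ (Fin n)) :
    ∃ (d : ℕ) (w : Fin d → EuclideanSpace ℝ (Fin n)), d ≤ J.card ∧ Orthonormal ℝ w ∧
      ∀ j ∈ J, ∑ k, (inner ℝ (w k) (u j)) ^ 2 = ‖u j‖ ^ 2 := by
  classical
  let W : Submodule ℝ (EuclideanSpace ℝ (Fin n)) := Submodule.span ℝ ((J.image u : Finset _) : Set _)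
  let b := stdOrthonormalBasis ℝ W
  refine ⟨Module.finrank ℝ W, fun k => (b k : EuclideanSpace ℝ (Fin n)), ?_, ?_, ?_⟩
  · exact (finrank_span_finset_le_card _).trans Finset.card_image_le
  · exact b.orthonormal.comp_linearIsometry W.subtypeₗᵢ
  · intro j hj
    have hm : u j ∈ W := Submodule.subset_span (by
      simp only [Finset.coe_image]; exact ⟨j, hj, rfl⟩)
    have := b.sum_sq_norm_inner_right ⟨u j, hm⟩
    simpa using this

lemma key_ineq_s5 {n : ℕ} (A : Matrix (Fin n) (Fin n) ℝ)
    (hA0 : ∀ x, A x x = 0) (hA1 : ∀ x y, A x y * A x y = A x y)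
    (μ : Fin n → ℝ) (v : Fin n → Fin n → ℝ) (hμ : Antitone μ)
    (hv : ∀ i, A.mulVec (v i) = μ i • v i)
    (h : ∀ i j : Fin n, (∑ k, v i k * v j k) = if i = j then (1 : ℝ) else 0)
    (t : ℝ) (ht0 : 0 ≤ t) (ht : ∀ i, -t ≤ μ i) (r : ℕ) :
    topS μ r ^ 2 ≤ n * (topS μ (r ^ 2) + t ^ 2 * (r : ℝ) ^ 2) := by
  classical
  set α : Fin n → ℝ := fun i => if i.val < r then max (μ i) 0 else 0 with hα
  have hα0 : ∀ i, 0 ≤ α i := by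
    intro i; simp only [hα]; split_ifs <;> simp
  have hαβ : ∀ i, α i ≤ μ i + t := by
    intro i; simp only [hα]; split_ifs
    · exact max_le (by linarith) (by linarith [ht i])
    · linarith [ht i]
  let I : Finset (Fin n) := Finset.univ.filter fun i => i.val < r
  have hI : I.card ≤ r := by
    simp only [I]; rw [Fin.card_filter_val_lt]; omega
  have hαI : ∀ i, i ∉ I → α i = 0 := by
    intro i hi; simp only [I, Finset.mem_filter, Finset.mem_univ, true_and] at hi
    simp [hα, hi]
  let u : Fin n × Fin n → EuclideanSpace ℝ (Fin n) := fun p =>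
    WithLp.toLp 2 (fun x => v p.1 x * v p.2 x)
  obtain ⟨d, w, hd, hw, hpars⟩ := exists_onb (I ×ˢ I) u
  have hd' : d ≤ r ^ 2 := by
    rw [Finset.card_product] at hd; nlinarith
  -- norms
  have hunorm : ∀ p, ‖u p‖ ^ 2 = ∑ x, (v p.1 x * v p.2 x) ^ 2 := by
    intro p; simp only [u, EuclideanSpace.norm_sq_eq, Real.norm_eq_abs, sq_abs]
  have huinner : ∀ k p, inner ℝ (w k) (u p) = ∑ x, w k x * (v p.1 x * v p.2 x) := by
    intro k p; simp [u, PiLp.inner_apply, mul_comm]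
  have hnorm1 : ∀ k, ∑ x, w k x * w k x = 1 := by
    intro k
    have := hw.1 k
    have h2 : ‖w k‖ ^ 2 = 1 := by rw [this]; norm_num
    rw [EuclideanSpace.norm_sq_eq] at h2
    simpa [sq] using h2
  -- the trace
  have hdiag : ∑ x, (∑ i, α i * (v i x * v i x)) ^ 2
      = ∑ p : Fin n × Fin n, α p.1 * α p.2 * ‖u p‖ ^ 2 := by
    rw [Fintype.sum_prod_type]
    simp_rw [hunorm, sq, Finset.sum_mul_sum, Finset.mul_sum]
    rw [Finset.sum_comm]
    refine Finset.sum_congr rfl fun i _ => ?_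
    rw [Finset.sum_comm]
    refine Finset.sum_congr rfl fun j _ => Finset.sum_congr rfl fun x _ => by ring
  have hlow : topS μ r ^ 2 ≤ n * ∑ x, (∑ i, α i * (v i x * v i x)) ^ 2 := by
    have h1 : topS μ r = ∑ x, ∑ i, α i * (v i x * v i x) := by
      rw [Finset.sum_comm]
      simp_rw [← Finset.mul_sum, h]
      simp [topS, hα]
    rw [h1]
    have := sq_sum_le_card_mul_sum_sq (s := (Finset.univ : Finset (Fin n)))
      (f := fun x => ∑ i, α i * (v i x * v i x))
    simpa using this
  have hexp : ∑ p : Fin n × Fin n, α p.1 * α p.2 * ‖u p‖ ^ 2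
      = ∑ k, ∑ p : Fin n × Fin n, α p.1 * α p.2 * (inner ℝ (w k) (u p)) ^ 2 := by
    rw [Finset.sum_comm]
    refine Finset.sum_congr rfl fun p _ => ?_
    rw [← Finset.mul_sum]
    by_cases hp : p ∈ I ×ˢ I
    · rw [hpars p hp]
    · have : α p.1 * α p.2 = 0 := by
        rw [Finset.mem_product, not_and_or] at hp
        rcases hp with hp | hp
        · rw [hαI _ hp, zero_mul]
        · rw [hαI _ hp, mul_zero]
      rw [this]; simp
  have hB : ∀ x y, (∑ i, (μ i + t) * (v i x * v i y)) = A x y + if x = y then t else 0 := by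
    intro x y
    simp_rw [add_mul, Finset.sum_add_distrib, ← Finset.mul_sum, dual_orth v h]
    rw [spectral A μ v hv h x y]; simp
  have hBB : ∀ x y, (∑ i, (μ i + t) * (v i x * v i y)) ^ 2 = A x y + if x = y then t ^ 2 else 0 := by
    intro x y
    rw [hB]
    split_ifs with hxy
    · subst hxy; rw [hA0]; ring
    · rw [add_zero, sq, hA1]
  have hquad : ∀ k, ∑ p : Fin n × Fin n, (μ p.1 + t) * (μ p.2 + t) * (inner ℝ (w k) (u p)) ^ 2
      = (∑ i, μ i * (∑ x, w k x * v i x) ^ 2) + t ^ 2 := by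
    intro k
    have e1 : ∑ p : Fin n × Fin n, (μ p.1 + t) * (μ p.2 + t) * (inner ℝ (w k) (u p)) ^ 2
       = ∑ x, ∑ y, w k x * w k y * (∑ i, (μ i + t) * (v i x * v i y)) ^ 2 := by
      have : ∀ x y, w k x * w k y * (∑ i, (μ i + t) * (v i x * v i y)) ^ 2 =
          ∑ p : Fin n × Fin n, w k x * w k y *
            (((μ p.1 + t) * (v p.1 x * v p.1 y)) * ((μ p.2 + t) * (v p.2 x * v p.2 y))) := by
        intro x y
        rw [Fintype.sum_prod_type, sq, Finset.sum_mul_sum, Finset.mul_sum]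
        simp_rw [Finset.mul_sum]
      simp_rw [this]
      simp_rw [Finset.sum_comm (s := (Finset.univ : Finset (Fin n)))
        (t := (Finset.univ : Finset (Fin n × Fin n)))]
      refine Finset.sum_congr rfl fun p _ => ?_
      rw [huinner, sq, Finset.sum_mul_sum, Finset.mul_sum]
      refine Finset.sum_congr rfl fun x _ => ?_
      rw [Finset.mul_sum]
      refine Finset.sum_congr rfl fun y _ => by ring
    rw [e1]
    simp_rw [hBB, mul_add, Finset.sum_add_distrib]
    congr 1
    · simp_rw [spectral A μ v hv h, sq, Finset.sum_mul_sum, Finset.mul_sum]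
      have : ∀ x, ∑ y, ∑ i, w k x * w k y * (μ i * (v i x * v i y)) =
          ∑ i, ∑ y, w k x * w k y * (μ i * (v i x * v i y)) := fun x => Finset.sum_comm
      simp_rw [this]
      rw [Finset.sum_comm]
      refine Finset.sum_congr rfl fun i _ => Finset.sum_congr rfl fun x _ =>
        Finset.sum_congr rfl fun y _ => by ring
    · simp only [mul_ite, mul_zero, Finset.sum_ite_eq, Finset.mem_univ, if_true]
      rw [← Finset.sum_mul, hnorm1, one_mul]
  set pw : Fin n → ℝ := fun i => ∑ k, (∑ x, w k x * v i x) ^ 2 with hpw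
  have hpw1 : ∀ i, pw i ≤ 1 := by
    intro i
    let vi : EuclideanSpace ℝ (Fin n) := WithLp.toLp 2 (v i)
    have := hw.sum_inner_products_le vi (s := Finset.univ)
    have hn : ‖vi‖ ^ 2 = 1 := by
      rw [EuclideanSpace.norm_sq_eq]
      have := h i i
      simpa [vi, sq] using this
    rw [hn] at this
    simpa [vi, PiLp.inner_apply, mul_comm, hpw] using this
  have hpws : ∑ i, pw i = d := by
    simp only [hpw]
    rw [Finset.sum_comm]
    have : ∀ k, ∑ i, (∑ x, w k x * v i x) ^ 2 = 1 := by
      intro k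
      rw [← hnorm1 k]
      simp_rw [sq, Finset.sum_mul_sum]
      rw [Finset.sum_comm]
      refine Finset.sum_congr rfl fun x _ => ?_
      rw [Finset.sum_comm]
      have e : ∀ y, ∑ i, w k x * v i x * (w k y * v i y) = w k x * w k y * (if x = y then 1 else 0) := by
        intro y
        rw [← dual_orth v h, Finset.mul_sum]
        refine Finset.sum_congr rfl fun i _ => by ring
      simp_rw [e]
      simp
    simp_rw [this]; simp
  have htop := top_bound μ pw hμ (fun i => Finset.sum_nonneg fun k _ => sq_nonneg _) hpw1 (r ^ 2)
    (by rw [hpws]; exact_mod_cast hd')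
  have hupper : ∑ x, (∑ i, α i * (v i x * v i x)) ^ 2 ≤ topS μ (r ^ 2) + t ^ 2 * (r : ℝ) ^ 2 := by
    rw [hdiag, hexp]
    calc _ ≤ ∑ k, ∑ p : Fin n × Fin n, (μ p.1 + t) * (μ p.2 + t) * (inner ℝ (w k) (u p)) ^ 2 := by
          refine Finset.sum_le_sum fun k _ => Finset.sum_le_sum fun p _ => ?_
          refine mul_le_mul_of_nonneg_right ?_ (sq_nonneg _)
          exact mul_le_mul (hαβ _) (hαβ _) (hα0 _) ((hα0 _).trans (hαβ _))
      _ = ∑ i, μ i * pw i + t ^ 2 * d := by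
          simp_rw [hquad, Finset.sum_add_distrib]
          rw [Finset.sum_comm]
          simp only [hpw, Finset.mul_sum]
          simp [mul_comm]
      _ ≤ _ := by
          have : (d : ℝ) ≤ (r : ℝ) ^ 2 := by exact_mod_cast hd'
          have := mul_le_mul_of_nonneg_left this (sq_nonneg t)
          linarith
  exact hlow.trans (mul_le_mul_of_nonneg_left hupper (Nat.cast_nonneg n))

lemma topS_le {n : ℕ} (A : Matrix (Fin n) (Fin n) ℝ)
    (hA0 : ∀ x, A x x = 0)
    (μ : Fin n → ℝ) (v : Fin n → Fin n → ℝ)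
    (hv : ∀ i, A.mulVec (v i) = μ i • v i)
    (h : ∀ i j : Fin n, (∑ k, v i k * v j k) = if i = j then (1 : ℝ) else 0)
    (t : ℝ) (ht0 : 0 ≤ t) (ht : ∀ i, -t ≤ μ i) (r : ℕ) :
    topS μ r ≤ n * t := by
  have htr : ∑ i, μ i = 0 := by
    have : ∑ x, A x x = 0 := by simp [hA0]
    simp_rw [spectral A μ v hv h] at this
    rw [Finset.sum_comm] at this
    simp_rw [← Finset.mul_sum, h] at this
    simpa using this
  have : topS μ r ≤ ∑ i, (μ i + t) := by
    refine Finset.sum_le_sum fun i _ => ?_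
    split_ifs
    · exact max_le (by linarith) (by linarith [ht i])
    · linarith [ht i]
  rw [Finset.sum_add_distrib, htr] at this
  simpa using this

lemma eig_le {n : ℕ} (A : Matrix (Fin n) (Fin n) ℝ)
    (hA0 : ∀ x y, 0 ≤ A x y) (hA1 : ∀ x y, A x y ≤ 1)
    (μ : Fin n → ℝ) (v : Fin n → Fin n → ℝ)
    (hv : ∀ i, A.mulVec (v i) = μ i • v i)
    (h : ∀ i j : Fin n, (∑ k, v i k * v j k) = if i = j then (1 : ℝ) else 0) (i : Fin n) :
    μ i ≤ n := by
  have h1 : ∑ x, ∑ y, v i x * (A x y * v i y) = μ i := by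
    simp_rw [← Finset.mul_sum]
    have : ∀ x, ∑ y, A x y * v i y = μ i * v i x := by
      intro x
      have := congrFun (hv i) x
      simpa [Matrix.mulVec, dotProduct] using this
    simp_rw [this]
    have e := h i i
    rw [if_pos rfl] at e
    calc _ = μ i * ∑ x, v i x * v i x := by
          rw [Finset.mul_sum]; exact Finset.sum_congr rfl fun x _ => by ring
      _ = _ := by rw [e, mul_one]
  have e := h i i
  rw [if_pos rfl] at e
  rw [← h1]
  calc _ ≤ ∑ x : Fin n, ∑ y : Fin n, (v i x * v i x + v i y * v i y) / 2 := by
        refine Finset.sum_le_sum fun x _ => Finset.sum_le_sum fun y _ => ?_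
        have a0 := hA0 x y
        have a1 := hA1 x y
        have : 0 ≤ A x y * (v i x - v i y) ^ 2 := mul_nonneg a0 (sq_nonneg _)
        nlinarith [mul_nonneg (sub_nonneg.2 a1) (add_nonneg (sq_nonneg (v i x)) (sq_nonneg (v i y)))]
    _ = n := by
        simp_rw [← Finset.sum_div, Finset.sum_add_distrib, e]
        simp only [Finset.sum_const, Finset.card_univ, Fintype.card_fin, nsmul_eq_mul, mul_one]
        rw [← Finset.mul_sum, e]; ring

lemma topS_pow {n : ℕ} (hn : 1 ≤ n) (A : Matrix (Fin n) (Fin n) ℝ)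
    (hA0 : ∀ x, A x x = 0) (hA1 : ∀ x y, A x y * A x y = A x y)
    (hAn : ∀ x y, 0 ≤ A x y) (hAu : ∀ x y, A x y ≤ 1)
    (μ : Fin n → ℝ) (v : Fin n → Fin n → ℝ) (hμ : Antitone μ)
    (hv : ∀ i, A.mulVec (v i) = μ i • v i)
    (h : ∀ i j : Fin n, (∑ k, v i k * v j k) = if i = j then (1 : ℝ) else 0)
    (c : ℝ) (hc0 : 0 < c) (hc1 : c < 1)
    (ht : ∀ i, -((n : ℝ) ^ (c / 2)) ≤ μ i) (r : ℕ) (hr : 1 ≤ r) :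
    topS μ r ≤ 2 * n * (r : ℝ) ^ c := by
  have hn0 : (0 : ℝ) < n := by exact_mod_cast hn
  set t := (n : ℝ) ^ (c / 2) with ht_def
  have ht0 : 0 ≤ t := Real.rpow_nonneg hn0.le _
  have ht2 : t ^ 2 = (n : ℝ) ^ c := by
    rw [ht_def, ← Real.rpow_natCast, ← Real.rpow_mul hn0.le]; congr 1; push_cast; ring
  have bound : ∀ q : ℕ, 2 * n * (q : ℝ) ^ c < topS μ q → (q : ℝ) ^ 2 ≤ n := by
    intro q hq
    have h1 := topS_le A hA0 μ v hv h t ht0 ht q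
    have h2 : (q : ℝ) ^ c ≤ t := by
      have h3 : 0 ≤ (q : ℝ) ^ c := Real.rpow_nonneg (Nat.cast_nonneg _) _
      have : (n : ℝ) * (q : ℝ) ^ c ≤ n * t := by nlinarith
      exact le_of_mul_le_mul_left this hn0
    have h4 : ((q : ℝ) ^ 2) ^ c ≤ (n : ℝ) ^ c := by
      rw [← ht2, ← Real.rpow_natCast, ← Real.rpow_mul (Nat.cast_nonneg _), mul_comm,
        Real.rpow_mul (Nat.cast_nonneg _), Real.rpow_natCast]
      exact pow_le_pow_left₀ (Real.rpow_nonneg (Nat.cast_nonneg _) _) h2 2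
    exact (Real.rpow_le_rpow_iff (by positivity) hn0.le hc0).1 h4
  have base : topS μ 1 ≤ n := by
    have : topS μ 1 = max (μ ⟨0, hn⟩) 0 := by
      unfold topS
      rw [Finset.sum_eq_single ⟨0, hn⟩]
      · simp
      · intro b _ hb
        rw [if_neg]
        intro hb'; apply hb; ext; simp; omega
      · simp
    rw [this]
    exact max_le (eig_le A hAn hAu μ v hv h _) hn0.le
  have step : ∀ q : ℕ, 1 ≤ q → 2 * n * (q : ℝ) ^ c < topS μ q →
      2 * n * ((q ^ 2 : ℕ) : ℝ) ^ c < topS μ (q ^ 2) := by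
    intro q hq1 hq
    have hb := bound q hq
    have hq0 : (0 : ℝ) < q := by exact_mod_cast hq1
    have hk := key_ineq_s5 A hA0 hA1 μ v hμ hv h t ht0 ht q
    have hQ : ((q ^ 2 : ℕ) : ℝ) ^ c = ((q : ℝ) ^ c) ^ 2 := by
      push_cast
      rw [← Real.rpow_natCast, ← Real.rpow_mul hq0.le, mul_comm, Real.rpow_mul hq0.le,
        Real.rpow_natCast]
    have herr : t ^ 2 * (q : ℝ) ^ 2 ≤ n * ((q : ℝ) ^ c) ^ 2 := by
      rw [ht2, ← hQ]
      push_cast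
      have hq2 : (0 : ℝ) < (q : ℝ) ^ 2 := by positivity
      have e1 : (q : ℝ) ^ 2 = ((q : ℝ) ^ 2) ^ c * ((q : ℝ) ^ 2) ^ (1 - c) := by
        rw [← Real.rpow_add hq2]; simp
      have e2 : (n : ℝ) = (n : ℝ) ^ c * (n : ℝ) ^ (1 - c) := by
        rw [← Real.rpow_add hn0]; simp
      have e3 : ((q : ℝ) ^ 2) ^ (1 - c) ≤ (n : ℝ) ^ (1 - c) :=
        Real.rpow_le_rpow hq2.le hb (by linarith)
      calc (n : ℝ) ^ c * (q : ℝ) ^ 2 = (n : ℝ) ^ c * (((q : ℝ) ^ 2) ^ c * ((q : ℝ) ^ 2) ^ (1 - c)) := by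
            rw [← e1]
        _ ≤ (n : ℝ) ^ c * (((q : ℝ) ^ 2) ^ c * (n : ℝ) ^ (1 - c)) := by gcongr
        _ = ((n : ℝ) ^ c * (n : ℝ) ^ (1 - c)) * ((q : ℝ) ^ 2) ^ c := by ring
        _ = _ := by rw [← e2]
    rw [hQ]
    set a := (q : ℝ) ^ c with ha
    have ha0 : 0 < a := Real.rpow_pos_of_pos hq0 _
    have h5 : (2 * n * a) ^ 2 < topS μ q ^ 2 := by
      apply pow_lt_pow_left₀ hq (by positivity) (by norm_num)
    have h6 : (n : ℝ) * (4 * n * a ^ 2) < n * (topS μ (q ^ 2) + t ^ 2 * (q : ℝ) ^ 2) := by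
      calc _ = (2 * n * a) ^ 2 := by ring
        _ < _ := h5.trans_le hk
    have h7 := lt_of_mul_lt_mul_left h6 hn0.le
    have h8 : 0 < n * a ^ 2 := by positivity
    nlinarith
  by_contra hcon
  push Not at hcon
  have iter : ∀ k : ℕ, ∃ q : ℕ, k + 2 ≤ q ∧ 2 * n * (q : ℝ) ^ c < topS μ q := by
    intro k
    induction k with
    | zero =>
      refine ⟨r, ?_, hcon⟩
      by_contra hr2
      have : r = 1 := by omega
      subst this
      simp at hcon
      linarith
    | succ k ih =>
      obtain ⟨q, hq, hq'⟩ := ih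
      exact ⟨q ^ 2, by nlinarith, step q (by omega) hq'⟩
  obtain ⟨q, hq, hq'⟩ := iter n
  have := bound q hq'
  have : q ^ 2 ≤ n := by exact_mod_cast this
  nlinarith

lemma eig_pow {n : ℕ} (μ : Fin n → ℝ) (hμ : Antitone μ) (i : Fin n) :
    ((i.val + 1 : ℕ) : ℝ) * max (μ i) 0 ≤ topS μ (i.val + 1) := by
  have : ∑ j : Fin n, (if j.val < i.val + 1 then max (μ i) 0 else 0) ≤ topS μ (i.val + 1) := by
    refine Finset.sum_le_sum fun j _ => ?_
    split_ifs with hj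
    · exact max_le_max (hμ (Fin.le_def.2 (by omega))) le_rfl
    · exact le_rfl
  refine le_trans (le_of_eq ?_) this
  rw [← Finset.sum_filter, Finset.sum_const, nsmul_eq_mul]
  congr 2
  rw [Fin.card_filter_val_lt]; have := i.2; omega

lemma sum_bound (s : ℝ) (hs : 0 < s) (n : ℕ) :
    ∑ i ∈ Finset.range n, ((i + 1 : ℕ) : ℝ) ^ (-(1 + s)) ≤ 1 + 1 / s := by
  have : ∀ m : ℕ, ∑ i ∈ Finset.range (m + 1), ((i + 1 : ℕ) : ℝ) ^ (-(1 + s))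
      ≤ 1 + 1 / s - ((m + 1 : ℕ) : ℝ) ^ (-s) / s := by
    intro m
    induction m with
    | zero => simp
    | succ m ih =>
      rw [Finset.sum_range_succ]
      set a : ℝ := ((m + 1 : ℕ) : ℝ) with ha
      have ha0 : 0 < a := by rw [ha]; positivity
      have hb : ((m + 1 + 1 : ℕ) : ℝ) = a + 1 := by rw [ha]; push_cast; ring
      rw [hb]
      have hb0 : 0 < a + 1 := by linarith
      have key : (a + 1) ^ (-s) * (1 + s / (a + 1)) ≤ a ^ (-s) := by
        have e : a ^ (-s) = (a + 1) ^ (-s) * (a / (a + 1)) ^ (-s) := by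
          rw [← Real.mul_rpow hb0.le (by positivity)]; congr 1; field_simp
        rw [e]
        refine mul_le_mul_of_nonneg_left ?_ (Real.rpow_nonneg hb0.le _)
        have hq : 0 < a / (a + 1) := by positivity
        rw [Real.rpow_def_of_pos hq]
        have h1 := Real.add_one_le_exp (Real.log (a / (a + 1)) * -s)
        have h2 := Real.log_le_sub_one_of_pos hq
        have h3 : a / (a + 1) - 1 = -(1 / (a + 1)) := by field_simp; ring
        rw [h3] at h2
        have h4 : s * (1 / (a + 1)) = s / (a + 1) := by ring
        nlinarith
      have e2 : (a + 1) ^ (-(1 + s)) = (a + 1) ^ (-s) / (a + 1) := by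
        rw [← Real.rpow_sub_one hb0.ne']; congr 1; ring
      rw [e2]
      have e3 : (a + 1) ^ (-s) / (a + 1) ≤ a ^ (-s) / s - (a + 1) ^ (-s) / s := by
        rw [← sub_div, le_div_iff₀ hs]
        have : (a + 1) ^ (-s) * (1 + s / (a + 1)) = (a + 1) ^ (-s) + (a + 1) ^ (-s) / (a + 1) * s := by
          ring
        linarith
      linarith
  cases n with
  | zero => simp only [Finset.range_zero, Finset.sum_empty]; positivity
  | succ m =>
    have h1 := this m
    have : 0 ≤ ((m + 1 : ℕ) : ℝ) ^ (-s) / s := by positivity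
    linarith

lemma interp (ε δ y q : ℝ) (hε : 0 < ε) (hε' : ε < 0.01) (hδ : 0 < δ) (hy : 0 ≤ y) (hq : 1 ≤ q)
    (h1 : y ≤ (ε * δ) ^ (1 / ε)) (h2 : y ≤ 2 * q ^ (-(1 / 2 + 2 * ε))) :
    y ^ 2 ≤ 4 * (ε * δ) ^ 2 * q ^ (-(1 + 2 * ε)) := by
  have hq0 : 0 < q := by linarith
  have e1 : y ^ 2 = y ^ (2 * ε) * y ^ (2 - 2 * ε) := by
    rw [← Real.rpow_add_of_nonneg hy (by linarith) (by linarith), ← Real.rpow_natCast]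
    congr 1; push_cast; ring
  have e2 : y ^ (2 * ε) ≤ (ε * δ) ^ 2 := by
    refine (Real.rpow_le_rpow hy h1 (by linarith)).trans (le_of_eq ?_)
    rw [← Real.rpow_mul (by positivity), ← Real.rpow_natCast]
    congr 1; field_simp; norm_num
  have e3 : y ^ (2 - 2 * ε) ≤ 4 * q ^ (-(1 + 2 * ε)) := by
    refine (Real.rpow_le_rpow hy h2 (by linarith)).trans ?_
    rw [Real.mul_rpow (by norm_num) (by positivity), ← Real.rpow_mul hq0.le]
    refine mul_le_mul ?_ ?_ (by positivity) (by norm_num)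
    · calc (2 : ℝ) ^ (2 - 2 * ε) ≤ (2 : ℝ) ^ (2 : ℝ) :=
            Real.rpow_le_rpow_of_exponent_le (by norm_num) (by linarith)
        _ = 4 := by norm_num
    · refine Real.rpow_le_rpow_of_exponent_le hq ?_
      nlinarith
  rw [e1]
  calc _ ≤ (ε * δ) ^ 2 * (4 * q ^ (-(1 + 2 * ε))) :=
        mul_le_mul e2 e3 (by positivity) (by positivity)
    _ = _ := by ring

-- If `λₙ ≥ -n ^ (1/4 - ε)`, then `∑_{i : λ_i ≤ (εδ)^(1/ε) n} λ_i ^ 2 ≤ δ n ^ 2`.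
theorem stmt5 (ε δ : ℝ) (hε : ε ∈ Set.Ioo (0 : ℝ) 0.01) (hδ : δ ∈ Set.Ioo (0 : ℝ) 0.01) :
    ∃ n₀ : ℕ, ∀ (n : ℕ) (hn : n₀ ≤ n) (hn1 : 1 ≤ n)
      (G : SimpleGraph (Fin n)) (μ : Fin n → ℝ) (v : Fin n → Fin n → ℝ),
      Antitone μ →
      (∀ i, (adjMat G).mulVec (v i) = μ i • v i) →
      (∀ i j : Fin n, (∑ k, v i k * v j k) = if i = j then (1 : ℝ) else 0) →
      -((n : ℝ) ^ ((1 : ℝ) / 4 - ε)) ≤ μ ⟨n - 1, by omega⟩ →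
      (∑ i ∈ Finset.univ.filter (fun i => μ i ≤ (ε * δ) ^ ((1 : ℝ) / ε) * (n : ℝ)), μ i ^ 2)
        ≤ δ * (n : ℝ) ^ 2 := by
  obtain ⟨hε0, hε1⟩ := hε
  obtain ⟨hδ0, hδ1⟩ := hδ
  refine ⟨⌈4 / δ ^ 2⌉₊, ?_⟩
  intro n hn hn1 G μ v hμ hv h hlow
  have hn0 : (0 : ℝ) < n := by exact_mod_cast hn1
  have hn1' : (1 : ℝ) ≤ n := by exact_mod_cast hn1
  have hnδ : 4 / δ ^ 2 ≤ n := (Nat.le_ceil _).trans (by exact_mod_cast hn)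
  set c : ℝ := 1 / 2 - 2 * ε with hc
  have hc2 : (1 : ℝ) / 4 - ε = c / 2 := by rw [hc]; ring
  rw [hc2] at hlow
  set t := (n : ℝ) ^ (c / 2) with ht_def
  have ht0 : 0 ≤ t := by positivity
  have ht : ∀ i, -t ≤ μ i := fun i => hlow.trans (hμ (by
    have := i.2
    simp only [Fin.le_def]; omega))
  have hS := topS_pow hn1 (adjMat G) (by simp [adjMat])
    (by intro x y; simp [adjMat]) (by intro x y; simp only [adjMat, Matrix.of_apply]; split_ifs <;> norm_num)
    (by intro x y; simp only [adjMat, Matrix.of_apply]; split_ifs <;> norm_num)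
    μ v hμ hv h c (by rw [hc]; linarith) (by rw [hc]; linarith) ht
  have hdec : ∀ i : Fin n, max (μ i) 0 / n ≤ 2 * ((i.val + 1 : ℕ) : ℝ) ^ (-(1 / 2 + 2 * ε)) := by
    intro i
    have h1 := (eig_pow μ hμ i).trans (hS (i.val + 1) (by omega))
    set q : ℝ := ((i.val + 1 : ℕ) : ℝ) with hq
    have hq0 : 0 < q := by rw [hq]; positivity
    have e : q ^ (-(1 / 2 + 2 * ε)) = q ^ c / q := by
      rw [← Real.rpow_sub_one hq0.ne']; congr 1; rw [hc]; ring
    rw [e, div_le_iff₀ hn0]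
    have : 2 * (q ^ c / q) * n = 2 * n * q ^ c / q := by ring
    rw [this, le_div_iff₀ hq0]
    linarith
  have hterm : ∀ i : Fin n, μ i ≤ (ε * δ) ^ ((1 : ℝ) / ε) * (n : ℝ) → μ i ^ 2 ≤
      (n : ℝ) ^ 2 * (4 * (ε * δ) ^ 2 * ((i.val + 1 : ℕ) : ℝ) ^ (-(1 + 2 * ε))) + t ^ 2 := by
    intro i hi
    have h1 : max (μ i) 0 / n ≤ (ε * δ) ^ (1 / ε) := by
      rw [div_le_iff₀ hn0]
      exact max_le hi (by positivity)
    have h2 := interp ε δ (max (μ i) 0 / n) ((i.val + 1 : ℕ) : ℝ) hε0 hε1 hδ0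
      (div_nonneg (le_max_right _ _) hn0.le) (by push_cast; linarith [(Nat.cast_nonneg i.val : (0:ℝ) ≤ _)])
      h1 (hdec i)
    have h3 : max (μ i) 0 ^ 2 ≤
        (n : ℝ) ^ 2 * (4 * (ε * δ) ^ 2 * ((i.val + 1 : ℕ) : ℝ) ^ (-(1 + 2 * ε))) := by
      rw [div_pow, div_le_iff₀ (by positivity)] at h2
      linarith
    have h4 : μ i ^ 2 ≤ max (μ i) 0 ^ 2 + t ^ 2 := by
      rcases le_total 0 (μ i) with h0 | h0
      · rw [max_eq_left h0]; linarith [sq_nonneg t]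
      · rw [max_eq_right h0]; nlinarith [ht i]
    linarith
  have hbnd : (∑ i ∈ Finset.univ.filter (fun i => μ i ≤ (ε * δ) ^ ((1 : ℝ) / ε) * (n : ℝ)), μ i ^ 2)
      ≤ ∑ i : Fin n, ((n : ℝ) ^ 2 * (4 * (ε * δ) ^ 2 * ((i.val + 1 : ℕ) : ℝ) ^ (-(1 + 2 * ε))) + t ^ 2) := by
    refine (Finset.sum_le_sum fun i hi => hterm i (Finset.mem_filter.1 hi).2).trans ?_
    refine Finset.sum_le_sum_of_subset_of_nonneg (Finset.subset_univ _) fun i _ _ => by positivity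
  refine hbnd.trans ?_
  rw [Finset.sum_add_distrib, ← Finset.mul_sum, ← Finset.mul_sum,
    Fin.sum_univ_eq_sum_range (fun i => ((i + 1 : ℕ) : ℝ) ^ (-(1 + 2 * ε)))]
  have hsb := sum_bound (2 * ε) (by linarith) n
  have h1 : (n : ℝ) ^ 2 * (4 * (ε * δ) ^ 2 * ∑ i ∈ Finset.range n, ((i + 1 : ℕ) : ℝ) ^ (-(1 + 2 * ε)))
      ≤ (n : ℝ) ^ 2 * (δ / 2) := by
    refine mul_le_mul_of_nonneg_left ?_ (by positivity)
    refine (mul_le_mul_of_nonneg_left hsb (by positivity)).trans ?_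
    have : 4 * (ε * δ) ^ 2 * (1 + 1 / (2 * ε)) = δ * (δ * (4 * ε ^ 2 + 2 * ε)) := by
      field_simp; ring
    rw [this]
    have h5 : 4 * ε ^ 2 + 2 * ε ≤ 1 := by nlinarith
    have h6 : δ * (4 * ε ^ 2 + 2 * ε) ≤ 1 / 2 := by nlinarith
    nlinarith
  have h2 : ∑ i : Fin n, t ^ 2 ≤ (n : ℝ) ^ 2 * (δ / 2) := by
    simp only [Finset.sum_const, Finset.card_univ, Fintype.card_fin, nsmul_eq_mul]
    have ht2 : t ^ 2 ≤ √n := by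
      rw [ht_def, ← Real.rpow_natCast, ← Real.rpow_mul hn0.le, Real.sqrt_eq_rpow]
      refine Real.rpow_le_rpow_of_exponent_le hn1' ?_
      rw [hc]; push_cast; linarith
    have hs : 2 / δ ≤ √n := by
      apply Real.le_sqrt_of_sq_le
      rw [div_pow]; norm_num; exact hnδ
    have hs2 : √(n : ℝ) * √n = n := Real.mul_self_sqrt hn0.le
    have hs3 : 2 ≤ √n * δ := by rwa [div_le_iff₀ hδ0] at hs
    have hs0 : 0 ≤ √(n : ℝ) := Real.sqrt_nonneg _
    have : √(n : ℝ) ≤ n * (δ / 2) := by nlinarith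
    calc (n : ℝ) * t ^ 2 ≤ n * (n * (δ / 2)) := by
          exact mul_le_mul_of_nonneg_left (ht2.trans this) hn0.le
      _ = _ := by ring
  linarith
end

section
/- For any ε > 0 there exists δ = δ(ε) > 0 such that the following holds for all γ > 0 and all n ≥ n₀(γ, ε): if G is a graph on n vertices whose adjacency eigenvalues satisfy ∑_{i : λ_i < γn} λ_i² ≤ δn², then at least one of the following holds: (1) G is ε-close to a disjoint union of cliques; (2) there is a constant c_{ε,γ} > 0, depending only on ε and γ, such that λ_n ≤ −c_{ε,γ} · n. -/
open Finset

section helpers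

open scoped Classical in
lemma pivot_exists {V : Type*} [Fintype V] (G : SimpleGraph V) (B : V → V → Prop)
    (hB : ∀ i j, B i j → B j i)
    (h : ∀ i j k, G.Adj i j → G.Adj j k → i ≠ k → ¬ G.Adj i k → B i j ∨ B j k ∨ B i k)
    (U : Finset V) (hU : U.Nonempty) :
    ∃ p ∈ U,
      (∑ x ∈ U, ∑ y ∈ U, (if (x ≠ y ∧ (((p = x ∨ G.Adj p x) ∧ (p = y ∨ G.Adj p y) ∧ ¬ G.Adj x y) ∨
        ((p = x ∨ G.Adj p x) ∧ ¬ (p = y ∨ G.Adj p y) ∧ G.Adj x y) ∨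
        (¬ (p = x ∨ G.Adj p x) ∧ (p = y ∨ G.Adj p y) ∧ G.Adj x y))) then 1 else 0 : ℕ)) ≤
      3 * ∑ x ∈ U, ∑ y ∈ U,
        (if (B x y ∧ ((p = x ∨ G.Adj p x) ∨ (p = y ∨ G.Adj p y))) then 1 else 0 : ℕ) := by
  let T : V → V → V → Prop := fun p x y =>
    p ≠ x ∧ p ≠ y ∧ x ≠ y ∧ ((G.Adj p x ∧ G.Adj p y ∧ ¬ G.Adj x y) ∨
      (G.Adj p x ∧ ¬ G.Adj p y ∧ G.Adj x y) ∨ (¬ G.Adj p x ∧ G.Adj p y ∧ G.Adj x y))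
  have hT1 : ∀ p x y, T p x y → T x p y := by
    intro p x y
    simp only [T]
    have := G.adj_comm p x
    have := G.adj_comm p y
    have := G.adj_comm x y
    grind
  have hT2 : ∀ p x y, T p x y → T y x p := by
    intro p x y
    simp only [T]
    have := G.adj_comm p x
    have := G.adj_comm p y
    have := G.adj_comm x y
    grind
  have hTB : ∀ p x y, T p x y → B x y ∨ B p y ∨ B x p := by
    intro p x y ht
    obtain ⟨h1, h2, h3, ⟨a, b, c⟩ | ⟨a, b, c⟩ | ⟨a, b, c⟩⟩ := ht
    · have := h x p y a.symm b h3 c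
      tauto
    · have := h p x y a c h2 b
      have := hB p x
      tauto
    · have := h p y x b c.symm h1 a
      have := hB p x
      have := hB y x
      tauto
  let f : V → V → V → ℕ := fun p x y => if T p x y ∧ B x y then 1 else 0
  have e1 : ∑ p ∈ U, ∑ x ∈ U, ∑ y ∈ U, f x p y = ∑ p ∈ U, ∑ x ∈ U, ∑ y ∈ U, f p x y :=
    Finset.sum_comm
  have e2 : ∑ p ∈ U, ∑ x ∈ U, ∑ y ∈ U, f y x p = ∑ p ∈ U, ∑ x ∈ U, ∑ y ∈ U, f p x y := by
    have a1 : ∑ p ∈ U, ∑ x ∈ U, ∑ y ∈ U, f y x p = ∑ p ∈ U, ∑ y ∈ U, ∑ x ∈ U, f y x p :=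
      Finset.sum_congr rfl fun p _ => Finset.sum_comm
    rw [a1, Finset.sum_comm]
    exact Finset.sum_congr rfl fun p _ => Finset.sum_comm
  by_contra! hcon
  have hlt := Finset.sum_lt_sum_of_nonempty hU hcon
  refine absurd hlt (not_lt.mpr ?_)
  calc _ ≤ ∑ p ∈ U, ∑ x ∈ U, ∑ y ∈ U, (f p x y + f x p y + f y x p) := by
        refine Finset.sum_le_sum fun p _ => Finset.sum_le_sum fun x _ => Finset.sum_le_sum fun y _ => ?_
        split_ifs with hc
        · have ht : T p x y := by
            simp only [T]
            have := G.adj_comm p x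
            have := G.adj_comm p y
            have := G.adj_comm x y
            grind
          have t1 := hT1 _ _ _ ht
          have t2 := hT2 _ _ _ ht
          rcases hTB _ _ _ ht with hb | hb | hb
          · have : f p x y = 1 := if_pos ⟨ht, hb⟩
            omega
          · have : f x p y = 1 := if_pos ⟨t1, hb⟩
            omega
          · have : f y x p = 1 := if_pos ⟨t2, hb⟩
            omega
        · exact Nat.zero_le _
    _ = 3 * ∑ p ∈ U, ∑ x ∈ U, ∑ y ∈ U, f p x y := by
        simp only [Finset.sum_add_distrib]
        rw [e1, e2]
        ring
    _ ≤ _ := by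
        rw [← Finset.mul_sum]
        refine Nat.mul_le_mul_left 3 ?_
        refine Finset.sum_le_sum fun p _ => Finset.sum_le_sum fun x _ => Finset.sum_le_sum fun y _ => ?_
        simp only [f]
        split_ifs with h1 h2
        · exact le_rfl
        · exfalso
          apply h2
          refine ⟨h1.2, ?_⟩
          have := h1.1
          simp only [T] at this
          tauto
        · exact Nat.zero_le _
        · exact le_rfl

open scoped Classical in
lemma cluster_exists {V : Type*} [Fintype V] (G : SimpleGraph V) (B : V → V → Prop)
    (hB : ∀ i j, B i j → B j i)
    (h : ∀ i j k, G.Adj i j → G.Adj j k → i ≠ k → ¬ G.Adj i k → B i j ∨ B j k ∨ B i k)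
    (U : Finset V) : ∃ f : V → V, (∀ x ∈ U, f x ∈ U) ∧
      (∑ x ∈ U, ∑ y ∈ U, (if x ≠ y ∧ ¬ (G.Adj x y ↔ f x = f y) then 1 else 0 : ℕ)) ≤
      3 * ∑ x ∈ U, ∑ y ∈ U, (if B x y then 1 else 0 : ℕ) := by
  induction U using Finset.strongInduction with
  | H U ih =>
  rcases U.eq_empty_or_nonempty with rfl | hU
  · exact ⟨id, by simp, by simp⟩
  obtain ⟨p, hp, hcost⟩ := pivot_exists G B hB h U hU
  let Q : V → Prop := fun x => p = x ∨ G.Adj p x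
  let W := U.filter (fun x => ¬ Q x)
  have hW : W ⊂ U := by
    refine Finset.filter_ssubset.2 ⟨p, hp, ?_⟩
    simp [Q]
  obtain ⟨f, hf, hfc⟩ := ih W hW
  have hWs : ∀ g : V → V → ℕ, ∑ x ∈ W, ∑ y ∈ W, g x y =
      ∑ x ∈ U, ∑ y ∈ U, (if ¬ Q x ∧ ¬ Q y then g x y else 0) := by
    intro g
    simp only [W, Finset.sum_filter]
    refine Finset.sum_congr rfl fun x _ => ?_
    by_cases hx : Q x <;> simp [hx]
  rw [hWs, hWs] at hfc
  refine ⟨fun x => if Q x then p else f x, ?_, ?_⟩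
  · intro x hx
    by_cases hq : Q x
    · simp [hq, hp]
    · simp only [hq, if_false]
      exact hW.1 (hf x (by simp [W, hx, hq]))
  · have hne : ∀ x ∈ U, ¬ Q x → f x ≠ p := by
      intro x hx hq he
      have := hf x (by simp [W, hx, hq])
      rw [he] at this
      simp [W, Q] at this
    have key := add_le_add hcost hfc
    rw [← Nat.mul_add] at key
    simp only [← Finset.sum_add_distrib] at key
    refine (le_trans ?_ key).trans (Nat.mul_le_mul_left 3 ?_)
    · refine Finset.sum_le_sum fun x hx => Finset.sum_le_sum fun y hy => ?_
      change _ ≤ (if (x ≠ y ∧ ((Q x ∧ Q y ∧ ¬ G.Adj x y) ∨ (Q x ∧ ¬ Q y ∧ G.Adj x y) ∨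
        (¬ Q x ∧ Q y ∧ G.Adj x y))) then 1 else 0) + _
      have h1 := hne x hx
      have h2 := hne y hy
      clear key hcost hfc hWs ih hf hne
      by_cases hxy : x = y
      · simp [hxy]
      by_cases qx : Q x
      · by_cases qy : Q y
        · by_cases ha : G.Adj x y <;> simp [qx, qy, ha, hxy]
        · have h3 := (h2 qy).symm
          by_cases ha : G.Adj x y <;> simp [qx, qy, ha, hxy, h3]
      · by_cases qy : Q y
        · have h3 := h1 qx
          by_cases ha : G.Adj x y <;> simp [qx, qy, ha, hxy, h3]
        · simp [qx, qy, hxy]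
    · refine Finset.sum_le_sum fun x hx => Finset.sum_le_sum fun y hy => ?_
      change (if B x y ∧ (Q x ∨ Q y) then 1 else 0) + _ ≤ _
      by_cases qx : Q x <;> by_cases qy : Q y <;> by_cases hb : B x y <;> simp [qx, qy, hb]

open scoped Classical in
lemma close_of_cover {n : ℕ} (ε : ℝ) (G : SimpleGraph (Fin n)) (B : Fin n → Fin n → Prop)
    (hB : ∀ i j, B i j → B j i)
    (h : ∀ i j k, G.Adj i j → G.Adj j k → i ≠ k → ¬ G.Adj i k → B i j ∨ B j k ∨ B i k)
    (hc : 3 * ∑ x, ∑ y, (if B x y then 1 else 0 : ℝ) ≤ ε * (n : ℝ) ^ 2) :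
    ∃ H : SimpleGraph (Fin n), IsUnionOfCliques H ∧ EpsClose ε G H := by
  obtain ⟨f, -, hf⟩ := cluster_exists G B hB h Finset.univ
  let H : SimpleGraph (Fin n) :=
    { Adj := fun x y => x ≠ y ∧ f x = f y
      symm := ⟨fun x y hxy => ⟨hxy.1.symm, hxy.2.symm⟩⟩
      loopless := ⟨fun x hx => hx.1 rfl⟩ }
  refine ⟨H, ?_, H, ⟨SimpleGraph.Iso.refl⟩, ?_⟩
  · intro u v huv hne
    refine ⟨hne, ?_⟩
    obtain ⟨w⟩ := huv
    induction w with
    | nil => rfl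
    | @cons a b c hab w ih =>
      by_cases hbc : b = c
      · subst hbc
        exact hab.2
      · exact hab.2.trans (ih hbc)
  · let P : Finset (Fin n × Fin n) := Finset.univ.filter
      (fun q => q.1 ≠ q.2 ∧ ¬ (G.Adj q.1 q.2 ↔ f q.1 = f q.2))
    have hsub : symmDiff G.edgeSet H.edgeSet ⊆ ((P.image (fun q => s(q.1, q.2)) : Finset _) : Set (Sym2 (Fin n))) := by
      intro e
      induction e using Sym2.ind with
      | _ x y =>
      intro he
      have : x ≠ y ∧ ¬ (G.Adj x y ↔ f x = f y) := by
        rw [Set.mem_symmDiff] at he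
        simp only [SimpleGraph.mem_edgeSet, H] at he
        have := fun hh : G.Adj x y => hh.ne
        tauto
      simp only [Finset.coe_image, Set.mem_image]
      exact ⟨(x, y), by simpa [P] using this, rfl⟩
    have h1 : (symmDiff G.edgeSet H.edgeSet).ncard ≤ P.card := by
      refine (Set.ncard_le_ncard hsub (Finset.finite_toSet _)).trans ?_
      rw [Set.ncard_coe_finset]
      exact Finset.card_image_le
    have h2 : P.card = ∑ x, ∑ y, (if x ≠ y ∧ ¬ (G.Adj x y ↔ f x = f y) then 1 else 0 : ℕ) := by
      rw [Finset.card_filter, ← Finset.univ_product_univ, Finset.sum_product]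
    have h3 : (symmDiff G.edgeSet H.edgeSet).ncard ≤
        3 * ∑ x, ∑ y, (if B x y then 1 else 0 : ℕ) := by
      refine (h1.trans_eq h2).trans ?_
      refine le_trans (le_of_eq ?_) hf
      refine Finset.sum_congr rfl fun x _ => Finset.sum_congr rfl fun y _ => ?_
      congr
    have h4 : ((symmDiff G.edgeSet H.edgeSet).ncard : ℝ) ≤
        ((3 * ∑ x, ∑ y, (if B x y then 1 else 0 : ℕ) : ℕ) : ℝ) := by exact_mod_cast h3
    refine h4.trans ?_
    push_cast
    exact hc

lemma pigeon {ι V : Type*} [Fintype ι] [DecidableEq ι] [DecidableEq V] (L : Finset ι) (D : ℕ)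
    (hL : L.card ≤ D) (w : ι → V → ℝ) (R η : ℝ) (hη : 0 < η)
    (hw : ∀ l ∈ L, ∀ i, |w l i| ≤ R) (K : ℕ) (hK : R / η + 1 ≤ K) (S : Finset V) :
    ∃ T ⊆ S, S.card ≤ (2 * K + 1) ^ D * T.card ∧
      ∀ i ∈ T, ∀ j ∈ T, ∀ l ∈ L, |w l i - w l j| ≤ η := by
  let g : V → ι → ℤ := fun i l => if l ∈ L then ⌊w l i / η⌋ else 0
  let C : Finset (ι → ℤ) := Fintype.piFinset
    (fun l => if l ∈ L then Finset.Icc (-(K : ℤ)) K else {0})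
  have hC : C.card ≤ (2 * K + 1) ^ D := by
    have : C.card = (2 * K + 1) ^ L.card := by
      simp only [C, Fintype.card_piFinset, apply_ite Finset.card, Int.card_Icc, Finset.card_singleton]
      rw [Finset.prod_ite]
      simp only [Finset.prod_const, one_pow, mul_one]
      congr 1
      · omega
      · congr 1
        ext
        simp
    rw [this]
    exact Nat.pow_le_pow_right (by omega) hL
  have hmap : ∀ i ∈ S, g i ∈ C := by
    intro i _
    simp only [C, Fintype.mem_piFinset, g]
    intro l
    split_ifs with hl
    · have := abs_le.1 (hw l hl i)
      have a1 : w l i / η ≤ R / η := by gcongr; exact this.2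
      have a2 : -(R / η) ≤ w l i / η := by
        rw [← neg_div]
        gcongr
        exact this.1
      have b1 := Int.floor_le (w l i / η)
      have b2 := Int.lt_floor_add_one (w l i / η)
      rw [Finset.mem_Icc]
      constructor
      · have : ((-(K : ℤ) : ℤ) : ℝ) ≤ (⌊w l i / η⌋ : ℤ) := by
          push_cast
          linarith
        exact_mod_cast this
      · have : ((⌊w l i / η⌋ : ℤ) : ℝ) ≤ ((K : ℤ) : ℝ) := by
          push_cast
          linarith
        exact_mod_cast this
    · simp
  by_contra! hcon
  have hsum := Finset.card_eq_sum_card_fiberwise (f := g) (s := S) (t := C) hmap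
  have hfib : ∀ b ∈ C, ((2 * K + 1) ^ D) * (S.filter (fun i => g i = b)).card + 1 ≤ S.card := by
    intro b _
    by_contra! hlt
    obtain ⟨i, hi, j, hj, l, hl, hbig⟩ :=
      hcon (S.filter (fun i => g i = b)) (Finset.filter_subset _ _) (by omega)
    have hij : g i l = g j l := by
      rw [(Finset.mem_filter.1 hi).2, (Finset.mem_filter.1 hj).2]
    simp only [g, hl, if_true] at hij
    have := Int.abs_sub_lt_one_of_floor_eq_floor hij
    rw [← sub_div, abs_div, abs_of_pos hη, div_lt_one hη] at this
    linarith
  have hM : 0 < (2 * K + 1) ^ D := by positivity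
  have hS : 0 < S.card := by
    by_contra hh
    have h0 : S.card = 0 := by omega
    obtain ⟨i, hi, -⟩ := hcon S (Finset.Subset.refl _) (by omega)
    rw [Finset.card_eq_zero] at h0
    simp [h0] at hi
  have h2 : (2 * K + 1) ^ D * S.card + C.card ≤ C.card * S.card := by
    have := Finset.sum_le_sum hfib
    rw [Finset.sum_add_distrib, ← Finset.mul_sum, ← hsum] at this
    simpa using this
  have h3 : C.card * S.card ≤ (2 * K + 1) ^ D * S.card := Nat.mul_le_mul_right _ hC
  have h4 : C.card = 0 := by omega
  rw [h4] at h2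
  have : 0 < (2 * K + 1) ^ D * S.card := Nat.mul_pos hM hS
  omega

lemma complete_of_orth {n : ℕ} (v : Fin n → Fin n → ℝ)
    (ho : ∀ i j : Fin n, (∑ k, v i k * v j k) = if i = j then (1 : ℝ) else 0) (i j : Fin n) :
    ∑ l, v l i * v l j = if i = j then (1 : ℝ) else 0 := by
  let M : Matrix (Fin n) (Fin n) ℝ := Matrix.of v
  have h1 : M * M.transpose = 1 := by
    ext i j
    simp [M, Matrix.mul_apply, Matrix.one_apply, ho]
  have h2 : M.transpose * M = 1 := mul_eq_one_comm.1 h1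
  have h3 := congrFun (congrFun h2 i) j
  simpa [M, Matrix.mul_apply, Matrix.one_apply] using h3

lemma frob_sum {n : ℕ} (μ : Fin n → ℝ) (v : Fin n → Fin n → ℝ)
    (ho : ∀ i j : Fin n, (∑ k, v i k * v j k) = if i = j then (1 : ℝ) else 0)
    (L : Finset (Fin n)) :
    ∑ i, ∑ j, (∑ l ∈ L, μ l * v l i * v l j) ^ 2 = ∑ l ∈ L, μ l ^ 2 := by
  have h1 : ∀ i j, (∑ l ∈ L, μ l * v l i * v l j) ^ 2 =
      ∑ l ∈ L, ∑ m ∈ L, μ l * μ m * ((v l i * v m i) * (v l j * v m j)) := by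
    intro i j
    rw [sq, Finset.sum_mul_sum]
    exact Finset.sum_congr rfl fun l _ => Finset.sum_congr rfl fun m _ => by ring
  simp only [h1]
  have h2 : ∑ i, ∑ j, ∑ l ∈ L, ∑ m ∈ L, μ l * μ m * ((v l i * v m i) * (v l j * v m j)) =
      ∑ l ∈ L, ∑ m ∈ L, ∑ i, ∑ j, μ l * μ m * ((v l i * v m i) * (v l j * v m j)) := by
    rw [Finset.sum_congr rfl fun i _ => Finset.sum_comm, Finset.sum_comm]
    refine Finset.sum_congr rfl fun l _ => ?_
    rw [Finset.sum_congr rfl fun i _ => Finset.sum_comm, Finset.sum_comm]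
  rw [h2]
  refine Finset.sum_congr rfl fun l hl => ?_
  have h3 : ∀ m ∈ L, ∑ i, ∑ j, μ l * μ m * ((v l i * v m i) * (v l j * v m j)) =
      if l = m then μ l ^ 2 else 0 := by
    intro m _
    simp only [← Finset.mul_sum]
    rw [← Finset.sum_mul, ho]
    split_ifs with h
    · subst h
      ring
    · ring
  rw [Finset.sum_congr rfl h3]
  simp [hl]

lemma quad_sum {n : ℕ} (μ : Fin n → ℝ) (v : Fin n → Fin n → ℝ)
    (L S : Finset (Fin n)) :
    ∑ i ∈ S, ∑ j ∈ S, ∑ l ∈ L, μ l * v l i * v l j = ∑ l ∈ L, μ l * (∑ i ∈ S, v l i) ^ 2 := by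
  rw [Finset.sum_congr rfl fun i _ => Finset.sum_comm, Finset.sum_comm]
  refine Finset.sum_congr rfl fun l _ => ?_
  rw [sq, Finset.sum_mul_sum, Finset.mul_sum]
  refine Finset.sum_congr rfl fun i _ => ?_
  rw [Finset.mul_sum]
  exact Finset.sum_congr rfl fun j _ => by ring

lemma parseval_sum {n : ℕ} (v : Fin n → Fin n → ℝ)
    (ho : ∀ i j : Fin n, (∑ k, v i k * v j k) = if i = j then (1 : ℝ) else 0)
    (S : Finset (Fin n)) : ∑ l, (∑ i ∈ S, v l i) ^ 2 = S.card := by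
  have h := quad_sum (fun _ => 1) v Finset.univ S
  simp only [one_mul] at h
  rw [← h]
  simp only [complete_of_orth v ho]
  simp

lemma spec_decomp {n : ℕ} (G : SimpleGraph (Fin n)) (μ : Fin n → ℝ) (v : Fin n → Fin n → ℝ)
    (hv : ∀ i, (adjMat G).mulVec (v i) = μ i • v i)
    (ho : ∀ i j : Fin n, (∑ k, v i k * v j k) = if i = j then (1 : ℝ) else 0) (i j : Fin n) :
    adjMat G i j = ∑ l, μ l * v l i * v l j := by
  have h1 : ∀ l, μ l * v l i = ∑ k, adjMat G i k * v l k := by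
    intro l
    have := congrFun (hv l) i
    simp only [Matrix.mulVec, dotProduct, Pi.smul_apply, smul_eq_mul] at this
    exact this.symm
  simp only [h1, Finset.sum_mul, mul_assoc]
  rw [Finset.sum_comm]
  simp only [← Finset.mul_sum, complete_of_orth v ho]
  simp

lemma adjMat_nonneg {n : ℕ} (G : SimpleGraph (Fin n)) (i j : Fin n) : 0 ≤ adjMat G i j := by
  simp only [adjMat, Matrix.of_apply]
  split_ifs <;> norm_num

lemma adjMat_le_one {n : ℕ} (G : SimpleGraph (Fin n)) (i j : Fin n) : adjMat G i j ≤ 1 := by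
  simp only [adjMat, Matrix.of_apply]
  split_ifs <;> norm_num

lemma adjMat_sq_le_one {n : ℕ} (G : SimpleGraph (Fin n)) (i j : Fin n) : adjMat G i j ^ 2 ≤ 1 := by
  simp only [adjMat, Matrix.of_apply]
  split_ifs <;> norm_num

lemma entry_bound {n : ℕ} (G : SimpleGraph (Fin n)) (μ : Fin n → ℝ) (v : Fin n → Fin n → ℝ)
    (hv : ∀ i, (adjMat G).mulVec (v i) = μ i • v i)
    (ho : ∀ i j : Fin n, (∑ k, v i k * v j k) = if i = j then (1 : ℝ) else 0) (l i : Fin n) :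
    (μ l * v l i) ^ 2 ≤ n := by
  have h1 : μ l * v l i = ∑ k, adjMat G i k * v l k := by
    have := congrFun (hv l) i
    simp only [Matrix.mulVec, dotProduct, Pi.smul_apply, smul_eq_mul] at this
    exact this.symm
  rw [h1]
  refine (Finset.sum_mul_sq_le_sq_mul_sq _ _ _).trans ?_
  have h2 : ∑ k, v l k ^ 2 = 1 := by
    have := ho l l
    simpa [sq] using this
  rw [h2, mul_one]
  calc _ ≤ ∑ k : Fin n, (1 : ℝ) := Finset.sum_le_sum fun k _ => adjMat_sq_le_one G i k
    _ = n := by simp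

lemma eig_sq_sum {n : ℕ} (G : SimpleGraph (Fin n)) (μ : Fin n → ℝ) (v : Fin n → Fin n → ℝ)
    (hv : ∀ i, (adjMat G).mulVec (v i) = μ i • v i)
    (ho : ∀ i j : Fin n, (∑ k, v i k * v j k) = if i = j then (1 : ℝ) else 0) :
    ∑ l, μ l ^ 2 ≤ (n : ℝ) ^ 2 := by
  rw [← frob_sum μ v ho]
  simp only [← spec_decomp G μ v hv ho]
  calc _ ≤ ∑ k : Fin n, ∑ k : Fin n, (1 : ℝ) :=
        Finset.sum_le_sum fun i _ => Finset.sum_le_sum fun k _ => adjMat_sq_le_one G i k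
    _ = _ := by
      simp
      ring

/-- Few vertices have a large diagonal entry in the positive part. -/
lemma bad_card {n : ℕ} (hn : 1 ≤ n) (G : SimpleGraph (Fin n)) (μ : Fin n → ℝ)
    (v : Fin n → Fin n → ℝ)
    (hv : ∀ i, (adjMat G).mulVec (v i) = μ i • v i)
    (ho : ∀ i j : Fin n, (∑ k, v i k * v j k) = if i = j then (1 : ℝ) else 0)
    (γ ξ η c : ℝ) (hγ : 0 < γ) (hη : 0 < η) (D K : ℕ) (hD : 1 / γ ^ 2 ≤ D)
    (hDη : D * η ^ 2 ≤ 1 / 10) (hK : (1 / γ + 1) / η + 1 ≤ K)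
    (hc0 : 0 < c) (hc : c * (2 * K + 1) ^ D ≤ ξ / 20)
    (hμ : ∀ l, -(c * n) ≤ μ l) (L : Finset (Fin n)) (hL : ∀ l ∈ L, γ * n ≤ μ l)
    (S : Finset (Fin n)) (hS : ∀ i ∈ S, 1 + 1 / 10 < ∑ l ∈ L, μ l * v l i * v l i) :
    (S.card : ℝ) ≤ ξ * n := by
  have hn0 : (0 : ℝ) < n := by exact_mod_cast hn
  have hpos : ∀ l ∈ L, 0 < μ l := fun l hl => lt_of_lt_of_le (by positivity) (hL l hl)
  have hLD : L.card ≤ D := by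
    have h1 : (L.card : ℝ) * (γ * n) ^ 2 ≤ (n : ℝ) ^ 2 := by
      calc (L.card : ℝ) * (γ * n) ^ 2 = ∑ l ∈ L, (γ * n) ^ 2 := by simp
        _ ≤ ∑ l ∈ L, μ l ^ 2 := Finset.sum_le_sum fun l hl => by
            have := hL l hl
            gcongr
        _ ≤ ∑ l, μ l ^ 2 := Finset.sum_le_sum_of_subset_of_nonneg (Finset.subset_univ _)
            (fun _ _ _ => sq_nonneg _)
        _ ≤ _ := eig_sq_sum G μ v hv ho
    have h2 : (L.card : ℝ) ≤ 1 / γ ^ 2 := by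
      rw [le_div_iff₀ (by positivity)]
      have : ((L.card : ℝ) * γ ^ 2) * (n : ℝ) ^ 2 ≤ 1 * (n : ℝ) ^ 2 := by linarith
      exact le_of_mul_le_mul_right this (by positivity)
    exact_mod_cast h2.trans hD
  have hw : ∀ l ∈ L, ∀ i, |Real.sqrt (μ l) * v l i| ≤ 1 / γ + 1 := by
    intro l hl i
    have h0 := hpos l hl
    have h1 := entry_bound G μ v hv ho l i
    have h2 : (Real.sqrt (μ l) * v l i) ^ 2 ≤ 1 / γ := by
      rw [mul_pow, Real.sq_sqrt h0.le, le_div_iff₀ hγ]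
      have h3 : (μ l * v l i ^ 2 * γ) * n ≤ 1 * n := by
        have : μ l * v l i ^ 2 * (γ * n) ≤ μ l * v l i ^ 2 * μ l :=
          mul_le_mul_of_nonneg_left (hL l hl) (by positivity)
        nlinarith
      exact le_of_mul_le_mul_right h3 hn0
    have h3 : 0 < 1 / γ := by positivity
    apply abs_le_of_sq_le_sq _ (by positivity)
    nlinarith
  obtain ⟨T, hTS, hcard, hT⟩ := pigeon L D hLD (fun l i => Real.sqrt (μ l) * v l i) _ η hη hw K hK S
  have hF : ∀ i ∈ T, ∀ j ∈ T, 1 + 1 / 20 ≤ ∑ l ∈ L, μ l * v l i * v l j := by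
    intro i hi j hj
    have h1 := hS i (hTS hi)
    have h2 := hS j (hTS hj)
    have h3 : ∑ l ∈ L, μ l * (v l i - v l j) ^ 2 ≤ 1 / 10 := by
      calc _ ≤ ∑ l ∈ L, η ^ 2 := by
            refine Finset.sum_le_sum fun l hl => ?_
            have h4 := hT i hi j hj l hl
            have h5 := sq_le_sq' (abs_le.1 h4).1 (abs_le.1 h4).2
            have h6 := Real.sq_sqrt (hpos l hl).le
            calc μ l * (v l i - v l j) ^ 2 = (√(μ l) * v l i - √(μ l) * v l j) ^ 2 := by
                  rw [← mul_sub, mul_pow, h6]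
              _ ≤ η ^ 2 := h5
        _ = L.card * η ^ 2 := by simp
        _ ≤ D * η ^ 2 := by gcongr
        _ ≤ _ := hDη
    have h4 : ∑ l ∈ L, μ l * (v l i - v l j) ^ 2 = ∑ l ∈ L, μ l * v l i * v l i +
        ∑ l ∈ L, μ l * v l j * v l j - 2 * ∑ l ∈ L, μ l * v l i * v l j := by
      rw [Finset.mul_sum, ← Finset.sum_add_distrib, ← Finset.sum_sub_distrib]
      exact Finset.sum_congr rfl fun l _ => by ring
    linarith
  have hlow : (1 + 1 / 20) * (T.card : ℝ) ^ 2 ≤ ∑ l ∈ L, μ l * (∑ i ∈ T, v l i) ^ 2 := by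
    rw [← quad_sum]
    calc (1 + 1 / 20) * (T.card : ℝ) ^ 2 = ∑ i ∈ T, ∑ j ∈ T, (1 + 1 / 20 : ℝ) := by
          simp only [Finset.sum_const, nsmul_eq_mul]
          ring
      _ ≤ _ := Finset.sum_le_sum fun i hi => Finset.sum_le_sum fun j hj => hF i hi j hj
  have hall : ∑ l, μ l * (∑ i ∈ T, v l i) ^ 2 ≤ (T.card : ℝ) ^ 2 := by
    rw [← quad_sum]
    simp only [← spec_decomp G μ v hv ho]
    calc _ ≤ ∑ i ∈ T, ∑ j ∈ T, (1 : ℝ) :=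
          Finset.sum_le_sum fun i hi => Finset.sum_le_sum fun j hj => adjMat_le_one G i j
      _ = _ := by
          simp only [Finset.sum_const, nsmul_eq_mul]
          ring
  have hcompl : -(c * n) * T.card ≤ ∑ l ∈ Lᶜ, μ l * (∑ i ∈ T, v l i) ^ 2 := by
    have hp := parseval_sum v ho T
    have h1 : ∑ l ∈ Lᶜ, (∑ i ∈ T, v l i) ^ 2 ≤ T.card := by
      rw [← hp]
      exact Finset.sum_le_sum_of_subset_of_nonneg (Finset.subset_univ _)
            (fun _ _ _ => sq_nonneg _)
    calc -(c * n) * T.card ≤ -(c * n) * ∑ l ∈ Lᶜ, (∑ i ∈ T, v l i) ^ 2 := by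
          have : 0 < c * n := by positivity
          nlinarith
      _ = ∑ l ∈ Lᶜ, -(c * n) * (∑ i ∈ T, v l i) ^ 2 := by rw [Finset.mul_sum]
      _ ≤ _ := Finset.sum_le_sum fun l _ => mul_le_mul_of_nonneg_right (hμ l) (sq_nonneg _)
  have hsplit := Finset.sum_add_sum_compl L (fun l => μ l * (∑ i ∈ T, v l i) ^ 2)
  have hfin : (T.card : ℝ) ≤ 20 * (c * n) := by
    rcases Nat.eq_zero_or_pos T.card with h0 | h0
    · rw [h0]
      push_cast
      positivity
    · have h0' : (0 : ℝ) < T.card := by exact_mod_cast h0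
      have : (T.card : ℝ) * T.card ≤ (20 * (c * n)) * T.card := by nlinarith
      exact le_of_mul_le_mul_right this h0'
  have hcard' : (S.card : ℝ) ≤ (2 * K + 1) ^ D * T.card := by exact_mod_cast hcard
  calc (S.card : ℝ) ≤ (2 * K + 1) ^ D * T.card := hcard'
    _ ≤ (2 * K + 1) ^ D * (20 * (c * n)) := by gcongr
    _ = 20 * (c * (2 * K + 1) ^ D) * n := by ring
    _ ≤ 20 * (ξ / 20) * n := by gcongr
    _ = ξ * n := by ring

end helpers

theorem stmt6 (ε : ℝ) (hε : 0 < ε) :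
    ∃ δ : ℝ, 0 < δ ∧
      ∀ γ : ℝ, 0 < γ →
        ∃ c : ℝ, 0 < c ∧
          ∃ n₀ : ℕ, ∀ (n : ℕ) (hn : n₀ ≤ n) (hn1 : 1 ≤ n)
            (G : SimpleGraph (Fin n)) (μ : Fin n → ℝ) (v : Fin n → Fin n → ℝ),
            Antitone μ →
            (∀ i, (adjMat G).mulVec (v i) = μ i • v i) →
            (∀ i j : Fin n, (∑ k, v i k * v j k) = if i = j then (1 : ℝ) else 0) →
            (∑ i ∈ Finset.univ.filter (fun i => μ i < γ * (n : ℝ)), μ i ^ 2) ≤ δ * (n : ℝ) ^ 2 →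
            (∃ H : SimpleGraph (Fin n), IsUnionOfCliques H ∧ EpsClose ε G H) ∨
              μ ⟨n - 1, by omega⟩ ≤ -(c * (n : ℝ)) := by
  classical
  refine ⟨ε / 1000, by positivity, fun γ hγ => ?_⟩
  obtain ⟨D, hD⟩ := exists_nat_ge (1 / γ ^ 2)
  set η : ℝ := 1 / (10 * (D + 1)) with hηdef
  have hη : 0 < η := by positivity
  have hDη : (D : ℝ) * η ^ 2 ≤ 1 / 10 := by
    have hD0 : (0 : ℝ) ≤ D := Nat.cast_nonneg D
    rw [hηdef, div_pow, one_pow, mul_one_div, div_le_div_iff₀ (by positivity) (by positivity)]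
    nlinarith
  obtain ⟨K, hK⟩ := exists_nat_ge ((1 / γ + 1) / η + 1)
  have hM : (0 : ℝ) < (2 * (K : ℝ) + 1) ^ D := by positivity
  refine ⟨(ε / 20) / 20 / (2 * (K : ℝ) + 1) ^ D, by positivity, 0, ?_⟩
  set c : ℝ := (ε / 20) / 20 / (2 * (K : ℝ) + 1) ^ D with hcdef
  have hc0 : 0 < c := by positivity
  have hc : c * (2 * (K : ℝ) + 1) ^ D ≤ (ε / 20) / 20 := by
    rw [hcdef, div_mul_cancel₀ _ hM.ne']
  intro n _ hn1 G μ v hanti hv ho hsmall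
  by_cases hlast : μ ⟨n - 1, by omega⟩ ≤ -(c * (n : ℝ))
  · exact Or.inr hlast
  left
  have hμ : ∀ l, -(c * n) ≤ μ l := by
    intro l
    refine (not_le.1 hlast).le.trans (hanti ?_)
    rw [Fin.le_def]
    have := l.2
    simp only
    omega
  let L : Finset (Fin n) := Finset.univ.filter (fun l => ¬ μ l < γ * (n : ℝ))
  let L' : Finset (Fin n) := Finset.univ.filter (fun l => μ l < γ * (n : ℝ))
  let F : Fin n → Fin n → ℝ := fun i j => ∑ l ∈ L, μ l * v l i * v l j
  let E : Fin n → Fin n → ℝ := fun i j => ∑ l ∈ L', μ l * v l i * v l j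
  have hL : ∀ l ∈ L, γ * n ≤ μ l := by
    intro l hl
    simpa [L] using hl
  have hAFE : ∀ i j, adjMat G i j = E i j + F i j := by
    intro i j
    rw [spec_decomp G μ v hv ho]
    exact (Finset.sum_filter_add_sum_filter_not _ _ _).symm
  have hEs : ∀ i j, E i j = E j i := fun i j => Finset.sum_congr rfl fun l _ => by ring
  have hE2 : ∑ i, ∑ j, E i j ^ 2 ≤ ε / 1000 * (n : ℝ) ^ 2 := by
    have := frob_sum μ v ho L'
    simp only [E]
    rw [this]
    exact hsmall
  let S : Finset (Fin n) := Finset.univ.filter (fun i => 1 + 1 / 10 < F i i)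
  have hS : (S.card : ℝ) ≤ ε / 20 * n :=
    bad_card hn1 G μ v hv ho γ (ε / 20) η c hγ hη D K hD hDη hK hc0 hc hμ L hL S
      (fun i hi => (Finset.mem_filter.1 hi).2)
  have hpsd : ∀ i j k, 0 ≤ F i i + F j j + F k k - 2 * F i j - 2 * F j k + 2 * F i k := by
    intro i j k
    have : F i i + F j j + F k k - 2 * F i j - 2 * F j k + 2 * F i k =
        ∑ l ∈ L, μ l * (v l i - v l j + v l k) ^ 2 := by
      simp only [F, Finset.mul_sum, ← Finset.sum_add_distrib, ← Finset.sum_sub_distrib]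
      exact Finset.sum_congr rfl fun l _ => by ring
    rw [this]
    refine Finset.sum_nonneg fun l hl => mul_nonneg ?_ (sq_nonneg _)
    exact le_trans (by positivity) (hL l hl)
  let B : Fin n → Fin n → Prop := fun i j => 1 / 10 < |E i j| ∨ i ∈ S ∨ j ∈ S
  refine close_of_cover ε G B ?_ ?_ ?_
  · intro i j hb
    simp only [B] at hb ⊢
    rw [hEs j i]
    tauto
  · intro i j k hij hjk hik hnik
    by_contra hcon
    simp only [B, not_or, not_lt] at hcon
    obtain ⟨⟨e1, s1, s2⟩, ⟨e2, -, s3⟩, ⟨e3, -, -⟩⟩ := hcon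
    have a1 : adjMat G i j = 1 := by simp [adjMat, hij]
    have a2 : adjMat G j k = 1 := by simp [adjMat, hjk]
    have a3 : adjMat G i k = 0 := by simp [adjMat, hnik]
    rw [hAFE] at a1 a2 a3
    simp only [S, Finset.mem_filter, Finset.mem_univ, true_and, not_lt] at s1 s2 s3
    have := hpsd i j k
    have e1 := abs_le.1 e1
    have e2 := abs_le.1 e2
    have e3 := abs_le.1 e3
    linarith [e1.1, e1.2, e2.1, e2.2, e3.1, e3.2]
  · have hbound : ∀ x y, (if B x y then 1 else 0 : ℝ) ≤
        100 * E x y ^ 2 + (if x ∈ S then 1 else 0) + (if y ∈ S then 1 else 0) := by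
      intro x y
      have h0 : (0 : ℝ) ≤ if x ∈ S then 1 else 0 := by split_ifs <;> norm_num
      have h1 : (0 : ℝ) ≤ if y ∈ S then 1 else 0 := by split_ifs <;> norm_num
      have h2 := sq_nonneg (E x y)
      by_cases hb : B x y
      · rw [if_pos hb]
        rcases hb with hb | hb | hb
        · have : 1 ≤ 100 * E x y ^ 2 := by
            rw [← sq_abs]
            nlinarith
          linarith
        · rw [if_pos hb]
          linarith
        · rw [if_pos hb]
          linarith
      · rw [if_neg hb]
        linarith
    have htot : ∑ x, ∑ y, (if B x y then 1 else 0 : ℝ) ≤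
        100 * ∑ i, ∑ j, E i j ^ 2 + 2 * (n * S.card) := by
      calc _ ≤ ∑ x, ∑ y, (100 * E x y ^ 2 + (if x ∈ S then 1 else 0) +
            (if y ∈ S then 1 else 0)) :=
            Finset.sum_le_sum fun x _ => Finset.sum_le_sum fun y _ => hbound x y
        _ = _ := by
            simp only [Finset.sum_add_distrib, ← Finset.mul_sum]
            simp
            ring
    have hnn : (0 : ℝ) ≤ n := Nat.cast_nonneg n
    have h5 : (n : ℝ) * S.card ≤ n * (ε / 20 * n) := mul_le_mul_of_nonneg_left hS hnn
    have h6 : 0 ≤ ε * (n : ℝ) ^ 2 := by positivity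
    have hfin : 3 * ∑ x, ∑ y, (if B x y then 1 else 0 : ℝ) ≤ ε * (n : ℝ) ^ 2 := by
      have h7 : (n : ℝ) * (ε / 20 * n) = ε / 20 * (n : ℝ) ^ 2 := by ring
      rw [h7] at h5
      linarith
    refine le_trans (le_of_eq ?_) hfin
    refine congrArg (fun t => 3 * t) ?_
    refine Finset.sum_congr rfl fun x _ => Finset.sum_congr rfl fun y _ => ?_
    congr
end

section
/- Set c = 1/99. There exists n₀ such that for all n ≥ n₀ the following holds: if G is a graph on n vertices with sp*(G) ≤ (1/2) n^(1+c), then for every threshold T ≥ n^(1−2c), the quantity S_T = ∑_{i : λ_i ≥ T} λ_i satisfies S_T² ≤ 250 n · S_{T²/(8n)}. -/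
-- `sp*(G)`: the SDP relaxation of the surplus.
noncomputable def spStar {V : Type*} [Fintype V] (G : SimpleGraph V) : ℝ :=
  sSup {x : ℝ | ∃ M : Matrix V V ℝ, M.PosSemidef ∧ (∀ i, M i i ≤ 1) ∧
    x = (1 / 2) * ∑ i, ∑ j, (-(adjMat G)) i j * M i j}

/-- The matrix `∑ w_i v_i v_iᵀ`. -/
noncomputable def specW {n : ℕ} (v : Fin n → Fin n → ℝ) (w : Fin n → ℝ) (x y : Fin n) : ℝ :=
  ∑ i, w i * v i x * v i y

theorem specW_symm {n : ℕ} (v : Fin n → Fin n → ℝ) (w : Fin n → ℝ) (x y : Fin n) :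
    specW v w x y = specW v w y x := by
  unfold specW
  exact Finset.sum_congr rfl fun i _ => by ring

theorem orth_cols {n : ℕ} (v : Fin n → Fin n → ℝ)
    (ho : ∀ i j : Fin n, (∑ k, v i k * v j k) = if i = j then (1 : ℝ) else 0) (x y : Fin n) :
    (∑ i, v i x * v i y) = if x = y then (1 : ℝ) else 0 := by
  have h : (Matrix.of v) * (Matrix.of v).transpose = 1 := by
    ext i j
    simp [Matrix.mul_apply, ho, Matrix.one_apply]
  have h2 := mul_eq_one_comm.mp h
  have h3 := congrFun (congrFun h2 x) y
  simpa [Matrix.mul_apply, Matrix.one_apply] using h3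

theorem spec_eq {n : ℕ} (A : Matrix (Fin n) (Fin n) ℝ) (μ : Fin n → ℝ) (v : Fin n → Fin n → ℝ)
    (ho : ∀ i j : Fin n, (∑ k, v i k * v j k) = if i = j then (1 : ℝ) else 0)
    (he : ∀ i, A.mulVec (v i) = μ i • v i) (x y : Fin n) : A x y = specW v μ x y := by
  have hc := orth_cols v ho
  have h1 : ∀ i, ∑ z, A x z * v i z = μ i * v i x := fun i => by
    have := congrFun (he i) x
    simpa [Matrix.mulVec, dotProduct] using this
  calc A x y = ∑ z, A x z * (∑ i, v i z * v i y) := by simp [hc]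
    _ = ∑ i, (∑ z, A x z * v i z) * v i y := by
        simp_rw [Finset.mul_sum, Finset.sum_mul]
        rw [Finset.sum_comm]
        exact Finset.sum_congr rfl fun i _ => Finset.sum_congr rfl fun z _ => by ring
    _ = specW v μ x y := by
        unfold specW
        exact Finset.sum_congr rfl fun i _ => by rw [h1]

theorem schur_nonneg {n : ℕ} (v : Fin n → Fin n → ℝ) (w w' : Fin n → ℝ) (hw : ∀ i, 0 ≤ w i)
    (hw' : ∀ i, 0 ≤ w' i) (u : Fin n → ℝ) :
    0 ≤ ∑ x, ∑ y, specW v w x y * specW v w' x y * (u x * u y) := by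
  have : ∑ x, ∑ y, specW v w x y * specW v w' x y * (u x * u y)
      = ∑ i, ∑ j, w i * w' j * (∑ x, v i x * v j x * u x) ^ 2 := by
    unfold specW
    simp_rw [sq, Finset.sum_mul_sum, Finset.mul_sum, Finset.sum_mul]
    calc _ = ∑ x, ∑ i, ∑ y, ∑ j, w i * v i x * v i y * (w' j * v j x * v j y) * (u x * u y) :=
          Finset.sum_congr rfl fun x _ => Finset.sum_comm
      _ = ∑ i, ∑ x, ∑ y, ∑ j, w i * v i x * v i y * (w' j * v j x * v j y) * (u x * u y) :=
          Finset.sum_comm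
      _ = ∑ i, ∑ x, ∑ j, ∑ y, w i * v i x * v i y * (w' j * v j x * v j y) * (u x * u y) :=
          Finset.sum_congr rfl fun i _ => Finset.sum_congr rfl fun x _ => Finset.sum_comm
      _ = ∑ i, ∑ j, ∑ x, ∑ y, w i * v i x * v i y * (w' j * v j x * v j y) * (u x * u y) :=
          Finset.sum_congr rfl fun i _ => Finset.sum_comm
      _ = _ := by
          refine Finset.sum_congr rfl fun i _ => Finset.sum_congr rfl fun j _ =>
            Finset.sum_congr rfl fun x _ => Finset.sum_congr rfl fun y _ => ?_
          ring
  rw [this]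
  exact Finset.sum_nonneg fun i _ => Finset.sum_nonneg fun j _ =>
    mul_nonneg (mul_nonneg (hw i) (hw' j)) (sq_nonneg _)

theorem row_sq {n : ℕ} (v : Fin n → Fin n → ℝ)
    (ho : ∀ i j : Fin n, (∑ k, v i k * v j k) = if i = j then (1 : ℝ) else 0)
    (w : Fin n → ℝ) (x : Fin n) :
    ∑ y, specW v w x y ^ 2 = ∑ i, w i ^ 2 * v i x ^ 2 := by
  unfold specW
  simp_rw [sq, Finset.sum_mul_sum]
  rw [Finset.sum_comm]
  refine Finset.sum_congr rfl fun i _ => ?_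
  rw [Finset.sum_comm]
  calc _ = ∑ j, w i * v i x * w j * v j x * ∑ y, v i y * v j y := by
        refine Finset.sum_congr rfl fun j _ => ?_
        rw [Finset.mul_sum]
        exact Finset.sum_congr rfl fun y _ => by ring
    _ = _ := by simp [ho]; ring

theorem frob_sq {n : ℕ} (v : Fin n → Fin n → ℝ)
    (ho : ∀ i j : Fin n, (∑ k, v i k * v j k) = if i = j then (1 : ℝ) else 0)
    (w : Fin n → ℝ) :
    ∑ x, ∑ y, specW v w x y ^ 2 = ∑ i, w i ^ 2 := by
  simp_rw [row_sq v ho w]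
  rw [Finset.sum_comm]
  refine Finset.sum_congr rfl fun i _ => ?_
  rw [← Finset.mul_sum]
  have := ho i i
  simp only [if_true, ← sq] at this
  rw [this, mul_one]

theorem adj_sq {n : ℕ} (G : SimpleGraph (Fin n)) (x y : Fin n) :
    adjMat G x y ^ 2 = adjMat G x y := by
  simp only [adjMat, Matrix.of_apply]
  split_ifs <;> simp

theorem adj_abs {n : ℕ} (G : SimpleGraph (Fin n)) (x y : Fin n) :
    |adjMat G x y| ≤ 1 := by
  simp only [adjMat, Matrix.of_apply]
  split_ifs <;> simp

theorem psd_entry {n : ℕ} (M : Matrix (Fin n) (Fin n) ℝ) (hM : M.PosSemidef)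
    (hd : ∀ i, M i i ≤ 1) (i j : Fin n) : |M i j| ≤ 1 := by
  have hs : M j i = M i j := by simpa using hM.1.apply i j
  have h1 := hM.dotProduct_mulVec_nonneg (Pi.single i 1 + Pi.single j 1)
  have h2 := hM.dotProduct_mulVec_nonneg (Pi.single i 1 - Pi.single j 1)
  simp [Matrix.mulVec_add, Matrix.mulVec_sub, add_dotProduct, sub_dotProduct] at h1 h2
  have := hd i
  have := hd j
  rw [abs_le]
  constructor <;> linarith

theorem spStar_bdd {n : ℕ} (G : SimpleGraph (Fin n)) :
    BddAbove {x : ℝ | ∃ M : Matrix (Fin n) (Fin n) ℝ, M.PosSemidef ∧ (∀ i, M i i ≤ 1) ∧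
    x = (1 / 2) * ∑ i, ∑ j, (-(adjMat G)) i j * M i j} := by
  refine ⟨(1 / 2) * ∑ i : Fin n, ∑ j : Fin n, 1, ?_⟩
  rintro x ⟨M, hM, hd, rfl⟩
  gcongr with i _ j _
  refine (le_abs_self _).trans ?_
  rw [abs_mul]
  have h1 : |(-(adjMat G)) i j| ≤ 1 := by simpa using adj_abs G i j
  exact mul_le_one₀ h1 (abs_nonneg _) (psd_entry M hM hd i j)

theorem specW_psd {n : ℕ} (v : Fin n → Fin n → ℝ) (w : Fin n → ℝ) (hw : ∀ i, 0 ≤ w i) :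
    (Matrix.of (specW v w)).PosSemidef := by
  have : Matrix.of (specW v w) =
      (Matrix.of fun i x => √(w i) * v i x).conjTranspose * (Matrix.of fun i x => √(w i) * v i x) := by
    ext x y
    simp only [Matrix.of_apply, specW, Matrix.mul_apply, Matrix.conjTranspose_apply, star_trivial]
    refine Finset.sum_congr rfl fun i _ => ?_
    have := Real.mul_self_sqrt (hw i)
    calc w i * v i x * v i y = (√(w i) * √(w i)) * v i x * v i y := by rw [this]
      _ = _ := by ring
  rw [this]
  exact Matrix.posSemidef_conjTranspose_mul_self _

theorem specW_inner {n : ℕ} (v : Fin n → Fin n → ℝ)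
    (ho : ∀ i j : Fin n, (∑ k, v i k * v j k) = if i = j then (1 : ℝ) else 0)
    (w w' : Fin n → ℝ) :
    ∑ x, ∑ y, specW v w x y * specW v w' x y = ∑ i, w i * w' i := by
  have h1 := frob_sq v ho (fun i => w i + w' i)
  have h2 := frob_sq v ho w
  have h3 := frob_sq v ho w'
  have h4 : ∀ x y, specW v (fun i => w i + w' i) x y = specW v w x y + specW v w' x y := by
    intro x y
    unfold specW
    rw [← Finset.sum_add_distrib]
    exact Finset.sum_congr rfl fun i _ => by ring
  simp_rw [h4, add_sq, Finset.sum_add_distrib, mul_assoc, ← Finset.mul_sum] at h1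
  linarith

/-- Consequence of the bound on `spStar`. -/
theorem sp_use {n : ℕ} (G : SimpleGraph (Fin n)) (μ : Fin n → ℝ) (v : Fin n → Fin n → ℝ)
    (he : ∀ i, (adjMat G).mulVec (v i) = μ i • v i)
    (ho : ∀ i j : Fin n, (∑ k, v i k * v j k) = if i = j then (1 : ℝ) else 0)
    (w : Fin n → ℝ) (hw : ∀ i, 0 ≤ w i) (hd : ∀ x, specW v w x x ≤ 1) :
    - ∑ i, μ i * w i ≤ 2 * spStar G := by
  have h := le_csSup (spStar_bdd G) ⟨Matrix.of (specW v w), specW_psd v w hw, hd, rfl⟩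
  change _ ≤ spStar G at h
  have h2 := specW_inner v ho μ w
  simp_rw [← spec_eq _ μ v ho he] at h2
  simp only [Matrix.neg_apply, Matrix.of_apply, neg_mul, Finset.sum_neg_distrib, h2] at h
  linarith

theorem diag_sq_le {n : ℕ} (G : SimpleGraph (Fin n)) (μ : Fin n → ℝ) (v : Fin n → Fin n → ℝ)
    (he : ∀ i, (adjMat G).mulVec (v i) = μ i • v i)
    (ho : ∀ i j : Fin n, (∑ k, v i k * v j k) = if i = j then (1 : ℝ) else 0) (x : Fin n) :
    ∑ i, μ i ^ 2 * v i x ^ 2 ≤ n := by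
  rw [← row_sq v ho]
  simp_rw [← spec_eq _ μ v ho he]
  calc ∑ y, adjMat G x y ^ 2 ≤ ∑ y : Fin n, (1 : ℝ) := by
        gcongr with y
        rw [adj_sq]
        exact (le_abs_self _).trans (adj_abs _ _ _)
    _ = n := by simp

theorem mu_sq_le {n : ℕ} (G : SimpleGraph (Fin n)) (μ : Fin n → ℝ) (v : Fin n → Fin n → ℝ)
    (he : ∀ i, (adjMat G).mulVec (v i) = μ i • v i)
    (ho : ∀ i j : Fin n, (∑ k, v i k * v j k) = if i = j then (1 : ℝ) else 0) :
    ∑ i, μ i ^ 2 ≤ (n : ℝ) ^ 2 := by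
  rw [← frob_sq v ho]
  simp_rw [row_sq v ho]
  calc _ ≤ ∑ x : Fin n, (n : ℝ) := by
        gcongr with x
        exact diag_sq_le G μ v he ho x
    _ = _ := by simp [sq]

/-- negative eigenvalues have small second moment -/
theorem neg_sq_le {n : ℕ} (hn : 0 < n) (G : SimpleGraph (Fin n)) (μ : Fin n → ℝ)
    (v : Fin n → Fin n → ℝ)
    (he : ∀ i, (adjMat G).mulVec (v i) = μ i • v i)
    (ho : ∀ i j : Fin n, (∑ k, v i k * v j k) = if i = j then (1 : ℝ) else 0) :
    ∑ i, (max (-μ i) 0) ^ 2 ≤ 2 * spStar G * √n := by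
  have hs : (0 : ℝ) < √n := Real.sqrt_pos.mpr (by exact_mod_cast hn)
  have hss : √(n : ℝ) ^ 2 = n := Real.sq_sqrt (by positivity)
  have h := sp_use G μ v he ho (fun i => max (-μ i) 0 / √n) (fun i => by positivity) (by
    intro x
    unfold specW
    have hc := orth_cols v ho x x
    simp only [if_true, ← sq] at hc
    have hd := diag_sq_le G μ v he ho x
    calc _ ≤ ∑ i, (1 / 2 * v i x ^ 2 + 1 / (2 * n) * (μ i ^ 2 * v i x ^ 2)) := by
          gcongr with i
          have : max (-μ i) 0 / √n ≤ 1 / 2 + 1 / (2 * n) * μ i ^ 2 := by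
            have h1 : max (-μ i) 0 ≤ |μ i| := max_le (neg_le_abs _) (abs_nonneg _)
            have h3 : 1 / 2 + 1 / (2 * (n : ℝ)) * μ i ^ 2 = (n + |μ i| ^ 2) / (2 * √n) / √n := by
              rw [sq_abs]
              field_simp
              rw [hss]
            rw [h3]
            gcongr
            refine h1.trans ?_
            rw [le_div_iff₀ (by positivity)]
            nlinarith [sq_nonneg (√n - |μ i|)]
          calc _ = max (-μ i) 0 / √n * v i x ^ 2 := by ring
            _ ≤ (1 / 2 + 1 / (2 * n) * μ i ^ 2) * v i x ^ 2 := by gcongr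
            _ = _ := by ring
      _ = 1 / 2 * 1 + 1 / (2 * n) * ∑ i, (μ i ^ 2 * v i x ^ 2) := by
          rw [Finset.sum_add_distrib, ← Finset.mul_sum, ← Finset.mul_sum, hc]
      _ ≤ 1 / 2 * 1 + 1 / (2 * n) * n := by gcongr
      _ = 1 := by
          have : (n : ℝ) ≠ 0 := by positivity
          field_simp; norm_num)
  rw [← Finset.sum_neg_distrib] at h
  have h2 : ∑ i, -(μ i * (max (-μ i) 0 / √n)) = (∑ i, (max (-μ i) 0) ^ 2) / √n := by
    rw [Finset.sum_div]
    refine Finset.sum_congr rfl fun i _ => ?_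
    rcases le_total 0 (-μ i) with h0 | h0
    · rw [max_eq_left h0]; ring
    · rw [max_eq_right h0]; simp
  rw [h2, div_le_iff₀ hs] at h
  exact h

theorem exists_spec {n : ℕ} (E : Matrix (Fin n) (Fin n) ℝ) (hE : E.IsHermitian) :
    ∃ (e : Fin n → ℝ) (u : Fin n → Fin n → ℝ),
      (∀ i, E.mulVec (u i) = e i • u i) ∧
      (∀ i j : Fin n, (∑ k, u i k * u j k) = if i = j then (1 : ℝ) else 0) ∧
      (Finset.univ.filter fun i => e i ≠ 0).card = E.rank := by
  refine ⟨hE.eigenvalues, fun i => hE.eigenvectorBasis i, fun i => ?_, fun i j => ?_, ?_⟩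
  · simpa using hE.mulVec_eigenvectorBasis i
  · have := orthonormal_iff_ite.mp hE.eigenvectorBasis.orthonormal j i
    simp only [PiLp.inner_apply] at this
    simpa [eq_comm] using this
  · rw [hE.rank_eq_card_non_zero_eigs, Fintype.card_subtype]

theorem specW_quad {n : ℕ} (v : Fin n → Fin n → ℝ) (w a : Fin n → ℝ) :
    ∑ x, ∑ y, specW v w x y * (a x * a y) = ∑ i, w i * (∑ x, v i x * a x) ^ 2 := by
  unfold specW
  simp_rw [sq, Finset.sum_mul_sum, Finset.mul_sum, Finset.sum_mul]
  calc _ = ∑ x, ∑ i, ∑ y, w i * v i x * v i y * (a x * a y) :=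
        Finset.sum_congr rfl fun x _ => Finset.sum_comm
    _ = ∑ i, ∑ x, ∑ y, w i * v i x * v i y * (a x * a y) := Finset.sum_comm
    _ = _ := by
        refine Finset.sum_congr rfl fun i _ => Finset.sum_congr rfl fun x _ =>
          Finset.sum_congr rfl fun y _ => ?_
        ring

theorem parseval {n : ℕ} (v : Fin n → Fin n → ℝ)
    (ho : ∀ i j : Fin n, (∑ k, v i k * v j k) = if i = j then (1 : ℝ) else 0) (a : Fin n → ℝ) :
    ∑ i, (∑ x, v i x * a x) ^ 2 = ∑ x, a x ^ 2 := by
  have h := specW_quad v (fun _ => 1) a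
  simp only [one_mul] at h
  rw [← h]
  have h2 : ∀ x y, specW v (fun _ => 1) x y = if x = y then (1 : ℝ) else 0 := by
    intro x y
    rw [← orth_cols v ho]
    unfold specW
    simp
  simp [h2, sq]

theorem upper_bound {n : ℕ} (v u : Fin n → Fin n → ℝ) (μ : Fin n → ℝ)
    (ho : ∀ i j : Fin n, (∑ k, v i k * v j k) = if i = j then (1 : ℝ) else 0)
    (hu : ∀ i j : Fin n, (∑ k, u i k * u j k) = if i = j then (1 : ℝ) else 0)
    (J : Finset (Fin n)) (τ : ℝ) (hτ : 0 ≤ τ) :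
    ∑ j ∈ J, (∑ x, ∑ y, specW v μ x y * (u j x * u j y) - τ) ≤ SSum μ τ := by
  have h1 : ∀ j, ∑ x, ∑ y, specW v μ x y * (u j x * u j y) - τ
      = ∑ i, (μ i - τ) * (∑ x, v i x * u j x) ^ 2 := by
    intro j
    have hp := parseval v ho (u j)
    have hj := hu j j
    simp only [if_true, ← sq] at hj
    rw [hj] at hp
    rw [specW_quad]
    simp_rw [sub_mul, Finset.sum_sub_distrib, ← Finset.mul_sum]
    rw [hp, mul_one]
  simp_rw [h1]
  rw [Finset.sum_comm]
  simp_rw [← Finset.mul_sum]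
  unfold SSum
  rw [Finset.sum_filter]
  refine Finset.sum_le_sum fun i _ => ?_
  have hq0 : 0 ≤ ∑ j ∈ J, (∑ x, v i x * u j x) ^ 2 := Finset.sum_nonneg fun _ _ => sq_nonneg _
  have hq1 : ∑ j ∈ J, (∑ x, v i x * u j x) ^ 2 ≤ 1 := by
    calc _ ≤ ∑ j, (∑ x, v i x * u j x) ^ 2 :=
          Finset.sum_le_sum_of_subset_of_nonneg (Finset.subset_univ _) fun _ _ _ => sq_nonneg _
      _ = ∑ j, (∑ x, u j x * v i x) ^ 2 := by simp_rw [mul_comm]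
      _ = ∑ x, v i x ^ 2 := parseval u hu (v i)
      _ = 1 := by simpa [sq] using ho i i
  split_ifs with h
  · nlinarith
  · nlinarith

theorem E_rank {n : ℕ} (v : Fin n → Fin n → ℝ) (w : Fin n → ℝ) (K : Finset (Fin n))
    (hK : ∀ i, i ∉ K → w i = 0) :
    (Matrix.of fun x y => specW v w x y * specW v w x y).rank ≤ K.card * K.card := by
  have h : (Matrix.of fun x y => specW v w x y * specW v w x y) =
      (Matrix.of fun (x : Fin n) (p : K × K) => w p.1 * w p.2 * v p.1 x * v p.2 x) *
      (Matrix.of fun (p : K × K) (y : Fin n) => v p.1 y * v p.2 y) := by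
    ext x y
    have h1 : specW v w x y = ∑ i : K, w i * v i x * v i y := by
      unfold specW
      rw [Finset.sum_coe_sort K (fun i => w i * v i x * v i y)]
      symm
      apply Finset.sum_subset (Finset.subset_univ _)
      intro i _ hi
      simp [hK i hi]
    simp only [Matrix.of_apply, Matrix.mul_apply, h1, Fintype.sum_prod_type, Finset.sum_mul_sum]
    refine Finset.sum_congr rfl fun i _ => Finset.sum_congr rfl fun j _ => ?_
    ring
  rw [h]
  refine (Matrix.rank_mul_le_left _ _).trans ((Matrix.rank_le_card_width _).trans ?_)
  simp

theorem lower_bound {n : ℕ} (G : SimpleGraph (Fin n)) (v : Fin n → Fin n → ℝ)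
    (μ p r m : Fin n → ℝ) (hA : ∀ x y, adjMat G x y = specW v μ x y)
    (hμ : ∀ i, μ i = p i + r i - m i) (hp : ∀ i, 0 ≤ p i) (hr : ∀ i, 0 ≤ r i)
    (hm : ∀ i, 0 ≤ m i) (u : Fin n → ℝ) :
    ∑ x, ∑ y, specW v p x y * specW v p x y * (u x * u y)
      - 2 * ∑ x, ∑ y, specW v (fun i => p i + r i) x y * specW v m x y * (u x * u y)
      ≤ ∑ x, ∑ y, specW v μ x y * (u x * u y) := by
  have h1 := schur_nonneg v p r hp hr u
  have h2 := schur_nonneg v r r hr hr u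
  have h3 := schur_nonneg v m m hm hm u
  have hs : ∀ x y, specW v (fun i => p i + r i) x y = specW v p x y + specW v r x y := by
    intro x y
    unfold specW
    rw [← Finset.sum_add_distrib]
    exact Finset.sum_congr rfl fun i _ => by ring
  have hs2 : ∀ x y, specW v μ x y = specW v p x y + specW v r x y - specW v m x y := by
    intro x y
    unfold specW
    rw [← Finset.sum_add_distrib, ← Finset.sum_sub_distrib]
    exact Finset.sum_congr rfl fun i _ => by rw [hμ]; ring
  have key : ∑ x, ∑ y, specW v μ x y * (u x * u y) =
      ∑ x, ∑ y, specW v p x y * specW v p x y * (u x * u y)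
      - 2 * ∑ x, ∑ y, specW v (fun i => p i + r i) x y * specW v m x y * (u x * u y)
      + 2 * ∑ x, ∑ y, specW v p x y * specW v r x y * (u x * u y)
      + ∑ x, ∑ y, specW v r x y * specW v r x y * (u x * u y)
      + ∑ x, ∑ y, specW v m x y * specW v m x y * (u x * u y) := by
    simp_rw [Finset.mul_sum, ← Finset.sum_sub_distrib, ← Finset.sum_add_distrib]
    refine Finset.sum_congr rfl fun x _ => Finset.sum_congr rfl fun y _ => ?_
    have : specW v μ x y = specW v μ x y ^ 2 := by rw [← hA, adj_sq]
    rw [this, hs2, hs]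
    ring
  linarith

theorem err_bound {n : ℕ} (B N Q : Fin n → Fin n → ℝ) (q b c : ℝ) (hq : 0 ≤ q)
    (hb0 : 0 ≤ b)
    (hQ : ∀ x y, Q x y ^ 2 ≤ q ^ 2) (hB : ∑ x, ∑ y, B x y ^ 2 ≤ b ^ 2)
    (hN : ∑ x, ∑ y, N x y ^ 2 ≤ c) :
    ∑ x, ∑ y, B x y * N x y * Q x y ≤ q * b * √c := by
  have hc : 0 ≤ c := le_trans (Finset.sum_nonneg fun _ _ => Finset.sum_nonneg fun _ _ => sq_nonneg _) hN
  have h := Finset.sum_mul_sq_le_sq_mul_sq (Finset.univ : Finset (Fin n × Fin n))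
    (fun p => B p.1 p.2 * Q p.1 p.2) (fun p => N p.1 p.2)
  simp only [Fintype.sum_prod_type] at h
  have h1 : ∑ x, ∑ y, (B x y * Q x y) ^ 2 ≤ q ^ 2 * b ^ 2 := by
    calc _ ≤ ∑ x, ∑ y, q ^ 2 * B x y ^ 2 := by
          refine Finset.sum_le_sum fun x _ => Finset.sum_le_sum fun y _ => ?_
          rw [mul_pow, mul_comm]
          exact mul_le_mul_of_nonneg_right (hQ x y) (sq_nonneg _)
      _ = q ^ 2 * ∑ x, ∑ y, B x y ^ 2 := by simp_rw [Finset.mul_sum]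
      _ ≤ _ := by gcongr
  have h2 : (∑ x, ∑ y, B x y * N x y * Q x y) ^ 2 ≤ (q * b * √c) ^ 2 := by
    calc _ = (∑ x, ∑ y, B x y * Q x y * N x y) ^ 2 := by
          congr 1
          exact Finset.sum_congr rfl fun x _ => Finset.sum_congr rfl fun y _ => by ring
      _ ≤ _ := h
      _ ≤ (q ^ 2 * b ^ 2) * c := by
          refine mul_le_mul h1 hN (Finset.sum_nonneg fun _ _ => Finset.sum_nonneg fun _ _ => sq_nonneg _) (by positivity)
      _ = _ := by rw [mul_pow, mul_pow, Real.sq_sqrt hc]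
  exact abs_le_of_sq_le_sq' h2 (by positivity) |>.2

theorem main_bound {n : ℕ} (hn : 0 < n) (G : SimpleGraph (Fin n)) (μ : Fin n → ℝ)
    (v : Fin n → Fin n → ℝ)
    (he : ∀ i, (adjMat G).mulVec (v i) = μ i • v i)
    (ho : ∀ i j : Fin n, (∑ k, v i k * v j k) = if i = j then (1 : ℝ) else 0)
    (T : ℝ) (hT : 0 < T) :
    7 / 8 * (SSum μ T) ^ 2 / n - 16 * n ^ 4 / T ^ 4 * √(2 * spStar G * √n)
      ≤ SSum μ (T ^ 2 / (8 * n)) := by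
  have hn' : (0 : ℝ) < n := by exact_mod_cast hn
  set τ : ℝ := T ^ 2 / (8 * n) with hτ
  have hτ0 : 0 < τ := by positivity
  set K := Finset.univ.filter (fun i => T ≤ μ i) with hK
  let p : Fin n → ℝ := fun i => if T ≤ μ i then μ i else 0
  let m : Fin n → ℝ := fun i => max (-μ i) 0
  let r : Fin n → ℝ := fun i => max (μ i) 0 - p i
  have hp : ∀ i, 0 ≤ p i := fun i => by
    simp only [p]; split_ifs <;> linarith
  have hm : ∀ i, 0 ≤ m i := fun i => le_max_right _ _
  have hr : ∀ i, 0 ≤ r i := fun i => by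
    simp only [r, p]
    split_ifs
    · have := le_max_left (μ i) 0
      linarith
    · have := le_max_right (μ i) 0
      linarith
  have hμ : ∀ i, μ i = p i + r i - m i := fun i => by
    simp only [r, m]
    rcases le_total 0 (μ i) with h | h
    · rw [max_eq_left h, max_eq_right (by linarith)]; ring
    · rw [max_eq_right h, max_eq_left (by linarith)]; ring
  have hA := spec_eq _ μ v ho he
  obtain ⟨e, u, hue, hu, hcard⟩ := exists_spec
    (Matrix.of fun x y => specW v p x y * specW v p x y) (by
      ext x y
      simp [specW_symm v p y x])
  have hE := spec_eq _ e u hu hue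
  simp only [Matrix.of_apply] at hE
  have hrank := E_rank v p K (fun i hi => by
    simp only [hK, Finset.mem_filter, Finset.mem_univ, true_and] at hi
    simp [p, hi])
  rw [← hcard] at hrank
  -- quadratic form of E on its eigenvectors
  have hEq : ∀ j, ∑ x, ∑ y, specW v p x y * specW v p x y * (u j x * u j y) = e j := by
    intro j
    simp_rw [hE]
    rw [specW_quad]
    simp [hu]
  have he0 : ∀ j, 0 ≤ e j := fun j => by
    rw [← hEq]; exact schur_nonneg v p p hp hp (u j)
  set J := Finset.univ.filter (fun j => τ ≤ e j) with hJ
  have hup := upper_bound v u μ ho hu J τ hτ0.le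
  have hlow : ∀ j, e j - 2 * ∑ x, ∑ y, specW v (fun i => p i + r i) x y * specW v m x y *
      (u j x * u j y) ≤ ∑ x, ∑ y, specW v μ x y * (u j x * u j y) := fun j => by
    have := lower_bound G v μ p r m hA hμ hp hr hm (u j)
    rwa [hEq] at this
  -- the error term
  let Q : Fin n → Fin n → ℝ := fun x y => ∑ j ∈ J, u j x * u j y
  have herr_eq : ∑ j ∈ J, ∑ x, ∑ y, specW v (fun i => p i + r i) x y * specW v m x y *
      (u j x * u j y) = ∑ x, ∑ y, specW v (fun i => p i + r i) x y * specW v m x y * Q x y := by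
    simp only [Q]
    rw [Finset.sum_comm]
    refine Finset.sum_congr rfl fun x _ => ?_
    rw [Finset.sum_comm]
    refine Finset.sum_congr rfl fun y _ => ?_
    rw [Finset.mul_sum]
  have hPd : ∀ x, specW v p x x ≤ n / T := fun x => by
    rw [le_div_iff₀ hT]
    refine le_trans ?_ (diag_sq_le G μ v he ho x)
    unfold specW
    rw [Finset.sum_mul]
    refine Finset.sum_le_sum fun i _ => ?_
    have : p i * T ≤ μ i ^ 2 := by
      simp only [p]
      split_ifs with h
      · nlinarith
      · nlinarith [sq_nonneg (μ i)]
    nlinarith [sq_nonneg (v i x)]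
  have hPd0 : ∀ x, 0 ≤ specW v p x x := fun x => by
    unfold specW
    refine Finset.sum_nonneg fun i _ => ?_
    rw [mul_assoc]
    exact mul_nonneg (hp i) (mul_self_nonneg _)
  have hQd : ∀ x, ∑ j ∈ J, u j x ^ 2 ≤ 8 * n ^ 3 / T ^ 4 := fun x => by
    have h1 : τ * ∑ j ∈ J, u j x ^ 2 ≤ (n / T) ^ 2 := by
      calc _ = ∑ j ∈ J, τ * u j x ^ 2 := Finset.mul_sum _ _ _
        _ ≤ ∑ j ∈ J, e j * u j x * u j x := by
            refine Finset.sum_le_sum fun j hj => ?_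
            have : τ ≤ e j := by simpa [hJ] using hj
            nlinarith [sq_nonneg (u j x)]
        _ ≤ ∑ j, e j * u j x * u j x := by
            refine Finset.sum_le_sum_of_subset_of_nonneg (Finset.subset_univ _) fun j _ _ => ?_
            rw [mul_assoc]
            exact mul_nonneg (he0 j) (mul_self_nonneg _)
        _ = specW v p x x ^ 2 := by rw [sq, hE]; rfl
        _ ≤ _ := pow_le_pow_left₀ (hPd0 x) (hPd x) 2
    have h2 : 8 * (n : ℝ) ^ 3 / T ^ 4 = (n / T) ^ 2 / τ := by
      rw [hτ]; field_simp
    rw [h2, le_div_iff₀ hτ0, mul_comm]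
    exact h1
  have hQ : ∀ x y, Q x y ^ 2 ≤ (8 * n ^ 3 / T ^ 4) ^ 2 := fun x y => by
    refine (Finset.sum_mul_sq_le_sq_mul_sq J (fun j => u j x) (fun j => u j y)).trans ?_
    rw [sq (8 * (n : ℝ) ^ 3 / T ^ 4)]
    exact mul_le_mul (hQd x) (hQd y) (Finset.sum_nonneg fun _ _ => sq_nonneg _) (by positivity)
  have hB : ∑ x, ∑ y, specW v (fun i => p i + r i) x y ^ 2 ≤ (n : ℝ) ^ 2 := by
    rw [frob_sq v ho]
    refine le_trans (Finset.sum_le_sum fun i _ => ?_) (mu_sq_le G μ v he ho)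
    simp only [r]
    have : p i + (max (μ i) 0 - p i) = max (μ i) 0 := by ring
    rw [this, ← sq_abs (μ i)]
    exact pow_le_pow_left₀ (le_max_right _ _) (max_le (le_abs_self _) (abs_nonneg _)) 2
  have hN : ∑ x, ∑ y, specW v m x y ^ 2 ≤ 2 * spStar G * √n := by
    rw [frob_sq v ho]
    exact neg_sq_le hn G μ v he ho
  have herr := err_bound (specW v (fun i => p i + r i)) (specW v m) Q (8 * n ^ 3 / T ^ 4) n _
    (by positivity) hn'.le hQ hB hN
  rw [← herr_eq] at herr
  -- the main term
  have htr : ∑ j, e j = ∑ x, specW v p x x ^ 2 := by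
    simp_rw [sq, hE]
    unfold specW
    rw [Finset.sum_comm]
    refine Finset.sum_congr rfl fun j _ => ?_
    have := hu j j
    simp only [if_true] at this
    simp_rw [mul_assoc]
    rw [← Finset.mul_sum, this, mul_one]
  have hS : ∑ x, specW v p x x = SSum μ T := by
    unfold specW SSum
    rw [Finset.sum_comm, Finset.sum_filter]
    refine Finset.sum_congr rfl fun i _ => ?_
    have := ho i i
    simp only [if_true] at this
    simp_rw [mul_assoc]
    rw [← Finset.mul_sum, this, mul_one]
  have hcs : (SSum μ T) ^ 2 / n ≤ ∑ j, e j := by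
    rw [htr, div_le_iff₀ hn', ← hS]
    have := sq_sum_le_card_mul_sum_sq (s := (Finset.univ : Finset (Fin n)))
      (f := fun x => specW v p x x)
    simp only [Finset.card_univ, Fintype.card_fin] at this
    linarith
  have hSK : K.card * T ≤ SSum μ T := by
    unfold SSum
    rw [← nsmul_eq_mul]
    refine Finset.card_nsmul_le_sum _ _ _ fun i hi => ?_
    simpa [hK] using hi
  have hmain : ∑ j, e j - τ * (K.card * K.card) ≤ ∑ j ∈ J, (e j - τ) := by
    have h1 : ∑ j, e j ≤ ∑ j, ((if e j ≠ 0 then τ else 0) + if τ ≤ e j then e j - τ else 0) := by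
      refine Finset.sum_le_sum fun j _ => ?_
      have := he0 j
      split_ifs with ha hb hb
      · linarith
      · linarith
      · simp only [ne_eq, not_not] at ha
        linarith
      · simp only [ne_eq, not_not] at ha
        linarith
    rw [Finset.sum_add_distrib, ← Finset.sum_filter, ← Finset.sum_filter, Finset.sum_const,
      nsmul_eq_mul] at h1
    have h2 : ((Finset.univ.filter fun i => e i ≠ 0).card : ℝ) ≤ K.card * K.card := by
      exact_mod_cast hrank
    have h3 := mul_le_mul_of_nonneg_right h2 hτ0.le
    linarith
  have hτK : τ * (K.card * K.card) ≤ 1 / 8 * (SSum μ T ^ 2 / n) := by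
    have hk0 : (0 : ℝ) ≤ (K.card : ℝ) := Nat.cast_nonneg _
    generalize (K.card : ℝ) = k at hSK hk0 ⊢
    have : (k * T) ^ 2 ≤ SSum μ T ^ 2 := pow_le_pow_left₀ (mul_nonneg hk0 hT.le) hSK 2
    calc τ * (k * k) = 1 / 8 * ((k * T) ^ 2 / n) := by
          rw [hτ]; field_simp
      _ ≤ _ := by gcongr
  have hfin : ∑ j ∈ J, (e j - τ) - 2 * ∑ j ∈ J, ∑ x, ∑ y,
      specW v (fun i => p i + r i) x y * specW v m x y * (u j x * u j y) ≤ SSum μ τ := by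
    refine le_trans ?_ hup
    rw [Finset.mul_sum, ← Finset.sum_sub_distrib]
    refine Finset.sum_le_sum fun j _ => ?_
    have := hlow j
    linarith
  have hcoef : 16 * (n : ℝ) ^ 4 / T ^ 4 * √(2 * spStar G * √n)
      = 2 * (8 * n ^ 3 / T ^ 4 * n * √(2 * spStar G * √n)) := by ring
  rw [hcoef]
  have h78 : 7 / 8 * SSum μ T ^ 2 / n = SSum μ T ^ 2 / n - 1 / 8 * (SSum μ T ^ 2 / n) := by ring
  rw [h78]
  linarith

-- The recursion for graphs with small `sp*`: with `c = 1/99`, if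
-- `sp*(G) ≤ (1/2) n ^ (1 + c)` then `S_T ^ 2 ≤ 250 n S_{T^2/(8n)}` for `T ≥ n ^ (1 - 2c)`.
theorem stmt12 :
    ∃ n₀ : ℕ, ∀ (n : ℕ), n₀ ≤ n →
      ∀ (G : SimpleGraph (Fin n)) (μ : Fin n → ℝ) (v : Fin n → Fin n → ℝ),
        Antitone μ →
        (∀ i, (adjMat G).mulVec (v i) = μ i • v i) →
        (∀ i j : Fin n, (∑ k, v i k * v j k) = if i = j then (1 : ℝ) else 0) →
        spStar G ≤ (1 / 2) * (n : ℝ) ^ ((1 : ℝ) + 1 / 99) →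
        ∀ T : ℝ, (n : ℝ) ^ ((1 : ℝ) - 2 / 99) ≤ T →
          (SSum μ T) ^ 2 ≤ 250 * (n : ℝ) * SSum μ (T ^ 2 / (8 * (n : ℝ))) := by
  refine ⟨32 ^ 9, fun n hn G μ v _ he ho hsp T hT => ?_⟩
  have hn0 : 0 < n := lt_of_lt_of_le (by positivity) hn
  have hnR : (0 : ℝ) < n := by exact_mod_cast hn0
  have hn1 : (1 : ℝ) ≤ n := by exact_mod_cast hn0
  have hT0 : 0 < T := lt_of_lt_of_le (Real.rpow_pos_of_pos hnR _) hT
  have hmain := main_bound hn0 G μ v he ho T hT0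
  by_cases hne : ∃ i, T ≤ μ i
  · obtain ⟨i, hi⟩ := hne
    have hST : T ≤ SSum μ T := by
      refine hi.trans ?_
      unfold SSum
      refine Finset.single_le_sum (f := μ) (fun j hj => ?_) (by simpa using hi)
      have : T ≤ μ j := by simpa using hj
      linarith
    have h32 : (32 : ℝ) ≤ (n : ℝ) ^ ((1 : ℝ) / 9) := by
      have : ((32 : ℝ) ^ (9 : ℕ)) ≤ n := by exact_mod_cast hn
      calc (32 : ℝ) = ((32 : ℝ) ^ (9 : ℕ)) ^ ((1 : ℝ) / 9) := by
            rw [← Real.rpow_natCast, ← Real.rpow_mul (by norm_num)]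
            norm_num
        _ ≤ _ := Real.rpow_le_rpow (by positivity) this (by norm_num)
    have hroot : √(2 * spStar G * √n) ≤ (n : ℝ) ^ ((3 : ℝ) / 4 + 1 / 198) := by
      rw [Real.sqrt_le_left (by positivity)]
      calc 2 * spStar G * √n ≤ (n : ℝ) ^ ((1 : ℝ) + 1 / 99) * √n := by
            gcongr
            linarith
        _ = ((n : ℝ) ^ ((3 : ℝ) / 4 + 1 / 198)) ^ 2 := by
            rw [Real.sqrt_eq_rpow, ← Real.rpow_add hnR, ← Real.rpow_natCast,
              ← Real.rpow_mul hnR.le]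
            norm_num
    have hT6 : (n : ℝ) ^ ((6 : ℝ) - 12 / 99) ≤ T ^ 6 := by
      calc (n : ℝ) ^ ((6 : ℝ) - 12 / 99) = ((n : ℝ) ^ ((1 : ℝ) - 2 / 99)) ^ 6 := by
            rw [← Real.rpow_natCast, ← Real.rpow_mul hnR.le]
            norm_num
        _ ≤ _ := pow_le_pow_left₀ (by positivity) hT 6
    have hbig : 32 * ((n : ℝ) ^ 5 * (n : ℝ) ^ ((3 : ℝ) / 4 + 1 / 198)) ≤ T ^ 6 := by
      refine le_trans ?_ hT6
      calc 32 * ((n : ℝ) ^ 5 * (n : ℝ) ^ ((3 : ℝ) / 4 + 1 / 198))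
          ≤ (n : ℝ) ^ ((1 : ℝ) / 9) * ((n : ℝ) ^ 5 * (n : ℝ) ^ ((3 : ℝ) / 4 + 1 / 198)) := by
            gcongr
        _ = (n : ℝ) ^ ((1 : ℝ) / 9 + (5 + (3 / 4 + 1 / 198))) := by
            rw [Real.rpow_add hnR (1 / 9), Real.rpow_add hnR 5]
            congr 2
            exact_mod_cast (Real.rpow_natCast (n : ℝ) 5).symm
        _ ≤ _ := Real.rpow_le_rpow_of_exponent_le hn1 (by norm_num)
    have herr : 16 * (n : ℝ) ^ 4 / T ^ 4 * √(2 * spStar G * √n) ≤ 1 / 2 * (SSum μ T ^ 2 / n) := by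
      calc _ ≤ 16 * (n : ℝ) ^ 4 / T ^ 4 * (n : ℝ) ^ ((3 : ℝ) / 4 + 1 / 198) := by gcongr
        _ = 1 / 2 * (32 * ((n : ℝ) ^ 5 * (n : ℝ) ^ ((3 : ℝ) / 4 + 1 / 198)) / T ^ 4 / n) := by
            field_simp
            norm_num
        _ ≤ 1 / 2 * (T ^ 6 / T ^ 4 / n) := by gcongr
        _ = 1 / 2 * (T ^ 2 / n) := by
            field_simp
        _ ≤ _ := by gcongr
    have h3 : 3 / 8 * (SSum μ T ^ 2 / n) ≤ SSum μ (T ^ 2 / (8 * n)) := by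
      have : 7 / 8 * SSum μ T ^ 2 / n = 7 / 8 * (SSum μ T ^ 2 / n) := by ring
      linarith
    have h4 : SSum μ T ^ 2 = n * (SSum μ T ^ 2 / n) := by field_simp
    have h5 : 0 ≤ SSum μ T ^ 2 / n := by positivity
    rw [h4, mul_comm 250, mul_assoc]
    gcongr
    linarith
  · push Not at hne
    have h0 : SSum μ T = 0 := by
      unfold SSum
      rw [Finset.filter_false_of_mem (fun i _ => not_le.mpr (hne i))]
      simp
    rw [h0]
    have : 0 ≤ SSum μ (T ^ 2 / (8 * n)) := by
      unfold SSum
      refine Finset.sum_nonneg fun i hi => ?_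
      have h1 : T ^ 2 / (8 * n) ≤ μ i := by simpa using hi
      exact le_trans (by positivity) h1
    simp only [ne_eq, OfNat.ofNat_ne_zero, not_false_eq_true, zero_pow]
    positivity
end
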